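/- arXiv:2006.15200 — 4 statements merged into one kernel-verified Lean document; each statement's English description precedes it below -/
import Mathlib

section
/- Fix δ ∈ (0,1). For ε > 0, let d(ε) denote the lower density, relative to the set of all primes, of the set of primes p such that p−1 has no divisor in the interval [p^{δ−ε}, p^{δ+ε}]. Then d(ε) → 1 as ε → 0⁺. -/
open Filter

/-!
Let `w = N ^ ε`. Outside a set of primes `p ≤ N` of small relative density, the part of `p - 1`
composed of primes at most `w` is smaller than `w ^ A`, no square of an integer exceeding `w`
divides `p - 1`, and `p - 1` has fewer than `K = (3 / 2) * log (1 / ε)` prime factors exceeding `w`.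
If then `p - 1 = m * m'` with `m` close to `p ^ δ`, one of the two factors, up to a factor
`w ^ O(A)`, is a product of at most `K / 2` of these prime factors, and its logarithm lies in a
window of length `O(A ε log N)` about `δ log N` or `(1 - δ) log N`. By the Brun–Titchmarsh
inequality the number of primes whose `p - 1` has such a divisor is
`O(ε * ε ^ (-3 / 4) * (4 / 3) ^ (K / 2)) * N / log N`, and the power of `ε` is positive.
-/

namespace ShiftedPrime

open Finset Topology
open scoped ArithmeticFunction.Moebius

/-! ### Selberg's sieve -/

section Selberg

theorem sum_moebius_divisors_filter_dvd {l m : ℕ} (hm : Squarefree m) :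
    ∑ d ∈ m.divisors with l ∣ d, μ d = if l = m then μ l else 0 := by
  by_cases hlm : l ∣ m
  · obtain ⟨t, rfl⟩ := hlm
    have hl : l ≠ 0 := left_ne_zero_of_mul hm.ne_zero
    have himage : {d ∈ (l * t).divisors | l ∣ d} = t.divisors.image (l * ·) := by
      ext d
      simp only [mem_filter, mem_image, Nat.mem_divisors]
      constructor
      · rintro ⟨⟨hd, hne⟩, e, rfl⟩
        exact ⟨e, ⟨Nat.dvd_of_mul_dvd_mul_left hl.bot_lt hd, right_ne_zero_of_mul hne⟩, rfl⟩
      · rintro ⟨e, ⟨he, -⟩, rfl⟩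
        exact ⟨⟨Nat.mul_dvd_mul_left l he, hm.ne_zero⟩, dvd_mul_right l e⟩
    have hmul : ∀ e ∈ t.divisors, μ (l * e) = μ l * μ e := fun e he ↦
      ArithmeticFunction.isMultiplicative_moebius.map_mul_of_coprime
        ((Nat.coprime_of_squarefree_mul hm).coprime_dvd_right (Nat.dvd_of_mem_divisors he))
    rw [himage, sum_image fun a _ b _ h ↦ Nat.eq_of_mul_eq_mul_left hl.bot_lt h,
      sum_congr rfl hmul, ← mul_sum, ← ArithmeticFunction.coe_mul_zeta_apply,
      ArithmeticFunction.moebius_mul_coe_zeta, ArithmeticFunction.one_apply]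
    simp [hl]
  · rw [if_neg fun h ↦ hlm h.dvd, sum_eq_zero]
    intro d hd
    obtain ⟨hd, hld⟩ := mem_filter.1 hd
    exact absurd (hld.trans (Nat.dvd_of_mem_divisors hd)) hlm

/-- Selberg's weights for the sieve `s`, supported on a divisor-closed set `D` of divisors of
`s.prodPrimes`. They minimise the quadratic form `s.mainSum (lambdaSquared w)` under `w 1 = 1`. -/
noncomputable def selbergWeight (s : BoundingSieve) (D : Finset ℕ) (d : ℕ) : ℝ :=
  μ d * (∑ l ∈ D with d ∣ l, s.selbergTerms l) / (s.nu d * ∑ l ∈ D, s.selbergTerms l)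

variable {s : BoundingSieve} {D : Finset ℕ}

theorem sum_selbergTerms_pos (hDP : D ⊆ s.prodPrimes.divisors) (h1 : 1 ∈ D) :
    0 < ∑ l ∈ D, s.selbergTerms l :=
  sum_pos (fun _ hl ↦ BoundingSieve.selbergTerms_pos (Nat.dvd_of_mem_divisors (hDP hl))) ⟨1, h1⟩

theorem selbergWeight_one (hDP : D ⊆ s.prodPrimes.divisors) (h1 : 1 ∈ D) :
    selbergWeight s D 1 = 1 := by
  have hpos := sum_selbergTerms_pos hDP h1
  simp [selbergWeight, s.nu_mult.map_one, hpos.ne']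

theorem selbergWeight_eq_zero (hD : ∀ l ∈ D, ∀ d, d ∣ l → d ∈ D) {d : ℕ} (hd : d ∉ D) :
    selbergWeight s D d = 0 := by
  rw [selbergWeight, filter_false_of_mem fun l hl hdl ↦ hd (hD l hl d hdl)]
  simp

theorem abs_selbergWeight_le (hDP : D ⊆ s.prodPrimes.divisors) {d : ℕ} (hd : d ∈ D) :
    |selbergWeight s D d| ≤ (s.nu d)⁻¹ := by
  have hnu := BoundingSieve.nu_pos_of_dvd_prodPrimes (Nat.dvd_of_mem_divisors (hDP hd))
  have hg : ∀ l ∈ D, 0 < s.selbergTerms l := fun l hl ↦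
    BoundingSieve.selbergTerms_pos (Nat.dvd_of_mem_divisors (hDP hl))
  have hpos : 0 < ∑ l ∈ D, s.selbergTerms l := sum_pos hg ⟨d, hd⟩
  have hfilter : ∑ l ∈ D with d ∣ l, s.selbergTerms l ≤ ∑ l ∈ D, s.selbergTerms l :=
    sum_le_sum_of_subset_of_nonneg (filter_subset _ _) fun l hl _ ↦ (hg l hl).le
  have hfilter_nonneg : 0 ≤ ∑ l ∈ D with d ∣ l, s.selbergTerms l :=
    sum_nonneg fun l hl ↦ (hg l (mem_of_mem_filter l hl)).le
  have hmu : |(μ d : ℝ)| ≤ 1 := by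
    exact_mod_cast ArithmeticFunction.abs_moebius_le_one (n := d)
  rw [selbergWeight, abs_div, abs_mul, abs_of_nonneg hfilter_nonneg,
    abs_of_pos (mul_pos hnu hpos), div_le_iff₀ (mul_pos hnu hpos), inv_mul_cancel_left₀ hnu.ne']
  exact (mul_le_of_le_one_left hfilter_nonneg hmu).trans hfilter

theorem sum_nu_mul_selbergWeight (hDP : D ⊆ s.prodPrimes.divisors) (l : ℕ) :
    ∑ d ∈ s.prodPrimes.divisors with l ∣ d, s.nu d * selbergWeight s D d =
      if l ∈ D then μ l * s.selbergTerms l / ∑ m ∈ D, s.selbergTerms m else 0 := by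
  generalize hS : ∑ m ∈ D, s.selbergTerms m = S
  have hweight : ∀ d ∈ s.prodPrimes.divisors, s.nu d * selbergWeight s D d =
      ∑ m ∈ D, if d ∣ m then s.selbergTerms m / S * μ d else 0 := by
    intro d hd
    have hnu := BoundingSieve.nu_ne_zero (Nat.dvd_of_mem_divisors hd)
    rw [selbergWeight, hS, ← sum_filter, ← sum_mul, ← sum_div]
    field_simp
  have hinner : ∀ m ∈ D, (∑ d ∈ s.prodPrimes.divisors with l ∣ d,
      if d ∣ m then s.selbergTerms m / S * (μ d : ℝ) else 0) =
        if l = m then μ l * s.selbergTerms m / S else 0 := by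
    intro m hm
    have hmP := Nat.dvd_of_mem_divisors (hDP hm)
    have hsq := s.prodPrimes_squarefree.squarefree_of_dvd hmP
    rw [← sum_filter, filter_comm,
      Nat.divisors_filter_dvd_of_dvd BoundingSieve.prodPrimes_ne_zero hmP, ← mul_sum,
      ← Int.cast_sum, sum_moebius_divisors_filter_dvd hsq]
    split_ifs <;> push_cast <;> ring
  rw [sum_congr rfl fun d hd ↦ hweight d (mem_of_mem_filter d hd), sum_comm,
    sum_congr rfl hinner, sum_ite_eq]

theorem mainSum_selbergWeight (hDP : D ⊆ s.prodPrimes.divisors) :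
    s.mainSum (BoundingSieve.lambdaSquared (selbergWeight s D)) =
      (∑ l ∈ D, s.selbergTerms l)⁻¹ := by
  set S := ∑ l ∈ D, s.selbergTerms l
  rw [BoundingSieve.mainSum_lambdaSquared_eq_sum_mul_sum_sq]
  simp_rw [← sum_filter, sum_nu_mul_selbergWeight hDP]
  rw [← sum_subset hDP fun l _ hl ↦ by simp [hl]]
  have hterm : ∀ l ∈ D, (s.selbergTerms l)⁻¹ *
      (if l ∈ D then μ l * s.selbergTerms l / S else 0) ^ 2 = s.selbergTerms l / S ^ 2 := by
    intro l hl
    have hlP := Nat.dvd_of_mem_divisors (hDP hl)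
    have hmu : (μ l : ℝ) ^ 2 = 1 := by
      exact_mod_cast ArithmeticFunction.moebius_sq_eq_one_of_squarefree
        (s.prodPrimes_squarefree.squarefree_of_dvd hlP)
    have hg := (BoundingSieve.selbergTerms_pos hlP).ne'
    rw [if_pos hl, div_pow, mul_pow, hmu]
    field_simp
  rw [sum_congr rfl hterm, ← sum_div]
  change S / S ^ 2 = S⁻¹
  rcases eq_or_ne S 0 with h | h
  · simp [h]
  · field_simp

theorem abs_lambdaSquared_le {w : ℕ → ℝ} (hw : ∀ d ∉ D, w d = 0) (d : ℕ) :
    |BoundingSieve.lambdaSquared w d| ≤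
      ∑ a ∈ D, ∑ b ∈ D, if d = a.lcm b then |w a| * |w b| else 0 := by
  have hsum : ∀ f : ℕ → ℝ, (∀ a, 0 ≤ f a) → (∀ a ∉ D, f a = 0) →
      ∑ a ∈ d.divisors, f a ≤ ∑ a ∈ D, f a := by
    intro f hf h0
    rw [← sum_filter_of_ne (p := (· ∈ D)) fun a _ ha ↦ not_not.1 fun h ↦ ha (h0 a h)]
    exact sum_le_sum_of_subset_of_nonneg (fun a ha ↦ (mem_filter.1 ha).2) fun a _ _ ↦ hf a
  have hnonneg : ∀ a b : ℕ, 0 ≤ if d = a.lcm b then |w a| * |w b| else 0 := fun a b ↦ by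
    positivity
  calc |BoundingSieve.lambdaSquared w d|
      ≤ ∑ a ∈ d.divisors, ∑ b ∈ d.divisors, |if d = a.lcm b then w a * w b else 0| :=
        (abs_sum_le_sum_abs _ _).trans (sum_le_sum fun a _ ↦ abs_sum_le_sum_abs _ _)
    _ = ∑ a ∈ d.divisors, ∑ b ∈ d.divisors, if d = a.lcm b then |w a| * |w b| else 0 := by
        simp_rw [apply_ite abs, abs_mul, abs_zero]
    _ ≤ ∑ a ∈ d.divisors, ∑ b ∈ D, if d = a.lcm b then |w a| * |w b| else 0 :=
        sum_le_sum fun a _ ↦ hsum _ (hnonneg a) fun b hb ↦ by simp [hw b hb]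
    _ ≤ _ := hsum _ (fun a ↦ sum_nonneg fun b _ ↦ hnonneg a b) fun a ha ↦ by simp [hw a ha]

theorem errSum_selbergWeight_le (hDP : D ⊆ s.prodPrimes.divisors)
    (hD : ∀ l ∈ D, ∀ d, d ∣ l → d ∈ D) {R : ℝ}
    (hR : ∀ d, d ∣ s.prodPrimes → |s.rem d| ≤ R) :
    s.errSum (BoundingSieve.lambdaSquared (selbergWeight s D)) ≤ R * (∑ d ∈ D, (s.nu d)⁻¹) ^ 2 := by
  set w := selbergWeight s D
  have hR0 : 0 ≤ R := (abs_nonneg _).trans (hR 1 (one_dvd _))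
  have hdvd : ∀ a ∈ D, a ∣ s.prodPrimes := fun a ha ↦ Nat.dvd_of_mem_divisors (hDP ha)
  calc s.errSum (BoundingSieve.lambdaSquared w)
      ≤ ∑ d ∈ s.prodPrimes.divisors,
          (∑ a ∈ D, ∑ b ∈ D, if d = a.lcm b then |w a| * |w b| else 0) * R := by
        refine sum_le_sum fun d hd ↦ mul_le_mul ?_ (hR d (Nat.dvd_of_mem_divisors hd))
          (abs_nonneg _) ?_
        · exact abs_lambdaSquared_le (fun a ha ↦ selbergWeight_eq_zero hD ha) d
        · exact sum_nonneg fun a _ ↦ sum_nonneg fun b _ ↦ by positivity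
    _ = R * ∑ a ∈ D, ∑ b ∈ D, |w a| * |w b| := by
        rw [← sum_mul, mul_comm, sum_comm]
        congr 1
        refine sum_congr rfl fun a ha ↦ ?_
        rw [sum_comm]
        refine sum_congr rfl fun b hb ↦ ?_
        rw [sum_ite_eq_of_mem' _ _ _ (Nat.mem_divisors.2
          ⟨Nat.lcm_dvd (hdvd a ha) (hdvd b hb), BoundingSieve.prodPrimes_ne_zero⟩)]
    _ = R * (∑ d ∈ D, |w d|) ^ 2 := by rw [sq, sum_mul_sum]
    _ ≤ R * (∑ d ∈ D, (s.nu d)⁻¹) ^ 2 := by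
        gcongr with d hd
        exact abs_selbergWeight_le hDP hd

theorem siftedSum_le_selberg (hDP : D ⊆ s.prodPrimes.divisors) (h1 : 1 ∈ D)
    (hD : ∀ l ∈ D, ∀ d, d ∣ l → d ∈ D) {R : ℝ} (hR : ∀ d, d ∣ s.prodPrimes → |s.rem d| ≤ R) :
    s.siftedSum ≤ s.totalMass / ∑ l ∈ D, s.selbergTerms l + R * (∑ d ∈ D, (s.nu d)⁻¹) ^ 2 := by
  have hupper := BoundingSieve.upperMoebius_lambdaSquared _ (selbergWeight_one hDP h1)
  refine (BoundingSieve.siftedSum_le_mainSum_errSum_of_upperMoebius _ hupper).trans ?_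
  rw [mainSum_selbergWeight hDP, ← div_eq_mul_inv]
  gcongr
  exact errSum_selbergWeight_le hDP hD hR

theorem nu_le_selbergTerms {l : ℕ} (hl : l ∣ s.prodPrimes) : s.nu l ≤ s.selbergTerms l := by
  rw [BoundingSieve.selbergTerms_apply]
  refine le_mul_of_one_le_right (BoundingSieve.nu_pos_of_dvd_prodPrimes hl).le
    (one_le_prod fun p hp ↦ ?_)
  have hp_prime := Nat.prime_of_mem_primeFactors hp
  have hp_dvd := (Nat.dvd_of_mem_primeFactors hp).trans hl
  have hlt := s.nu_lt_one_of_prime p hp_prime hp_dvd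
  exact one_le_inv_iff₀.2 ⟨by linarith, by linarith [s.nu_pos_of_prime p hp_prime hp_dvd]⟩

end Selberg

/-! ### The Brun–Titchmarsh inequality -/

section BrunTitchmarsh

theorem abs_card_modEq_sub_div_le (N v : ℕ) {r : ℕ} (hr : 0 < r) :
    |(#{n ∈ Ioc 0 N | n ≡ v [MOD r]} : ℝ) - N / r| ≤ 1 := by
  have hmono : ⌊(((0 : ℕ) : ℚ) - v) / r⌋ ≤ ⌊((N : ℚ) - v) / r⌋ := by
    gcongr
    simp
  have hcard : ((#{n ∈ Ioc 0 N | n ≡ v [MOD r]} : ℤ) : ℚ) =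
      ⌊((N : ℚ) - v) / r⌋ - ⌊(((0 : ℕ) : ℚ) - v) / r⌋ := by
    rw [Nat.Ioc_filter_modEq_card 0 N hr v, max_eq_left (sub_nonneg.2 hmono), Int.cast_sub]
  have hdiff : (N : ℚ) / r = ((N : ℚ) - v) / r - (((0 : ℕ) : ℚ) - v) / r := by
    push_cast
    ring
  have hbound : |(#{n ∈ Ioc 0 N | n ≡ v [MOD r]} : ℚ) - N / r| ≤ 1 := by
    rw [← Int.cast_natCast, hcard, hdiff, abs_le]
    constructor <;> linarith [Int.floor_le (((N : ℚ) - v) / r),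
      Int.lt_floor_add_one (((N : ℚ) - v) / r), Int.floor_le ((((0 : ℕ) : ℚ) - v) / r),
      Int.lt_floor_add_one ((((0 : ℕ) : ℚ) - v) / r)]
  have hcast := (Rat.cast_le (K := ℝ)).2 hbound
  push_cast at hcast
  exact hcast

theorem sum_le_sum_of_subset_image {ι κ : Type*} [DecidableEq ι] {A : Finset ι} {B : Finset κ}
    {g : κ → ι} {f : ι → ℝ} (hAB : A ⊆ B.image g) (hf : ∀ i ∈ B.image g, 0 ≤ f i) :
    ∑ i ∈ A, f i ≤ ∑ k ∈ B, f (g k) :=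
  (sum_le_sum_of_subset_of_nonneg hAB fun i hi _ ↦ hf i hi).trans
    (sum_image_le_of_nonneg hf)

theorem sum_inv_mul_prod_one_sub_le (P : Finset ℕ) (hP : ∀ q ∈ P, 0 < q) (z : ℕ) :
    (∑ m ∈ Icc 1 z, (m : ℝ)⁻¹) * ∏ q ∈ P, (1 - (q : ℝ)⁻¹) ≤
      ∑ m ∈ Icc 1 z with ∀ q ∈ P, ¬q ∣ m, (m : ℝ)⁻¹ := by
  induction P using Finset.induction with
  | empty => simp
  | insert q P hqP ih =>
    have hq : 0 < q := hP q (mem_insert_self q P)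
    set A := {m ∈ Icc 1 z | ∀ r ∈ P, ¬r ∣ m} with hA
    have hsub : {m ∈ A | q ∣ m} ⊆ A.image (q * ·) := by
      intro m hm
      simp only [hA, mem_filter, mem_Icc] at hm
      obtain ⟨⟨⟨hm1, hmz⟩, hmP⟩, k, rfl⟩ := hm
      refine mem_image_of_mem _ (mem_filter.2 ⟨mem_Icc.2 ⟨Nat.pos_of_mul_pos_left hm1, ?_⟩, ?_⟩)
      · exact (Nat.le_mul_of_pos_left k hq).trans hmz
      · exact fun r hr hrk ↦ hmP r hr (hrk.mul_left q)
    have hmult : ∑ m ∈ A with q ∣ m, (m : ℝ)⁻¹ ≤ (q : ℝ)⁻¹ * ∑ m ∈ A, (m : ℝ)⁻¹ := by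
      refine (sum_le_sum_of_subset_image hsub fun m _ ↦ by positivity).trans_eq ?_
      simp_rw [mul_sum, Nat.cast_mul, mul_inv]
    have hsplit := sum_filter_add_sum_filter_not A (q ∣ ·) fun m ↦ (m : ℝ)⁻¹
    have hinsert : {m ∈ Icc 1 z | ∀ r ∈ insert q P, ¬r ∣ m} = {m ∈ A | ¬q ∣ m} := by
      simp only [hA, filter_filter, forall_mem_insert, and_comm]
    have hq1 : (q : ℝ)⁻¹ ≤ 1 := inv_le_one_of_one_le₀ (mod_cast hq)
    calc (∑ m ∈ Icc 1 z, (m : ℝ)⁻¹) * ∏ r ∈ insert q P, (1 - (r : ℝ)⁻¹)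
        = (1 - (q : ℝ)⁻¹) * ((∑ m ∈ Icc 1 z, (m : ℝ)⁻¹) * ∏ r ∈ P, (1 - (r : ℝ)⁻¹)) := by
          rw [prod_insert hqP]
          ring
      _ ≤ (1 - (q : ℝ)⁻¹) * ∑ m ∈ A, (m : ℝ)⁻¹ :=
          mul_le_mul_of_nonneg_left (ih fun r hr ↦ hP r (mem_insert_of_mem hr)) (by linarith)
      _ ≤ ∑ m ∈ Icc 1 z with ∀ r ∈ insert q P, ¬r ∣ m, (m : ℝ)⁻¹ := by
          rw [hinsert]
          linarith

theorem prod_primeFactors_one_sub_inv {d : ℕ} (hd : d ≠ 0) :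
    ∏ q ∈ d.primeFactors, (1 - (q : ℝ)⁻¹) = d.totient / d := by
  have h : ((d.totient : ℚ) : ℝ) = ((d * ∏ q ∈ d.primeFactors, (1 - (q : ℚ)⁻¹) : ℚ) : ℝ) := by
    rw [Nat.totient_eq_mul_prod_factors]
  push_cast at h
  rw [h]
  field_simp

/-- The squarefree numbers up to `z` that are coprime to `d`: the moduli of Selberg's weights when
sifting a residue class modulo `d`. -/
def squarefreeCoprime (d z : ℕ) : Finset ℕ := {l ∈ Icc 1 z | Squarefree l ∧ l.Coprime d}

theorem mem_squarefreeCoprime {d z l : ℕ} :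
    l ∈ squarefreeCoprime d z ↔ l ≤ z ∧ Squarefree l ∧ l.Coprime d := by
  simp only [squarefreeCoprime, mem_filter, mem_Icc]
  exact ⟨fun h ↦ ⟨h.1.2, h.2⟩, fun h ↦ ⟨⟨Nat.pos_of_ne_zero h.2.1.ne_zero, h.1⟩, h.2⟩⟩

theorem sum_inv_coprime_le (d z : ℕ) :
    ∑ m ∈ Icc 1 z with m.Coprime d, (m : ℝ)⁻¹ ≤ 2 * ∑ l ∈ squarefreeCoprime d z, (l : ℝ)⁻¹ := by
  have hsub : {m ∈ Icc 1 z | m.Coprime d} ⊆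
      (Ioo 0 (z + 1) ×ˢ squarefreeCoprime d z).image fun y ↦ y.1 ^ 2 * y.2 := by
    intro m hm
    obtain ⟨⟨hm1, hmz⟩, hmd⟩ : (1 ≤ m ∧ m ≤ z) ∧ m.Coprime d := by simpa using hm
    obtain ⟨r, b, hr0, hb, rfl, hr⟩ := Nat.sq_mul_squarefree_of_pos hm1
    refine mem_image_of_mem _ (a := (b, r))
      (mem_product.2 ⟨?_, mem_squarefreeCoprime.2 ⟨?_, hr, ?_⟩⟩)
    · have hle : b ≤ b ^ 2 * r :=
        (Nat.le_self_pow two_ne_zero b).trans (Nat.le_mul_of_pos_right _ hr0)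
      simp only [mem_Ioo]
      lia
    · exact (Nat.le_mul_of_pos_left r (pow_pos hb 2)).trans hmz
    · exact hmd.coprime_dvd_left (dvd_mul_left r _)
  refine (sum_le_sum_of_subset_image hsub fun m _ ↦ by positivity).trans ?_
  simp_rw [sum_product, Nat.cast_mul, mul_inv, Nat.cast_pow, ← mul_sum, ← sum_mul]
  gcongr
  simpa using sum_Ioo_inv_sq_le (α := ℝ) 0 (z + 1)

theorem totient_div_mul_log_le {d : ℕ} (hd : d ≠ 0) (z : ℕ) :
    d.totient / d * Real.log z ≤ 2 * ∑ l ∈ squarefreeCoprime d z, (l : ℝ)⁻¹ := by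
  have hharmonic : Real.log z ≤ ∑ m ∈ Icc 1 z, (m : ℝ)⁻¹ := by
    rcases Nat.eq_zero_or_pos z with rfl | hz
    · simp
    · have h := log_add_one_le_harmonic z
      rw [harmonic_eq_sum_Icc] at h
      push_cast at h
      exact (Real.log_le_log (mod_cast hz) (by linarith)).trans h
  have hcoprime : ∀ m, (∀ q ∈ d.primeFactors, ¬q ∣ m) → m.Coprime d := fun m hm ↦
    Nat.coprime_of_dvd fun q hq hqm hqd ↦ hm q (Nat.mem_primeFactors.2 ⟨hq, hqd, hd⟩) hqm
  calc d.totient / d * Real.log z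
      ≤ (∑ m ∈ Icc 1 z, (m : ℝ)⁻¹) * ∏ q ∈ d.primeFactors, (1 - (q : ℝ)⁻¹) := by
        rw [prod_primeFactors_one_sub_inv hd, mul_comm]
        gcongr
    _ ≤ ∑ m ∈ Icc 1 z with ∀ q ∈ d.primeFactors, ¬q ∣ m, (m : ℝ)⁻¹ :=
        sum_inv_mul_prod_one_sub_le _ (fun q hq ↦ Nat.pos_of_mem_primeFactors hq) z
    _ ≤ ∑ m ∈ Icc 1 z with m.Coprime d, (m : ℝ)⁻¹ :=
        sum_le_sum_of_subset_of_nonneg (monotone_filter_right _ fun m _ ↦ hcoprime m)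
          fun _ _ _ ↦ by positivity
    _ ≤ 2 * ∑ l ∈ squarefreeCoprime d z, (l : ℝ)⁻¹ := sum_inv_coprime_le d z

/-- The sieve of the integers `n ≤ N` with `n ≡ a [MOD d]` by the primes up to `z` not dividing
`d`. -/
noncomputable def residueSieve (N a d z : ℕ) : BoundingSieve where
  support := {n ∈ Ioc 0 N | n ≡ a [MOD d]}
  prodPrimes := ∏ q ∈ Nat.primesLE z with ¬q ∣ d, q
  prodPrimes_squarefree := by
    refine Finset.squarefree_prod_of_pairwise_isCoprime (fun p hp q hq hpq ↦ ?_) fun p hp ↦ ?_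
    · rw [Function.onFun, ← Nat.coprime_iff_isRelPrime]
      exact (Nat.coprime_primes (Nat.prime_of_mem_primesLE (mem_of_mem_filter p hp))
        (Nat.prime_of_mem_primesLE (mem_of_mem_filter q hq))).2 hpq
    · exact (Nat.prime_of_mem_primesLE (mem_of_mem_filter p hp)).prime.squarefree
  weights _ := 1
  weights_nonneg _ := zero_le_one
  totalMass := N / d
  nu := ⟨fun n ↦ (n : ℝ)⁻¹, by simp⟩
  nu_mult := ⟨by simp, fun _ ↦ by simp [mul_comm]⟩
  nu_pos_of_prime p hp _ := by
    have := hp.pos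
    simp [this]
  nu_lt_one_of_prime p hp _ := by
    simpa using inv_lt_one_of_one_lt₀ (by exact_mod_cast hp.one_lt : (1 : ℝ) < p)

section

variable {N a d z : ℕ}

theorem prodPrimes_residueSieve :
    (residueSieve N a d z).prodPrimes = ∏ q ∈ Nat.primesLE z with ¬q ∣ d, q :=
  rfl

theorem coprime_prodPrimes_residueSieve : (residueSieve N a d z).prodPrimes.Coprime d := by
  rw [prodPrimes_residueSieve]
  refine Nat.Coprime.prod_left fun q hq ↦ ?_
  obtain ⟨hq, hqd⟩ := mem_filter.1 hq
  exact (Nat.Prime.coprime_iff_not_dvd (Nat.prime_of_mem_primesLE hq)).2 hqd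

theorem squarefreeCoprime_subset_divisors :
    squarefreeCoprime d z ⊆ (residueSieve N a d z).prodPrimes.divisors := by
  intro l hl
  obtain ⟨hlz, hsq, hcop⟩ := mem_squarefreeCoprime.1 hl
  refine Nat.mem_divisors.2 ⟨?_, BoundingSieve.prodPrimes_ne_zero⟩
  rw [← Nat.prod_primeFactors_of_squarefree hsq, prodPrimes_residueSieve]
  refine prod_dvd_prod_of_subset _ _ _ fun q hq ↦ mem_filter.2 ⟨?_, ?_⟩
  · exact Nat.mem_primesLE.2
      ⟨(Nat.le_of_mem_primeFactors hq).trans hlz, Nat.prime_of_mem_primeFactors hq⟩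
  · exact fun hqd ↦ (Nat.prime_of_mem_primeFactors hq).one_lt.ne'
      (Nat.eq_one_of_dvd_coprimes hcop (Nat.dvd_of_mem_primeFactors hq) hqd)

theorem abs_rem_residueSieve_le (hd : 0 < d) {l : ℕ}
    (hl : l ∣ (residueSieve N a d z).prodPrimes) : |(residueSieve N a d z).rem l| ≤ 1 := by
  have hl0 : 0 < l := Nat.pos_of_dvd_of_pos hl BoundingSieve.prodPrimes_ne_zero.bot_lt
  have hcop : l.Coprime d := coprime_prodPrimes_residueSieve.coprime_dvd_left hl
  obtain ⟨v, hv⟩ := Nat.chineseRemainder hcop 0 a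
  have hset : {n ∈ {n ∈ Ioc 0 N | n ≡ a [MOD d]} | l ∣ n} =
      {n ∈ Ioc 0 N | n ≡ v [MOD l * d]} := by
    rw [filter_filter]
    refine filter_congr fun n _ ↦ ?_
    rw [← Nat.modEq_and_modEq_iff_modEq_mul hcop, ← Nat.modEq_zero_iff_dvd]
    exact ⟨fun h ↦ ⟨h.2.trans hv.1.symm, h.1.trans hv.2.symm⟩,
      fun h ↦ ⟨h.2.trans hv.2, h.1.trans hv.1⟩⟩
  have hrem : (residueSieve N a d z).rem l =
      #{n ∈ Ioc 0 N | n ≡ v [MOD l * d]} - N / (l * d : ℕ) := by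
    rw [← hset, BoundingSieve.rem, BoundingSieve.multSum, ← sum_filter, card_eq_sum_ones]
    simp only [residueSieve, ArithmeticFunction.coe_mk]
    push_cast
    field_simp
  rw [hrem]
  exact abs_card_modEq_sub_div_le N v (mul_pos hl0 hd)

theorem card_primesLE_modEq_le_add_siftedSum :
    (#{p ∈ Nat.primesLE N | p ≡ a [MOD d]} : ℝ) ≤ z + (residueSieve N a d z).siftedSum := by
  have hsub : {p ∈ Nat.primesLE N | p ≡ a [MOD d]} ⊆ Ioc 0 z ∪
      {n ∈ (residueSieve N a d z).support | (residueSieve N a d z).prodPrimes.Coprime n} := by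
    intro p hp
    obtain ⟨⟨hpN, hp_prime⟩, hpa⟩ : (p ≤ N ∧ p.Prime) ∧ p ≡ a [MOD d] := by
      simpa [Nat.mem_primesLE] using hp
    refine mem_union.2 <| (le_or_gt p z).imp (fun hpz ↦ mem_Ioc.2 ⟨hp_prime.pos, hpz⟩)
      fun hzp ↦ mem_filter.2 ⟨mem_filter.2 ⟨mem_Ioc.2 ⟨hp_prime.pos, hpN⟩, hpa⟩, ?_⟩
    rw [prodPrimes_residueSieve]
    refine Nat.Coprime.prod_left fun q hq ↦ ?_
    obtain ⟨hqz, hq_prime⟩ := Nat.mem_primesLE.1 (mem_of_mem_filter q hq)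
    exact (Nat.coprime_primes hq_prime hp_prime).2 (hqz.trans_lt hzp).ne
  have hcard := (card_le_card hsub).trans (card_union_le _ _)
  rw [Nat.card_Ioc, Nat.sub_zero] at hcard
  have hsifted : (residueSieve N a d z).siftedSum = #{n ∈ (residueSieve N a d z).support |
      (residueSieve N a d z).prodPrimes.Coprime n} := by
    rw [BoundingSieve.siftedSum, ← sum_filter, card_eq_sum_ones]
    simp [residueSieve]
  rw [hsifted]
  exact_mod_cast hcard

theorem sum_squarefreeCoprime_le : ∑ l ∈ squarefreeCoprime d z, (l : ℝ) ≤ z ^ 2 := by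
  have hcard : #(squarefreeCoprime d z) ≤ z := by
    simpa [squarefreeCoprime] using
      card_filter_le (Icc 1 z) fun l ↦ Squarefree l ∧ l.Coprime d
  calc ∑ l ∈ squarefreeCoprime d z, (l : ℝ)
      ≤ ∑ _l ∈ squarefreeCoprime d z, (z : ℝ) :=
        sum_le_sum fun _ hl ↦ mod_cast (mem_squarefreeCoprime.1 hl).1
    _ ≤ z ^ 2 := by
        rw [sum_const, nsmul_eq_mul, sq]
        gcongr

theorem siftedSum_residueSieve_le (hd : 0 < d) (hz : 2 ≤ z) :
    (residueSieve N a d z).siftedSum ≤ 2 * N / (d.totient * Real.log z) + z ^ 4 := by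
  set s := residueSieve N a d z
  set D := squarefreeCoprime d z
  have hDP : D ⊆ s.prodPrimes.divisors := squarefreeCoprime_subset_divisors
  have hDdvd : ∀ l ∈ D, ∀ e, e ∣ l → e ∈ D := by
    intro l hl e he
    obtain ⟨hlz, hsq, hcop⟩ := mem_squarefreeCoprime.1 hl
    exact mem_squarefreeCoprime.2 ⟨(Nat.le_of_dvd hsq.ne_zero.bot_lt he).trans hlz,
      hsq.squarefree_of_dvd he, hcop.coprime_dvd_left he⟩
  have h1 : 1 ∈ D := mem_squarefreeCoprime.2 ⟨by lia, squarefree_one, Nat.coprime_one_left d⟩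
  have hnu : ∀ l, s.nu l = (l : ℝ)⁻¹ := fun l ↦ rfl
  have hterms : d.totient / d * Real.log z / 2 ≤ ∑ l ∈ D, s.selbergTerms l := by
    have hle : ∑ l ∈ D, (l : ℝ)⁻¹ ≤ ∑ l ∈ D, s.selbergTerms l := sum_le_sum fun l hl ↦
      (hnu l).symm.trans_le (nu_le_selbergTerms (Nat.dvd_of_mem_divisors (hDP hl)))
    linarith [totient_div_mul_log_le hd.ne' z]
  have hlog : 0 < Real.log z := Real.log_pos (mod_cast hz)
  calc s.siftedSum
      ≤ N / d / ∑ l ∈ D, s.selbergTerms l + 1 * (∑ l ∈ D, (s.nu l)⁻¹) ^ 2 :=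
        siftedSum_le_selberg hDP h1 hDdvd fun l hl ↦ abs_rem_residueSieve_le hd hl
    _ ≤ N / d / (d.totient / d * Real.log z / 2) + 1 * ((z : ℝ) ^ 2) ^ 2 := by
        simp_rw [hnu, inv_inv]
        gcongr
        exact sum_squarefreeCoprime_le
    _ = 2 * N / (d.totient * Real.log z) + z ^ 4 := by
        field_simp

theorem card_primesLE_modEq_le (hd : 0 < d) (hz : 2 ≤ z) :
    (#{p ∈ Nat.primesLE N | p ≡ a [MOD d]} : ℝ) ≤
      2 * N / (d.totient * Real.log z) + z ^ 4 + z := by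
  linarith [card_primesLE_modEq_le_add_siftedSum (N := N) (a := a) (d := d) (z := z),
    siftedSum_residueSieve_le (N := N) (a := a) hd hz]

end

theorem eventually_rpow_mul_log_le {α β : ℝ} (h : α < β) :
    ∀ᶠ N : ℕ in atTop, (N : ℝ) ^ α * Real.log N ≤ N ^ β := by
  have hlog := tendsto_natCast_atTop_atTop (R := ℝ) |>.eventually
    ((isLittleO_log_rpow_atTop (sub_pos.2 h)).bound one_pos)
  filter_upwards [hlog, eventually_gt_atTop 0] with N hN hN0
  have hN0' : (0 : ℝ) < N := mod_cast hN0
  have hle : Real.log N ≤ (N : ℝ) ^ (β - α) := by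
    simpa [abs_of_nonneg (Real.rpow_nonneg hN0'.le _)] using (le_abs_self _).trans hN
  calc (N : ℝ) ^ α * Real.log N ≤ N ^ α * N ^ (β - α) := by gcongr
    _ = N ^ β := by rw [← Real.rpow_add hN0', add_sub_cancel]

theorem eventually_log_floor_rpow_ge {c : ℝ} (hc : 0 < c) :
    ∀ᶠ N : ℕ in atTop, 2 ≤ ⌊(N : ℝ) ^ c⌋₊ ∧ c / 2 * Real.log N ≤ Real.log ⌊(N : ℝ) ^ c⌋₊ := by
  have hpow : Tendsto (fun N : ℕ ↦ (N : ℝ) ^ (c / 2)) atTop atTop :=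
    (tendsto_rpow_atTop (half_pos hc)).comp tendsto_natCast_atTop_atTop
  filter_upwards [hpow.eventually_ge_atTop 2, eventually_gt_atTop 0] with N hN hN0
  have hN0' : (0 : ℝ) < N := mod_cast hN0
  have hsq : (N : ℝ) ^ c = N ^ (c / 2) * N ^ (c / 2) := by
    rw [← Real.rpow_add hN0', add_halves]
  have hfloor := Nat.lt_floor_add_one ((N : ℝ) ^ c)
  refine ⟨Nat.le_floor (by push_cast; nlinarith), ?_⟩
  rw [← Real.log_rpow hN0']
  exact Real.log_le_log (by positivity) (by nlinarith)

theorem brun_titchmarsh {c : ℝ} (hc : 0 < c) :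
    ∃ C : ℝ, 0 < C ∧ ∀ᶠ N : ℕ in atTop, ∀ a d : ℕ, 0 < d → (d : ℝ) ≤ N ^ (1 - c) →
      (#{p ∈ Nat.primesLE N | p ≡ a [MOD d]} : ℝ) ≤ C * N / (d.totient * Real.log N) := by
  refine ⟨32 / c + 2, by positivity, ?_⟩
  filter_upwards [eventually_log_floor_rpow_ge (c := c / 8) (by positivity),
    eventually_rpow_mul_log_le (half_lt_self hc), eventually_gt_atTop 1]
    with N hz hNlog hN a d hd hdN
  set z := ⌊(N : ℝ) ^ (c / 8)⌋₊
  obtain ⟨hz2, hzlog⟩ := hz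
  have hN0 : (0 : ℝ) < N := by positivity
  have hd0 : (0 : ℝ) < d := mod_cast hd
  have hlogN : 0 < Real.log N := Real.log_pos (mod_cast hN)
  have hz_pow : (z : ℝ) ^ 4 ≤ N / (d.totient * Real.log N) :=
    calc (z : ℝ) ^ 4 ≤ ((N : ℝ) ^ (c / 8)) ^ 4 := by
          gcongr
          exact Nat.floor_le (by positivity)
      _ = (N : ℝ) ^ (c / 2) := by
          rw [← Real.rpow_mul_natCast hN0.le]
          ring_nf
      _ ≤ N ^ c / Real.log N := (le_div_iff₀ hlogN).2 hNlog
      _ ≤ N / d / Real.log N := by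
          gcongr
          rw [le_div_iff₀ hd0]
          calc (N : ℝ) ^ c * d ≤ N ^ c * N ^ (1 - c) := by gcongr
            _ = N := by rw [← Real.rpow_add hN0, add_sub_cancel, Real.rpow_one]
      _ ≤ N / (d.totient * Real.log N) := by
          rw [div_div]
          gcongr
          exact Nat.totient_le d
  have hz_le : (z : ℝ) ≤ (z : ℝ) ^ 4 := mod_cast Nat.le_self_pow four_ne_zero z
  calc (#{p ∈ Nat.primesLE N | p ≡ a [MOD d]} : ℝ)
      ≤ 2 * N / (d.totient * Real.log z) + z ^ 4 + z := card_primesLE_modEq_le hd hz2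
    _ ≤ 2 * N / (d.totient * (c / 8 / 2 * Real.log N)) +
          2 * (N / (d.totient * Real.log N)) := by
        rw [add_assoc]
        gcongr
        linarith
    _ = (32 / c + 2) * N / (d.totient * Real.log N) := by
        field_simp
        ring

theorem one_sub_sum_le_prod_one_sub {ι : Type*} (s : Finset ι) {x : ι → ℝ}
    (hx0 : ∀ i ∈ s, 0 ≤ x i) (hx1 : ∀ i ∈ s, x i ≤ 1) :
    1 - ∑ i ∈ s, x i ≤ ∏ i ∈ s, (1 - x i) := by
  classical
  induction s using Finset.induction_on with
  | empty => simp
  | insert i s hi ih =>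
    rw [forall_mem_insert] at hx0 hx1
    rw [sum_insert hi, prod_insert hi]
    have hprod : ∏ j ∈ s, (1 - x j) ≤ 1 :=
      prod_le_one (fun j hj ↦ sub_nonneg.2 (hx1.2 j hj)) fun j hj ↦ by linarith [hx0.2 j hj]
    nlinarith [ih hx0.2 hx1.2, mul_le_mul_of_nonneg_left hprod hx0.1]

/-- The moduli `d` for which the sieve bounds the number of primes `p ≤ N` with `d ∣ p - 1` by a
constant times `π(N) / d`. The condition on the prime factors makes `φ(d)` comparable to `d`. -/
def IsSieveModulus (c : ℝ) (N d : ℕ) : Prop :=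
  0 < d ∧ (d : ℝ) ≤ N ^ (1 - c) ∧ ∑ q ∈ d.primeFactors, (q : ℝ)⁻¹ ≤ 1 / 2

/-- The sieve bound for shifted primes `p - 1`, `p ≤ N`, with constant `C`. -/
def ShiftedPrimeBound (C c : ℝ) (N : ℕ) : Prop :=
  ∀ d : ℕ, IsSieveModulus c N d →
    (#{p ∈ Nat.primesLE N | d ∣ p - 1} : ℝ) ≤ C * (N / Real.log N) / d

theorem half_le_totient {d : ℕ} (hd : ∑ q ∈ d.primeFactors, (q : ℝ)⁻¹ ≤ 1 / 2) :
    (d : ℝ) / 2 ≤ d.totient := by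
  rcases eq_or_ne d 0 with rfl | hd0
  · simp
  have hprod := one_sub_sum_le_prod_one_sub d.primeFactors
    (x := fun q ↦ (q : ℝ)⁻¹) (fun q _ ↦ by positivity)
    fun q hq ↦ inv_le_one_of_one_le₀ (mod_cast (Nat.pos_of_mem_primeFactors hq))
  rw [prod_primeFactors_one_sub_inv hd0, le_div_iff₀ (by positivity)] at hprod
  nlinarith [hprod, hd, (by positivity : (0 : ℝ) < d)]

theorem exists_shiftedPrimeBound {c : ℝ} (hc : 0 < c) :
    ∃ C : ℝ, 0 < C ∧ ∀ᶠ N : ℕ in atTop, ShiftedPrimeBound C c N := by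
  obtain ⟨C, hC, hN⟩ := brun_titchmarsh hc
  refine ⟨2 * C, by positivity, hN.mono fun N hN d ⟨hd, hdN, hsum⟩ ↦ ?_⟩
  have hsub : {p ∈ Nat.primesLE N | d ∣ p - 1} ⊆ {p ∈ Nat.primesLE N | p ≡ 1 [MOD d]} :=
    monotone_filter_right _ fun p hp hdvd ↦
      ((Nat.modEq_iff_dvd' (Nat.prime_of_mem_primesLE hp).one_le).2 hdvd).symm
  calc (#{p ∈ Nat.primesLE N | d ∣ p - 1} : ℝ) ≤ #{p ∈ Nat.primesLE N | p ≡ 1 [MOD d]} :=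
        mod_cast card_le_card hsub
    _ ≤ C * N / (d.totient * Real.log N) := hN 1 d hd hdN
    _ = C * (N / Real.log N) / d.totient := by
        rw [mul_div_assoc, mul_div_assoc, div_mul_eq_div_div_swap]
    _ ≤ C * (N / Real.log N) / (d / 2) := by
        gcongr
        exact half_le_totient hsum
    _ = 2 * C * (N / Real.log N) / d := by ring

end BrunTitchmarsh

/-! ### Mertens' estimates -/

section Mertens

theorem sum_log_div_le_four {Q : Finset ℕ} {s : ℝ}
    (hQ : ∀ q ∈ Q, q.Prime ∧ s ≤ Real.log q ∧ Real.log q ≤ s + 1) :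
    ∑ q ∈ Q, Real.log q / q ≤ 4 := by
  have hpos : ∀ q ∈ Q, (0 : ℝ) < q := fun q hq ↦ mod_cast (hQ q hq).1.pos
  have htheta : ∑ q ∈ Q, Real.log q ≤ Chebyshev.theta (Real.exp (s + 1)) := by
    rw [Chebyshev.theta_eq_sum_primesLE]
    refine sum_le_sum_of_subset_of_nonneg (fun q hq ↦ ?_) fun q _ _ ↦ Real.log_natCast_nonneg q
    obtain ⟨hq_prime, -, hq_le⟩ := hQ q hq
    exact Nat.mem_primesLE.2
      ⟨Nat.le_floor ((Real.log_le_iff_le_exp (hpos q hq)).1 hq_le), hq_prime⟩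
  have hlog4 : Real.log 4 = 2 * Real.log 2 := by
    rw [show (4 : ℝ) = 2 ^ 2 by norm_num, Real.log_pow, Nat.cast_ofNat]
  calc ∑ q ∈ Q, Real.log q / q ≤ ∑ q ∈ Q, Real.log q / Real.exp s := by
        refine sum_le_sum fun q hq ↦ div_le_div_of_nonneg_left (Real.log_natCast_nonneg q)
          (Real.exp_pos s) ((Real.le_log_iff_exp_le (hpos q hq)).1 (hQ q hq).2.1)
    _ = (∑ q ∈ Q, Real.log q) / Real.exp s := (sum_div ..).symm
    _ ≤ Real.log 4 * Real.exp (s + 1) / Real.exp s := by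
        gcongr
        exact htheta.trans (Chebyshev.theta_le_log4_mul_x (Real.exp_pos _).le)
    _ = 2 * Real.log 2 * Real.exp 1 := by
        rw [hlog4, Real.exp_add]
        field_simp
    _ ≤ 2 * 0.7 * 2.8 := by
        gcongr
        · linarith [Real.log_two_lt_d9]
        · linarith [Real.exp_one_lt_d9]
    _ ≤ 4 := by norm_num

theorem sum_log_div_le {Q : Finset ℕ} {s h : ℝ} (hh : 0 ≤ h)
    (hQ : ∀ q ∈ Q, q.Prime ∧ s ≤ Real.log q ∧ Real.log q ≤ s + h) :
    ∑ q ∈ Q, Real.log q / q ≤ 4 * (h + 1) := by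
  have hmaps : ∀ q ∈ Q, ⌊Real.log q - s⌋₊ ∈ range (⌊h⌋₊ + 1) := fun q hq ↦ by
    obtain ⟨-, -, hq_le⟩ := hQ q hq
    exact mem_range.2 (Nat.lt_succ_of_le (Nat.floor_le_floor (by linarith)))
  have hfiber : ∀ j ∈ range (⌊h⌋₊ + 1),
      ∑ q ∈ Q with ⌊Real.log (q : ℕ) - s⌋₊ = j, Real.log q / q ≤ 4 := by
    refine fun j _ ↦ sum_log_div_le_four (s := s + j) fun q hq ↦ ?_
    obtain ⟨hqQ, rfl⟩ := mem_filter.1 hq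
    obtain ⟨hq_prime, hq_ge, -⟩ := hQ q hqQ
    exact ⟨hq_prime, by linarith [Nat.floor_le (sub_nonneg.2 hq_ge)],
      by linarith [Nat.lt_floor_add_one (Real.log q - s)]⟩
  calc ∑ q ∈ Q, Real.log q / q
      = ∑ j ∈ range (⌊h⌋₊ + 1), ∑ q ∈ Q with ⌊Real.log (q : ℕ) - s⌋₊ = j, Real.log q / q :=
        (sum_fiberwise_of_maps_to hmaps _).symm
    _ ≤ #(range (⌊h⌋₊ + 1)) • 4 := sum_le_card_nsmul _ _ _ hfiber
    _ ≤ 4 * (h + 1) := by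
        rw [card_range, nsmul_eq_mul, Nat.cast_succ, mul_comm]
        gcongr
        exact Nat.floor_le hh

theorem prod_primesLE_pow_dvd_factorial (n : ℕ) :
    ∏ q ∈ Nat.primesLE n, q ^ (n / q) ∣ n.factorial := by
  refine prod_dvd_of_isRelPrime (fun p hp q hq hpq ↦ ?_) fun q hq ↦ ?_
  · exact Nat.coprime_iff_isRelPrime.1 (((Nat.coprime_primes (Nat.prime_of_mem_primesLE hp)
      (Nat.prime_of_mem_primesLE hq)).2 hpq).pow _ _)
  · have hq_prime := Nat.prime_of_mem_primesLE hq
    have hdvd : q ^ (n / q) ∣ (q * (n / q)).factorial := by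
      rw [hq_prime.pow_dvd_factorial_iff (Nat.lt_succ_self _),
        ← Nat.factorization_factorial hq_prime (Nat.lt_succ_self _),
        Nat.factorization_factorial_mul hq_prime]
      exact Nat.le_add_left ..
    exact hdvd.trans (Nat.factorial_dvd_factorial (Nat.mul_div_le n q))

theorem sum_primesLE_div_mul_log_le (n : ℕ) :
    ∑ q ∈ Nat.primesLE n, ((n / q : ℕ) : ℝ) * Real.log q ≤ n * Real.log n := by
  have hpos : ∀ q ∈ Nat.primesLE n, 0 < q ^ (n / q) := fun q hq ↦
    pow_pos (Nat.prime_of_mem_primesLE hq).pos _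
  have hle : ∏ q ∈ Nat.primesLE n, q ^ (n / q) ≤ n ^ n :=
    (Nat.le_of_dvd n.factorial_pos (prod_primesLE_pow_dvd_factorial n)).trans n.factorial_le_pow
  calc ∑ q ∈ Nat.primesLE n, ((n / q : ℕ) : ℝ) * Real.log q
      = Real.log (∏ q ∈ Nat.primesLE n, q ^ (n / q) : ℕ) := by
        rw [Nat.cast_prod, Real.log_prod fun q hq ↦ mod_cast (hpos q hq).ne']
        simp_rw [Nat.cast_pow, Real.log_pow]
    _ ≤ Real.log (n ^ n : ℕ) := Real.log_le_log (mod_cast prod_pos hpos) (mod_cast hle)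
    _ = n * Real.log n := by rw [Nat.cast_pow, Real.log_pow]

theorem sum_primesLE_log_div_le (n : ℕ) :
    ∑ q ∈ Nat.primesLE n, Real.log q / q ≤ Real.log n + Real.log 4 := by
  rcases n.eq_zero_or_pos with rfl | hn
  · simpa using Real.log_nonneg (by norm_num)
  have hn0 : (0 : ℝ) < n := mod_cast hn
  refine le_of_mul_le_mul_left ?_ hn0
  have hterm : ∀ q ∈ Nat.primesLE n,
      n * (Real.log q / q) ≤ (n / q : ℕ) * Real.log q + Real.log q := fun q _ ↦
    calc n * (Real.log q / q) = n / q * Real.log q := by ring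
      _ ≤ ((n / q : ℕ) + 1) * Real.log q := by
          gcongr
          rw [← Nat.floor_div_eq_div (K := ℝ)]
          exact (Nat.lt_floor_add_one _).le
      _ = (n / q : ℕ) * Real.log q + Real.log q := by ring
  calc n * ∑ q ∈ Nat.primesLE n, Real.log q / q
      ≤ ∑ q ∈ Nat.primesLE n, (n / q : ℕ) * Real.log q + ∑ q ∈ Nat.primesLE n, Real.log q := by
        rw [mul_sum, ← sum_add_distrib]
        exact sum_le_sum hterm
    _ ≤ n * Real.log n + Real.log 4 * n := by
        gcongr
        · exact sum_primesLE_div_mul_log_le n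
        · rw [← Chebyshev.theta_eq_sum_primesLE_log]
          exact Chebyshev.theta_le_log4_mul_x hn0.le
    _ = n * (Real.log n + Real.log 4) := by ring

theorem hasDerivAt_inv_log {t : ℝ} (ht : 1 < t) :
    HasDerivAt (fun t ↦ (Real.log t)⁻¹) (-t⁻¹ / Real.log t ^ 2) t :=
  (Real.hasDerivAt_log (by linarith)).inv (Real.log_pos ht).ne'

theorem continuousOn_inv_div_log_sq : ContinuousOn (fun t ↦ t⁻¹ / Real.log t ^ 2) (Set.Ioi 1) := by
  have hne : ∀ t ∈ Set.Ioi (1 : ℝ), t ≠ 0 := fun t ht ↦ (zero_lt_one.trans ht).ne'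
  exact (continuousOn_id.inv₀ hne).div ((Real.continuousOn_log.mono hne).pow 2) fun t ht ↦
    pow_ne_zero 2 (Real.log_pos ht).ne'

theorem continuousOn_inv_div_log_sq_mul_log_add (B : ℝ) :
    ContinuousOn (fun t ↦ t⁻¹ / Real.log t ^ 2 * (Real.log t + B)) (Set.Ioi 1) :=
  continuousOn_inv_div_log_sq.mul
    ((Real.continuousOn_log.mono fun _ ht ↦ (zero_lt_one.trans ht).ne').add continuousOn_const)

variable {a b B : ℝ}

theorem integral_inv_div_log_sq_mul_log_add (ha : 1 < a) (hab : a ≤ b) :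
    ∫ t in Set.Ioc a b, t⁻¹ / Real.log t ^ 2 * (Real.log t + B) =
      Real.log (Real.log b / Real.log a) + B * ((Real.log a)⁻¹ - (Real.log b)⁻¹) := by
  have hsub : Set.Icc a b ⊆ Set.Ioi 1 := fun t ht ↦ ha.trans_le ht.1
  have hderiv : ∀ t ∈ Set.uIcc a b, HasDerivAt
      (fun t ↦ Real.log (Real.log t) - B * (Real.log t)⁻¹)
      (t⁻¹ / Real.log t ^ 2 * (Real.log t + B)) t := by
    intro t ht
    rw [Set.uIcc_of_le hab] at ht
    have ht1 := hsub ht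
    have hlog := Real.log_pos ht1
    refine (((Real.hasDerivAt_log (zero_lt_one.trans ht1).ne').log hlog.ne').sub
      ((hasDerivAt_inv_log ht1).const_mul B)).congr_deriv ?_
    field_simp
    ring
  have hintegrable : IntervalIntegrable (fun t ↦ t⁻¹ / Real.log t ^ 2 * (Real.log t + B))
      MeasureTheory.volume a b :=
    ((continuousOn_inv_div_log_sq_mul_log_add B).mono
      ((Set.uIcc_of_le hab).trans_subset hsub)).intervalIntegrable
  rw [← intervalIntegral.integral_of_le hab,
    intervalIntegral.integral_eq_sub_of_hasDerivAt hderiv hintegrable,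
    Real.log_div (Real.log_pos (ha.trans_le hab)).ne' (Real.log_pos ha).ne']
  ring

theorem neg_integral_deriv_inv_log_mul_le {S : ℝ → ℝ} (ha : 1 < a) (hab : a ≤ b)
    (hS0 : ∀ t, 0 ≤ S t) (hS : ∀ t, a ≤ t → S t ≤ Real.log t + B) :
    -∫ t in Set.Ioc a b, deriv (fun t ↦ (Real.log t)⁻¹) t * S t ≤
      Real.log (Real.log b / Real.log a) + B * ((Real.log a)⁻¹ - (Real.log b)⁻¹) := by
  rw [← integral_inv_div_log_sq_mul_log_add ha hab, ← MeasureTheory.integral_neg]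
  have hderiv : ∀ t ∈ Set.Ioc a b,
      -(deriv (fun t ↦ (Real.log t)⁻¹) t * S t) = t⁻¹ / Real.log t ^ 2 * S t := by
    intro t ht
    rw [(hasDerivAt_inv_log (ha.trans ht.1)).deriv]
    ring
  have hnonneg : ∀ t ∈ Set.Ioc a b, 0 ≤ t⁻¹ / Real.log t ^ 2 := fun t ht ↦
    div_nonneg (inv_nonneg.2 (zero_le_one.trans (ha.trans ht.1).le)) (sq_nonneg _)
  refine MeasureTheory.integral_mono_of_nonneg
    ((MeasureTheory.ae_restrict_iff' measurableSet_Ioc).2 (.of_forall fun t ht ↦ ?_)) ?_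
    ((MeasureTheory.ae_restrict_iff' measurableSet_Ioc).2 (.of_forall fun t ht ↦ ?_))
  · simpa only [Pi.zero_apply, hderiv t ht] using mul_nonneg (hnonneg t ht) (hS0 t)
  · exact (((continuousOn_inv_div_log_sq_mul_log_add B).mono
      fun t ht ↦ ha.trans_le ht.1).integrableOn_Icc).mono_set Set.Ioc_subset_Icc_self
  · simpa only [hderiv t ht] using
      mul_le_mul_of_nonneg_left (hS t ht.1.le) (hnonneg t ht)

theorem sum_inv_log_mul_le {c : ℕ → ℝ} (ha : 1 < a) (hab : a ≤ b) (hc : ∀ k, 0 ≤ c k)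
    (hsum : ∀ t, a ≤ t → ∑ k ∈ Icc 0 ⌊t⌋₊, c k ≤ Real.log t + B) :
    ∑ k ∈ Ioc ⌊a⌋₊ ⌊b⌋₊, (Real.log k)⁻¹ * c k ≤
      Real.log (Real.log b / Real.log a) + 1 + B / Real.log a := by
  have hIcc : Set.Icc a b ⊆ Set.Ioi 1 := fun t ht ↦ ha.trans_le ht.1
  have hS0 : ∀ t : ℝ, 0 ≤ ∑ k ∈ Icc 0 ⌊t⌋₊, c k := fun t ↦ sum_nonneg fun k _ ↦ hc k
  have hintegrable : MeasureTheory.IntegrableOn (deriv fun t ↦ (Real.log t)⁻¹) (Set.Icc a b) :=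
    (continuousOn_inv_div_log_sq.neg.mono hIcc).integrableOn_Icc.congr_fun
      (fun t ht ↦ by simp [(hasDerivAt_inv_log (hIcc ht)).deriv, neg_div]) measurableSet_Icc
  have hloga := Real.log_pos ha
  have hlogb := Real.log_pos (ha.trans_le hab)
  have hb : (Real.log b)⁻¹ * ∑ k ∈ Icc 0 ⌊b⌋₊, c k ≤ 1 + B * (Real.log b)⁻¹ :=
    calc (Real.log b)⁻¹ * ∑ k ∈ Icc 0 ⌊b⌋₊, c k ≤ (Real.log b)⁻¹ * (Real.log b + B) := by
          gcongr
          exact hsum b hab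
      _ = 1 + B * (Real.log b)⁻¹ := by field_simp
  have ha' : 0 ≤ (Real.log a)⁻¹ * ∑ k ∈ Icc 0 ⌊a⌋₊, c k := by
    have := hS0 a
    positivity
  rw [sum_mul_eq_sub_sub_integral_mul c (by linarith) hab
    (fun t ht ↦ (hasDerivAt_inv_log (hIcc ht)).differentiableAt) hintegrable, div_eq_mul_inv B]
  linarith [neg_integral_deriv_inv_log_mul_le (B := B) ha hab hS0 hsum]

theorem sum_inv_prime_le (ha : 2 ≤ a) (hab : a ≤ b) :
    ∑ q ∈ Ioc ⌊a⌋₊ ⌊b⌋₊ with q.Prime, (q : ℝ)⁻¹ ≤ Real.log (Real.log b / Real.log a) + 3 := by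
  set c : ℕ → ℝ := fun q ↦ if q.Prime then Real.log q / q else 0 with hc
  have hc0 : ∀ k, 0 ≤ c k := fun k ↦
    ite_nonneg (div_nonneg (Real.log_natCast_nonneg k) k.cast_nonneg) le_rfl
  have hsum : ∀ t, a ≤ t → ∑ k ∈ Icc 0 ⌊t⌋₊, c k ≤ Real.log t + Real.log 4 := by
    intro t hat
    have hfloor : (0 : ℝ) < ⌊t⌋₊ := mod_cast Nat.floor_pos.2 (by linarith)
    have hfilter : {k ∈ Icc 0 ⌊t⌋₊ | k.Prime} = Nat.primesLE ⌊t⌋₊ := by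
      ext
      simp [Nat.mem_primesLE]
    rw [hc, ← sum_filter, hfilter]
    refine (sum_primesLE_log_div_le _).trans ?_
    gcongr
    exact Nat.floor_le (by linarith)
  have hterm : ∀ k : ℕ, (Real.log k)⁻¹ * c k = if k.Prime then (k : ℝ)⁻¹ else 0 := by
    intro k
    by_cases hk : k.Prime
    · have hlog : 0 < Real.log k := Real.log_pos (mod_cast hk.one_lt)
      simp only [hc, if_pos hk]
      field_simp
    · simp [hc, hk]
  have hlog4 : Real.log 4 / Real.log a ≤ 2 := by
    rw [div_le_iff₀ (Real.log_pos (by linarith)), show (4 : ℝ) = 2 ^ 2 by norm_num, Real.log_pow,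
      Nat.cast_ofNat]
    gcongr
  have h := sum_inv_log_mul_le (by linarith) hab hc0 hsum
  simp_rw [hterm, ← sum_filter] at h
  linarith

end Mertens

/-! ### Sets of primes -/

section PrimeSets

/-- The logarithm of the product of the elements of `T`. -/
noncomputable def logSum (T : Finset ℕ) : ℝ := ∑ q ∈ T, Real.log q

/-- The primes `q` with `w < q ≤ N`. -/
noncomputable def roughPrimes (w : ℝ) (N : ℕ) : Finset ℕ := {q ∈ Nat.primesLE N | w < q}

theorem mem_roughPrimes {w : ℝ} {N q : ℕ} : q ∈ roughPrimes w N ↔ q ≤ N ∧ q.Prime ∧ w < q := by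
  simp only [roughPrimes, mem_filter, Nat.mem_primesLE, and_assoc]

theorem logSum_eq_log_prod {T : Finset ℕ} (hT : ∀ q ∈ T, q.Prime) :
    logSum T = Real.log (∏ q ∈ T, q : ℕ) := by
  rw [logSum, Nat.cast_prod, Real.log_prod fun q hq ↦ mod_cast (hT q hq).ne_zero]

theorem logSum_mono {S T : Finset ℕ} (h : S ⊆ T) : logSum S ≤ logSum T :=
  sum_le_sum_of_subset_of_nonneg h fun q _ _ ↦ Real.log_natCast_nonneg q

theorem card_mul_log_le_logSum {T : Finset ℕ} {w : ℝ} (hw : 0 < w) (hT : ∀ q ∈ T, w ≤ (q : ℝ)) :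
    #T * Real.log w ≤ logSum T := by
  rw [← nsmul_eq_mul]
  exact card_nsmul_le_sum _ _ _ fun q hq ↦ Real.log_le_log hw (hT q hq)

theorem sum_powerset_prod_div_le_exp (P : Finset ℕ) {y : ℝ} (hy : 0 ≤ y) :
    ∑ T ∈ P.powerset, ∏ q ∈ T, y / q ≤ Real.exp (y * ∑ q ∈ P, (q : ℝ)⁻¹) := by
  rw [← prod_one_add, mul_sum, Real.exp_sum]
  exact prod_le_prod (fun q _ ↦ by positivity) fun q _ ↦ by
    rw [add_comm, ← div_eq_mul_inv]
    exact Real.add_one_le_exp _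

theorem sum_logSum_mul_prod_div_le (P : Finset ℕ) {y : ℝ} (hy : 0 ≤ y) (Y Z : ℝ) :
    ∑ T ∈ P.powerset with Y ≤ logSum T ∧ logSum T ≤ Z, logSum T * ∏ q ∈ T, y / q ≤
      ∑ T ∈ P.powerset, ∑ q ∈ P with
          q ∉ T ∧ Y - logSum T ≤ Real.log (q : ℕ) ∧ Real.log (q : ℕ) ≤ Z - logSum T,
        Real.log q * (y / q * ∏ r ∈ T, y / r) := by
  conv_lhs => enter [2, T]; rw [logSum, sum_mul]
  rw [sum_sigma', sum_sigma']
  refine (sum_le_sum_of_subset_image (g := fun x ↦ ⟨insert x.2 x.1, x.2⟩) ?_ ?_).trans_eq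
    (sum_congr rfl ?_)
  · rintro ⟨T, q⟩ hTq
    simp only [mem_sigma, mem_filter, mem_powerset] at hTq
    obtain ⟨⟨hTP, hYT, hTZ⟩, hqT⟩ := hTq
    have hlog : Real.log q + logSum (T.erase q) = logSum T :=
      add_sum_erase T (fun q ↦ Real.log q) hqT
    refine mem_image.2 ⟨⟨T.erase q, q⟩, ?_, by rw [insert_erase hqT]⟩
    simp only [mem_sigma, mem_filter, mem_powerset]
    exact ⟨(erase_subset q T).trans hTP, hTP hqT, notMem_erase q T, by linarith, by linarith⟩
  · exact fun x _ ↦ mul_nonneg (Real.log_natCast_nonneg x.2) (prod_nonneg fun q _ ↦ by positivity)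
  · rintro ⟨T, q⟩ hTq
    have hqT : q ∉ T := (mem_filter.1 (mem_sigma.1 hTq).2).2.1
    exact congrArg (Real.log q * ·) (prod_insert hqT)

-- Weighting each `T` by `logSum T ≥ Y` and removing one prime `q` from `T` leaves `log q` in a
-- window of length `Z - Y`, where Mertens' estimate applies.
theorem sum_prod_div_logSum_mem_Icc_le {P : Finset ℕ} (hP : ∀ q ∈ P, q.Prime) {y Y Z : ℝ}
    (hy : 0 ≤ y) (hY : 0 < Y) (hYZ : Y ≤ Z) :
    ∑ T ∈ P.powerset with Y ≤ logSum T ∧ logSum T ≤ Z, ∏ q ∈ T, y / q ≤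
      4 * y * (Z - Y + 1) / Y * ∑ T ∈ P.powerset, ∏ q ∈ T, y / q := by
  have hprod : ∀ T : Finset ℕ, 0 ≤ ∏ q ∈ T, y / (q : ℝ) := fun T ↦
    prod_nonneg fun q _ ↦ by positivity
  have hwindow : ∀ T ∈ P.powerset, ∑ q ∈ P with
      q ∉ T ∧ Y - logSum T ≤ Real.log (q : ℕ) ∧ Real.log (q : ℕ) ≤ Z - logSum T,
        Real.log q * (y / q * ∏ r ∈ T, y / r) ≤ 4 * y * (Z - Y + 1) * ∏ q ∈ T, y / q := by
    intro T _
    calc _ = y * (∏ r ∈ T, y / (r : ℝ)) * ∑ q ∈ P with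
          q ∉ T ∧ Y - logSum T ≤ Real.log (q : ℕ) ∧ Real.log (q : ℕ) ≤ Z - logSum T,
            Real.log q / q := by
          rw [mul_sum]
          exact sum_congr rfl fun q _ ↦ by ring
      _ ≤ y * (∏ r ∈ T, y / (r : ℝ)) * (4 * (Z - Y + 1)) := by
          have := hprod T
          gcongr
          refine sum_log_div_le (s := Y - logSum T) (sub_nonneg.2 hYZ) fun q hq ↦ ?_
          obtain ⟨hqP, -, hge, hle⟩ := mem_filter.1 hq
          exact ⟨hP q hqP, hge, by linarith⟩
      _ = 4 * y * (Z - Y + 1) * ∏ q ∈ T, y / q := by ring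
  rw [div_mul_eq_mul_div, le_div_iff₀' hY, mul_sum, mul_sum]
  calc ∑ T ∈ P.powerset with Y ≤ logSum T ∧ logSum T ≤ Z, Y * ∏ q ∈ T, y / q
      ≤ ∑ T ∈ P.powerset with Y ≤ logSum T ∧ logSum T ≤ Z, logSum T * ∏ q ∈ T, y / q :=
        sum_le_sum fun T hT ↦ mul_le_mul_of_nonneg_right (mem_filter.1 hT).2.1 (hprod T)
    _ ≤ ∑ T ∈ P.powerset, 4 * y * (Z - Y + 1) * ∏ q ∈ T, y / q :=
        (sum_logSum_mul_prod_div_le P hy Y Z).trans (sum_le_sum hwindow)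

variable {N : ℕ} {c ε : ℝ}

theorem sum_inv_roughPrimes_le (hε : 0 < ε) (hε1 : ε ≤ 1) (h2 : 2 ≤ (N : ℝ) ^ ε) :
    ∑ q ∈ roughPrimes (N ^ ε) N, (q : ℝ)⁻¹ ≤ Real.log (1 / ε) + 3 := by
  have hN : 1 < (N : ℝ) := by
    by_contra! hN
    linarith [Real.rpow_le_one N.cast_nonneg hN hε.le]
  have hlog := (Real.log_pos hN).ne'
  have hset : roughPrimes (N ^ ε) N = {q ∈ Ioc ⌊(N : ℝ) ^ ε⌋₊ ⌊(N : ℝ)⌋₊ | q.Prime} := by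
    ext q
    simp only [mem_roughPrimes, mem_filter, mem_Ioc, Nat.floor_natCast,
      Nat.floor_lt (Real.rpow_nonneg N.cast_nonneg ε)]
    tauto
  have hle : (N : ℝ) ^ ε ≤ N := by
    simpa using Real.rpow_le_rpow_of_exponent_le hN.le hε1
  have hratio : Real.log N / Real.log (N ^ ε) = 1 / ε := by
    rw [Real.log_rpow (by linarith)]
    field_simp
  simpa only [hset, hratio] using sum_inv_prime_le h2 hle

theorem isSieveModulus_prod {T : Finset ℕ} (hT : T ⊆ roughPrimes (N ^ ε) N) (hc : 0 ≤ c)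
    (hε : 0 < ε) (hN1 : 1 < N) (hN : 2 ≤ ε * (N : ℝ) ^ ε)
    (hlog : logSum T ≤ (1 - c) * Real.log N) :
    IsSieveModulus c N (∏ q ∈ T, q) := by
  have hprime : ∀ q ∈ T, q.Prime := fun q hq ↦ (mem_roughPrimes.1 (hT hq)).2.1
  have hpos : 0 < ∏ q ∈ T, q := prod_pos fun q hq ↦ (hprime q hq).pos
  have hN0 : (0 : ℝ) < N := by positivity
  have hlogN : 0 < Real.log N := Real.log_pos (mod_cast hN1)
  have hw : 0 < (N : ℝ) ^ ε := by positivity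
  have hcard : #T * ε ≤ 1 := by
    have h := card_mul_log_le_logSum hw fun q hq ↦ (mem_roughPrimes.1 (hT hq)).2.2.le
    rw [Real.log_rpow hN0, ← mul_assoc] at h
    exact le_of_mul_le_mul_right (by nlinarith) hlogN
  refine ⟨hpos, ?_, ?_⟩
  · rw [← Real.log_le_log_iff (mod_cast hpos) (by positivity), Real.log_rpow hN0,
      ← logSum_eq_log_prod hprime]
    exact hlog
  · rw [Nat.primeFactors_prod hprime]
    calc ∑ q ∈ T, (q : ℝ)⁻¹ ≤ #T • ((N : ℝ) ^ ε)⁻¹ := sum_le_card_nsmul _ _ _ fun q hq ↦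
          inv_anti₀ hw (mem_roughPrimes.1 (hT hq)).2.2.le
      _ ≤ 1 / 2 := by
          rw [nsmul_eq_mul, ← div_eq_mul_inv, div_le_div_iff₀ hw two_pos]
          nlinarith

end PrimeSets

/-! ### Moments over shifted primes -/

section Moments

open Classical in
/-- The number of primes `p ≤ N` with the property `P`. -/
noncomputable def primeCount (N : ℕ) (P : ℕ → Prop) : ℕ := #{p ∈ Nat.primesLE N | P p}

/-- The prime factors of `n` exceeding `w`. -/
noncomputable def roughPrimeFactors (w : ℝ) (n : ℕ) : Finset ℕ := {q ∈ n.primeFactors | w < q}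

/-- The logarithm of the product of the prime factors `q ≤ w` of `n`, without multiplicity. -/
noncomputable def smoothLog (w : ℝ) (n : ℕ) : ℝ := logSum {q ∈ n.primeFactors | (q : ℝ) ≤ w}

/-- `n` has a squarefree divisor composed of at most `k` primes exceeding `w`, whose logarithm
lies in `[Y, Z]`. -/
def HasRoughDivisor (w k Y Z : ℝ) (n : ℕ) : Prop :=
  ∃ T ⊆ roughPrimeFactors w n, #T ≤ k ∧ Y ≤ logSum T ∧ logSum T ≤ Z

theorem primeCount_mono {N : ℕ} {P Q : ℕ → Prop}
    (h : ∀ p, p.Prime → p ≤ N → P p → Q p) : primeCount N P ≤ primeCount N Q := by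
  classical
  exact card_le_card (monotone_filter_right _ fun p hp ↦
    h p (Nat.prime_of_mem_primesLE hp) (Nat.le_of_mem_primesLE hp))

theorem primeCount_or_le (N : ℕ) (P Q : ℕ → Prop) :
    primeCount N (fun p ↦ P p ∨ Q p) ≤ primeCount N P + primeCount N Q := by
  classical
  simp only [primeCount, filter_or]
  exact card_union_le _ _

theorem roughPrimeFactors_subset_roughPrimes {w : ℝ} {n N : ℕ} (hn : n ≤ N) :
    roughPrimeFactors w n ⊆ roughPrimes w N := by
  intro q hq
  obtain ⟨hqn, hwq⟩ := mem_filter.1 hq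
  exact mem_roughPrimes.2
    ⟨(Nat.le_of_mem_primeFactors hqn).trans hn, Nat.prime_of_mem_primeFactors hqn, hwq⟩

theorem logSum_le_log_of_subset_primeFactors {T : Finset ℕ} {n : ℕ} (hT : T ⊆ n.primeFactors) :
    logSum T ≤ Real.log n := by
  rcases n.eq_zero_or_pos with rfl | hn
  · simp [subset_empty.1 (hT.trans_eq Nat.primeFactors_zero), logSum]
  have hprime : ∀ q ∈ T, q.Prime := fun q hq ↦ Nat.prime_of_mem_primeFactors (hT hq)
  have hle : ∏ q ∈ T, q ≤ n := Nat.le_of_dvd hn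
    ((prod_dvd_prod_of_subset _ _ _ hT).trans n.prod_primeFactors_dvd)
  rw [logSum_eq_log_prod hprime]
  exact Real.log_le_log (mod_cast prod_pos fun q hq ↦ (hprime q hq).pos) (mod_cast hle)

variable {C c ε : ℝ} {N : ℕ}

-- Markov's inequality for a sum over the moduli `d i` dividing `p - 1`.
theorem ShiftedPrimeBound.mul_primeCount_le (h : ShiftedPrimeBound C c N) {ι : Type*}
    {I : Finset ι} {d : ι → ℕ} {g : ι → ℝ} {κ : ℝ} {P : ℕ → Prop}
    (hd : ∀ i ∈ I, IsSieveModulus c N (d i)) (hg : ∀ i ∈ I, 0 ≤ g i)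
    (hP : ∀ p, p.Prime → p ≤ N → P p → κ ≤ ∑ i ∈ I with d i ∣ p - 1, g i) :
    κ * primeCount N P ≤ C * (N / Real.log N) * ∑ i ∈ I, g i / d i := by
  classical
  calc κ * primeCount N P = ∑ p ∈ Nat.primesLE N with P p, κ := by
        rw [sum_const, nsmul_eq_mul, mul_comm, primeCount]
    _ ≤ ∑ p ∈ Nat.primesLE N with P p, ∑ i ∈ I with d i ∣ p - 1, g i :=
        sum_le_sum fun p hp ↦ by
          obtain ⟨hpN, hPp⟩ := mem_filter.1 hp
          exact hP p (Nat.prime_of_mem_primesLE hpN) (Nat.le_of_mem_primesLE hpN) hPp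
    _ ≤ ∑ p ∈ Nat.primesLE N, ∑ i ∈ I with d i ∣ p - 1, g i :=
        sum_le_sum_of_subset_of_nonneg (filter_subset _ _) fun p _ _ ↦
          sum_nonneg fun i hi ↦ hg i (mem_of_mem_filter i hi)
    _ = ∑ i ∈ I, g i * #{p ∈ Nat.primesLE N | d i ∣ p - 1} := by
        simp_rw [sum_filter]
        rw [sum_comm]
        simp_rw [← sum_filter, sum_const, nsmul_eq_mul, mul_comm]
    _ ≤ ∑ i ∈ I, g i * (C * (N / Real.log N) / d i) :=
        sum_le_sum fun i hi ↦ mul_le_mul_of_nonneg_left (h _ (hd i hi)) (hg i hi)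
    _ = C * (N / Real.log N) * ∑ i ∈ I, g i / d i := by
        rw [mul_sum]
        exact sum_congr rfl fun i _ ↦ by ring

theorem isSieveModulus_of_prime {q : ℕ} (hq : q.Prime) (hqN : (q : ℝ) ≤ N ^ (1 - c)) :
    IsSieveModulus c N q := by
  refine ⟨hq.pos, hqN, ?_⟩
  rw [hq.primeFactors, sum_singleton, one_div]
  exact inv_anti₀ two_pos (mod_cast hq.two_le)

theorem mul_primeCount_smoothLog_le (hC : 0 ≤ C) (h : ShiftedPrimeBound C c N) (hN : 2 ≤ N)
    (hε : 0 ≤ ε) (hεc : ε ≤ 1 - c) (t : ℝ) :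
    t * primeCount N (fun p ↦ t ≤ smoothLog (N ^ ε) (p - 1)) ≤
      C * (N / Real.log N) * (ε * Real.log N + Real.log 4) := by
  have hN1 : (1 : ℝ) ≤ N := by exact_mod_cast one_le_two.trans hN
  have hw1 : (1 : ℝ) ≤ N ^ ε := Real.one_le_rpow hN1 hε
  have hmodulus : ∀ q ∈ Nat.primesLE ⌊(N : ℝ) ^ ε⌋₊, IsSieveModulus c N q := fun q hq ↦
    isSieveModulus_of_prime (Nat.prime_of_mem_primesLE hq) <|
      ((Nat.le_floor_iff (by positivity)).1 (Nat.le_of_mem_primesLE hq)).trans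
        (Real.rpow_le_rpow_of_exponent_le hN1 hεc)
  have hsmooth : ∀ p : ℕ, p.Prime → smoothLog (N ^ ε) (p - 1) =
      ∑ q ∈ Nat.primesLE ⌊(N : ℝ) ^ ε⌋₊ with q ∣ p - 1, Real.log q := fun p hp ↦ by
    rw [smoothLog, logSum]
    refine sum_congr ?_ fun _ _ ↦ rfl
    ext q
    have : p - 1 ≠ 0 := (Nat.sub_pos_of_lt hp.one_lt).ne'
    simp only [mem_filter, Nat.mem_primeFactors, Nat.mem_primesLE,
      Nat.le_floor_iff (zero_le_one.trans hw1)]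
    tauto
  refine (h.mul_primeCount_le hmodulus (fun q _ ↦ Real.log_natCast_nonneg q)
    fun p hp _ ht ↦ ht.trans_eq (hsmooth p hp)).trans ?_
  have hmertens := sum_primesLE_log_div_le ⌊(N : ℝ) ^ ε⌋₊
  have hfloor : Real.log ⌊(N : ℝ) ^ ε⌋₊ ≤ ε * Real.log N := by
    rw [← Real.log_rpow (by linarith)]
    exact Real.log_le_log (mod_cast Nat.floor_pos.2 hw1) (Nat.floor_le (by positivity))
  gcongr
  linarith

theorem sub_inv_le_card_filter_le {β K : ℝ} {n : ℕ} (hN : 1 < N) (hn : n ≤ N) (hβ : 0 < β)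
    {F : Finset ℕ} (hF : F ⊆ n.primeFactors) (hK : K ≤ #F) :
    K - 1 / β ≤ #{q ∈ F | ((q : ℕ) : ℝ) ≤ N ^ β} := by
  have hlogN : 0 < Real.log N := Real.log_pos (mod_cast hN)
  have hlarge : #{q ∈ F | ¬ ((q : ℕ) : ℝ) ≤ N ^ β} * (β * Real.log N) ≤ Real.log N := by
    rw [← Real.log_rpow (by positivity)]
    calc _ ≤ logSum {q ∈ F | ¬ ((q : ℕ) : ℝ) ≤ N ^ β} :=
          card_mul_log_le_logSum (by positivity) fun q hq ↦ (not_le.1 (mem_filter.1 hq).2).le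
      _ ≤ Real.log n := logSum_le_log_of_subset_primeFactors ((filter_subset _ _).trans hF)
      _ ≤ Real.log N := by
          rcases n.eq_zero_or_pos with rfl | hn0
          · simpa using hlogN.le
          · exact Real.log_le_log (mod_cast hn0) (mod_cast hn)
  have hcard : (#{q ∈ F | ((q : ℕ) : ℝ) ≤ N ^ β} : ℝ) + #{q ∈ F | ¬ ((q : ℕ) : ℝ) ≤ N ^ β} = #F :=
    mod_cast card_filter_add_card_filter_not _
  have : (#{q ∈ F | ¬ ((q : ℕ) : ℝ) ≤ N ^ β} : ℝ) ≤ 1 / β := by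
    rw [le_div_iff₀ hβ]
    exact le_of_mul_le_mul_right (by linarith) hlogN
  linarith

theorem pow_card_div_prod (y : ℝ) (T : Finset ℕ) :
    y ^ #T / (∏ q ∈ T, q : ℕ) = ∏ q ∈ T, y / q := by
  rw [prod_div_distrib, prod_const, Nat.cast_prod]

theorem mem_filter_prod_dvd_of_subset {𝒯 : Finset (Finset ℕ)} {T : Finset ℕ} {w : ℝ} {n : ℕ}
    (hT : T ∈ 𝒯) (hTn : T ⊆ roughPrimeFactors w n) : T ∈ {T ∈ 𝒯 | ∏ q ∈ T, q ∣ n} :=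
  mem_filter.2 ⟨hT, (prod_dvd_prod_of_subset _ _ _ (hTn.trans (filter_subset _ _))).trans
    n.prod_primeFactors_dvd⟩

-- The sum counts all subsets of the at least `K - 1 / β` prime factors in `(N ^ ε, N ^ β]`.
theorem rpow_mul_primeCount_many_le {β K : ℝ} (hC : 0 ≤ C) (h : ShiftedPrimeBound C c N)
    (hc : 0 ≤ c) (hc2 : c ≤ 1 / 2) (hN1 : 1 < N) (hε : 0 < ε) (hε1 : ε ≤ 1)
    (hN : 2 ≤ ε * (N : ℝ) ^ ε) (hβ : 0 < β) :
    2 ^ (K - 1 / β) * primeCount N (fun p ↦ K ≤ #(roughPrimeFactors (N ^ ε) (p - 1)) ∧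
        smoothLog (N ^ β) (p - 1) ≤ Real.log N / 2) ≤
      C * (N / Real.log N) * Real.exp (Real.log (1 / ε) + 3) := by
  have hlogN : 0 ≤ Real.log N := Real.log_natCast_nonneg N
  set 𝒯 := {T ∈ (roughPrimes (N ^ ε) N).powerset | logSum T ≤ Real.log N / 2}
  have hmodulus : ∀ T ∈ 𝒯, IsSieveModulus c N (∏ q ∈ T, q) := fun T hT ↦ by
    obtain ⟨hTP, hTlog⟩ := mem_filter.1 hT
    exact isSieveModulus_prod (mem_powerset.1 hTP) hc hε hN1 hN (hTlog.trans (by nlinarith))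
  refine (h.mul_primeCount_le (g := fun _ ↦ 1) hmodulus (fun _ _ ↦ zero_le_one) ?_).trans ?_
  · rintro p - hpN ⟨hK, hsmooth⟩
    have hpN : p - 1 ≤ N := p.pred_le.trans hpN
    set F := roughPrimeFactors (N ^ ε) (p - 1)
    have hF : F ⊆ (p - 1).primeFactors := filter_subset _ _
    calc (2 : ℝ) ^ (K - 1 / β) ≤ 2 ^ (#{q ∈ F | ((q : ℕ) : ℝ) ≤ N ^ β} : ℝ) :=
          Real.rpow_le_rpow_of_exponent_le one_le_two
            (sub_inv_le_card_filter_le hN1 hpN hβ hF hK)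
      _ = ∑ T ∈ {q ∈ F | ((q : ℕ) : ℝ) ≤ N ^ β}.powerset, 1 := by
          rw [sum_const, card_powerset, nsmul_one, Real.rpow_natCast, Nat.cast_pow, Nat.cast_two]
      _ ≤ _ := sum_le_sum_of_subset_of_nonneg (fun T hT ↦ ?_) fun _ _ _ ↦ zero_le_one
    have hTF : T ⊆ F := (mem_powerset.1 hT).trans (filter_subset _ _)
    have hTlog : logSum T ≤ smoothLog (N ^ β) (p - 1) :=
      logSum_mono ((mem_powerset.1 hT).trans (filter_subset_filter _ hF))
    exact mem_filter_prod_dvd_of_subset (mem_filter.2 ⟨mem_powerset.2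
      (hTF.trans (roughPrimeFactors_subset_roughPrimes hpN)), hTlog.trans hsmooth⟩) hTF
  · have hsum := sum_inv_roughPrimes_le hε hε1 (by nlinarith [Real.rpow_nonneg N.cast_nonneg ε])
    gcongr
    calc ∑ T ∈ 𝒯, 1 / ((∏ q ∈ T, q : ℕ) : ℝ)
        ≤ ∑ T ∈ (roughPrimes (N ^ ε) N).powerset, ∏ q ∈ T, 1 / (q : ℝ) := by
          simp_rw [← pow_card_div_prod, one_pow]
          exact sum_le_sum_of_subset_of_nonneg (filter_subset _ _) fun _ _ _ ↦ by positivity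
      _ ≤ Real.exp (1 * ∑ q ∈ roughPrimes (N ^ ε) N, (q : ℝ)⁻¹) :=
          sum_powerset_prod_div_le_exp _ zero_le_one
      _ ≤ Real.exp (Real.log (1 / ε) + 3) := by rwa [one_mul, Real.exp_le_exp]

theorem rpow_mul_primeCount_hasRoughDivisor_le {y k Y Z : ℝ} (hC : 0 ≤ C)
    (h : ShiftedPrimeBound C c N) (hc : 0 ≤ c) (hN1 : 1 < N) (hε : 0 < ε) (hε1 : ε ≤ 1)
    (hN : 2 ≤ ε * (N : ℝ) ^ ε) (hy : 0 < y) (hy1 : y ≤ 1) (hY : 0 < Y) (hYZ : Y ≤ Z)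
    (hZ : Z ≤ (1 - c) * Real.log N) :
    y ^ k * primeCount N (fun p ↦ HasRoughDivisor (N ^ ε) k Y Z (p - 1)) ≤
      C * (N / Real.log N) *
        (4 * y * (Z - Y + 1) / Y * Real.exp (y * (Real.log (1 / ε) + 3))) := by
  have : 0 ≤ Real.log N := Real.log_natCast_nonneg N
  set 𝒯 := {T ∈ (roughPrimes (N ^ ε) N).powerset | Y ≤ logSum T ∧ logSum T ≤ Z}
  have hmodulus : ∀ T ∈ 𝒯, IsSieveModulus c N (∏ q ∈ T, q) := fun T hT ↦ by
    obtain ⟨hTP, -, hTZ⟩ := mem_filter.1 hT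
    exact isSieveModulus_prod (mem_powerset.1 hTP) hc hε hN1 hN (hTZ.trans hZ)
  refine (h.mul_primeCount_le (g := fun T ↦ y ^ #T) hmodulus (fun _ _ ↦ by positivity) ?_).trans ?_
  · rintro p - hpN ⟨T, hTF, hTk, hYT, hTZ⟩
    have hTP := hTF.trans (roughPrimeFactors_subset_roughPrimes (p.pred_le.trans hpN))
    have hT : T ∈ 𝒯 := mem_filter.2 ⟨mem_powerset.2 hTP, hYT, hTZ⟩
    calc y ^ k ≤ y ^ (#T : ℝ) := Real.rpow_le_rpow_of_exponent_ge hy hy1 hTk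
      _ = y ^ #T := Real.rpow_natCast _ _
      _ ≤ _ := single_le_sum (f := fun T : Finset ℕ ↦ y ^ #T) (fun _ _ ↦ by positivity)
          (mem_filter_prod_dvd_of_subset hT hTF)
  · have hsum := sum_inv_roughPrimes_le hε hε1 (by nlinarith [Real.rpow_nonneg N.cast_nonneg ε])
    have hwidth : 0 ≤ 4 * y * (Z - Y + 1) / Y :=
      div_nonneg (mul_nonneg (by positivity) (by linarith)) hY.le
    gcongr
    calc ∑ T ∈ 𝒯, y ^ #T / ((∏ q ∈ T, q : ℕ) : ℝ) = ∑ T ∈ 𝒯, ∏ q ∈ T, y / (q : ℝ) :=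
          sum_congr rfl fun T _ ↦ pow_card_div_prod y T
      _ ≤ 4 * y * (Z - Y + 1) / Y * ∑ T ∈ (roughPrimes (N ^ ε) N).powerset, ∏ q ∈ T, y / (q : ℝ) :=
          sum_prod_div_logSum_mem_Icc_le (fun q hq ↦ (mem_roughPrimes.1 hq).2.1) hy.le hY hYZ
      _ ≤ 4 * y * (Z - Y + 1) / Y * Real.exp (y * (Real.log (1 / ε) + 3)) := by
          refine mul_le_mul_of_nonneg_left ?_ hwidth
          exact (sum_powerset_prod_div_le_exp _ hy.le).trans (by gcongr)

end Moments

/-! ### Complementary divisors -/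

section Divisors

/-- `n` is divisible by the square of an integer exceeding `w`. -/
def HasLargeSquareDivisor (w : ℝ) (n : ℕ) : Prop := ∃ s : ℕ, w < s ∧ s ^ 2 ∣ n

/-- `p - 1` has a divisor in the interval `[p ^ (δ - ε), p ^ (δ + ε)]`. -/
def HasDivisorNear (δ ε : ℝ) (p : ℕ) : Prop :=
  ∃ m : ℕ, m ∣ (p - 1) ∧ (p : ℝ) ^ (δ - ε) ≤ (m : ℝ) ∧ (m : ℝ) ≤ (p : ℝ) ^ (δ + ε)

theorem sum_Ioc_floor_inv_sq_le {w : ℝ} (hw : 1 ≤ w) (N : ℕ) :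
    ∑ s ∈ Ioc ⌊w⌋₊ N, ((s : ℝ) ^ 2)⁻¹ ≤ 2 / w := by
  have hfloor : (1 : ℝ) ≤ ⌊w⌋₊ := by exact_mod_cast Nat.floor_pos.2 hw
  rcases le_total ⌊w⌋₊ N with hN | hN
  · calc ∑ s ∈ Ioc ⌊w⌋₊ N, ((s : ℝ) ^ 2)⁻¹ ≤ (⌊w⌋₊ : ℝ)⁻¹ - (N : ℝ)⁻¹ :=
          sum_Ioc_inv_sq_le_sub (Nat.floor_pos.2 hw).ne' hN
      _ ≤ (⌊w⌋₊ : ℝ)⁻¹ := sub_le_self _ (by positivity)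
      _ ≤ 2 / w := by
          rw [inv_eq_one_div, div_le_div_iff₀ (by positivity) (by positivity)]
          linarith [Nat.lt_floor_add_one w]
  · rw [Ioc_eq_empty_of_le hN, sum_empty]
    positivity

theorem primeCount_hasLargeSquareDivisor_le {w : ℝ} (hw : 1 ≤ w) (N : ℕ) :
    (primeCount N (fun p ↦ HasLargeSquareDivisor w (p - 1)) : ℝ) ≤ 2 * N / w := by
  classical
  have hsubset : {p ∈ Nat.primesLE N | HasLargeSquareDivisor w (p - 1)} ⊆
      (Ioc ⌊w⌋₊ N).biUnion fun s ↦ {n ∈ Ioc 0 N | s ^ 2 ∣ n}.image (· + 1) := by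
    intro p hp
    obtain ⟨hpN, s, hws, hs⟩ := mem_filter.1 hp
    have hp1 := (Nat.prime_of_mem_primesLE hpN).one_lt
    have hpN := Nat.le_of_mem_primesLE hpN
    have hsp : s ≤ p - 1 := (Nat.le_self_pow two_ne_zero s).trans (Nat.le_of_dvd (by lia) hs)
    simp only [mem_biUnion, mem_image, mem_filter, mem_Ioc]
    exact ⟨s, ⟨(Nat.floor_lt (by linarith)).2 hws, by lia⟩, p - 1, ⟨by lia, hs⟩, by lia⟩
  calc (primeCount N (fun p ↦ HasLargeSquareDivisor w (p - 1)) : ℝ)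
      ≤ ∑ s ∈ Ioc ⌊w⌋₊ N, ((N / s ^ 2 : ℕ) : ℝ) := by
        rw [← Nat.cast_sum, Nat.cast_le]
        refine (card_le_card hsubset).trans (card_biUnion_le.trans (sum_le_sum fun s _ ↦ ?_))
        exact card_image_le.trans (Nat.Ioc_filter_dvd_card_eq_div N (s ^ 2)).le
    _ ≤ ∑ s ∈ Ioc ⌊w⌋₊ N, N * ((s : ℝ) ^ 2)⁻¹ := sum_le_sum fun s _ ↦ by
        rw [← div_eq_mul_inv]
        exact_mod_cast Nat.cast_div_le (α := ℝ) (m := N) (n := s ^ 2)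
    _ ≤ N * (2 / w) := by
        rw [← mul_sum]
        gcongr
        exact sum_Ioc_floor_inv_sq_le hw N
    _ = 2 * N / w := by ring

variable {w : ℝ} {m m' n : ℕ}

theorem not_hasLargeSquareDivisor_of_dvd (hn : ¬ HasLargeSquareDivisor w n) (hm : m ∣ n) :
    ¬ HasLargeSquareDivisor w m :=
  fun ⟨s, hws, hs⟩ ↦ hn ⟨s, hws, hs.trans hm⟩

theorem smoothLog_add_logSum_roughPrimeFactors (w : ℝ) (n : ℕ) :
    smoothLog w n + logSum (roughPrimeFactors w n) = logSum n.primeFactors := by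
  simp_rw [roughPrimeFactors, ← not_le]
  exact sum_filter_add_sum_filter_not n.primeFactors (fun q : ℕ ↦ (q : ℝ) ≤ w) _

theorem log_le_logSum_roughPrimeFactors_add (hm : m ≠ 0) (hsq : ¬ HasLargeSquareDivisor w m) :
    Real.log m ≤ logSum (roughPrimeFactors w m) + smoothLog w m + 2 * Real.log w := by
  obtain ⟨a, b, hab, ha⟩ := Nat.sq_mul_squarefree m
  have hb0 : b ≠ 0 := by
    rintro rfl
    exact hm (by simpa using hab.symm)
  have ha0 : a ≠ 0 := ha.ne_zero
  have hbw : (b : ℝ) ≤ w := not_lt.1 fun h ↦ hsq ⟨b, h, a, hab.symm⟩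
  have hlogb : Real.log b ≤ Real.log w := Real.log_le_log (by positivity) hbw
  have hloga : Real.log a ≤ logSum m.primeFactors := by
    rw [← Nat.prod_primeFactors_of_squarefree ha,
      ← logSum_eq_log_prod fun q ↦ Nat.prime_of_mem_primeFactors]
    exact logSum_mono (Nat.primeFactors_mono ⟨b ^ 2, by rw [← hab, mul_comm]⟩ hm)
  have hlog : Real.log m = 2 * Real.log b + Real.log a := by
    rw [← hab, Nat.cast_mul, Real.log_mul (by positivity) (by positivity), Nat.cast_pow,
      Real.log_pow, Nat.cast_two]
  linarith [smoothLog_add_logSum_roughPrimeFactors w m]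

theorem card_roughPrimeFactors_add_le (hmm : m * m' ≠ 0)
    (hsq : ¬ HasLargeSquareDivisor w (m * m')) :
    #(roughPrimeFactors w m) + #(roughPrimeFactors w m') ≤ #(roughPrimeFactors w (m * m')) := by
  have hdisjoint : Disjoint (roughPrimeFactors w m) (roughPrimeFactors w m') :=
    disjoint_left.2 fun q hq hq' ↦ hsq ⟨q, (mem_filter.1 hq).2, sq q ▸ mul_dvd_mul
      (Nat.dvd_of_mem_primeFactors (mem_filter.1 hq).1)
      (Nat.dvd_of_mem_primeFactors (mem_filter.1 hq').1)⟩
  rw [← card_union_of_disjoint hdisjoint]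
  exact card_le_card (union_subset
    (filter_subset_filter _ (Nat.primeFactors_mono (dvd_mul_right m m') hmm))
    (filter_subset_filter _ (Nat.primeFactors_mono (dvd_mul_left m' m) hmm)))

theorem hasRoughDivisor_of_dvd {k Y Z : ℝ} (hn : n ≠ 0) (hm : m ∣ n)
    (hsq : ¬ HasLargeSquareDivisor w n) (hk : #(roughPrimeFactors w m) ≤ k)
    (hY : Y + smoothLog w n + 2 * Real.log w ≤ Real.log m) (hZ : Real.log m ≤ Z) :
    HasRoughDivisor w k Y Z n := by
  have hfactors := Nat.primeFactors_mono hm hn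
  have hlog := log_le_logSum_roughPrimeFactors_add (ne_zero_of_dvd_ne_zero hn hm)
    (not_hasLargeSquareDivisor_of_dvd hsq hm)
  have hsmooth : smoothLog w m ≤ smoothLog w n := logSum_mono (filter_subset_filter _ hfactors)
  exact ⟨roughPrimeFactors w m, filter_subset_filter _ hfactors, hk, by linarith,
    (logSum_le_log_of_subset_primeFactors (filter_subset _ _)).trans hZ⟩

variable {δ ε : ℝ} {N p : ℕ}

theorem log_mem_Icc_of_near (hδ1 : δ ≤ 1) (hε : 0 ≤ ε) (hεδ : ε ≤ δ) (hm : m ≠ 0)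
    (hp : (N : ℝ) ^ (1 - ε) < p) (hpN : p ≤ N) (hm1 : (p : ℝ) ^ (δ - ε) ≤ m)
    (hm2 : (m : ℝ) ≤ p ^ (δ + ε)) :
    Real.log m ∈ Set.Icc ((δ - 2 * ε) * Real.log N) ((δ + ε) * Real.log N) := by
  have hp0 : (0 : ℝ) < p := (by positivity : (0 : ℝ) ≤ N ^ (1 - ε)).trans_lt hp
  have hN0 : (0 : ℝ) < N := hp0.trans_le (mod_cast hpN)
  have hlogN : 0 ≤ Real.log N := Real.log_natCast_nonneg N
  have hlogp : Real.log p ≤ Real.log N := Real.log_le_log hp0 (mod_cast hpN)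
  have hlogp' : (1 - ε) * Real.log N ≤ Real.log p := by
    rw [← Real.log_rpow hN0]
    exact Real.log_le_log (by positivity) hp.le
  constructor
  · calc (δ - 2 * ε) * Real.log N ≤ (δ - ε) * ((1 - ε) * Real.log N) := by
          nlinarith [mul_nonneg (mul_nonneg hε (by linarith : 0 ≤ 1 - δ + ε)) hlogN]
      _ ≤ (δ - ε) * Real.log p := mul_le_mul_of_nonneg_left hlogp' (sub_nonneg.2 hεδ)
      _ ≤ Real.log m := by
          rw [← Real.log_rpow hp0]
          exact Real.log_le_log (by positivity) hm1
  · calc Real.log m ≤ (δ + ε) * Real.log p := by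
          rw [← Real.log_rpow hp0]
          exact Real.log_le_log (by positivity) hm2
      _ ≤ (δ + ε) * Real.log N := mul_le_mul_of_nonneg_left hlogp (by linarith)

theorem log_pred_mem_Icc (hN : 2 ≤ (N : ℝ) ^ ε) (hp1 : 1 < p) (hpN : p ≤ N)
    (hNp : (N : ℝ) ^ (1 - ε) < p) :
    Real.log (p - 1 : ℕ) ∈ Set.Icc ((1 - 2 * ε) * Real.log N) (Real.log N) := by
  have hN0 : (0 : ℝ) < N := mod_cast (zero_lt_one.trans hp1).trans_le hpN
  refine ⟨?_, Real.log_le_log (mod_cast by lia) (mod_cast by lia)⟩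
  have hlog2 : Real.log 2 ≤ ε * Real.log N :=
    Real.log_rpow hN0 ε ▸ Real.log_le_log two_pos hN
  have hlogp : Real.log ((N : ℝ) ^ (1 - ε)) ≤ Real.log ((2 * (p - 1) : ℕ) : ℝ) :=
    Real.log_le_log (by positivity) (hNp.le.trans (mod_cast by lia))
  rw [Real.log_rpow hN0, Nat.cast_mul, Nat.cast_two,
    Real.log_mul two_ne_zero (mod_cast by lia)] at hlogp
  linarith

-- The rough primes of the two complementary divisors of `p - 1` are disjoint, so one of the two
-- divisors has at most `K / 2` of them.
theorem HasDivisorNear.hasRoughDivisor {A K : ℝ} (hnear : HasDivisorNear δ ε p) (hδ1 : δ ≤ 1)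
    (hε : 0 ≤ ε) (hεδ : ε ≤ δ) (hN : 2 ≤ (N : ℝ) ^ ε) (hp : p.Prime) (hpN : p ≤ N)
    (hNp : (N : ℝ) ^ (1 - ε) < p) (hsq : ¬ HasLargeSquareDivisor (N ^ ε) (p - 1))
    (hsmooth : smoothLog (N ^ ε) (p - 1) ≤ A * (ε * Real.log N))
    (hK : #(roughPrimeFactors (N ^ ε) (p - 1)) ≤ K) :
    ∃ γ ∈ ({δ, 1 - δ} : Finset ℝ), HasRoughDivisor (N ^ ε) (K / 2)
      ((γ - (A + 5) * ε) * Real.log N) ((γ + 2 * ε) * Real.log N) (p - 1) := by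
  obtain ⟨m, ⟨m', hmm⟩, hm1, hm2⟩ := hnear
  have hp1 := hp.one_lt
  have hmm0 : m * m' ≠ 0 := by lia
  obtain ⟨hm0, hm'0⟩ := mul_ne_zero_iff.1 hmm0
  obtain ⟨hmY, hmZ⟩ := log_mem_Icc_of_near hδ1 hε hεδ hm0 hNp hpN hm1 hm2
  obtain ⟨hle_log, hlog_le⟩ := log_pred_mem_Icc hN hp1 hpN hNp
  have hN0 : (0 : ℝ) < N := by exact_mod_cast (hp.pos.trans_le hpN)
  have hlogw : Real.log ((N : ℝ) ^ ε) = ε * Real.log N := Real.log_rpow hN0 ε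
  have hlog : Real.log m + Real.log m' = Real.log (p - 1 : ℕ) := by
    rw [hmm, Nat.cast_mul, Real.log_mul (mod_cast hm0) (mod_cast hm'0)]
  have hcard : (#(roughPrimeFactors (N ^ ε) m) : ℝ) + #(roughPrimeFactors (N ^ ε) m') ≤ K :=
    le_trans (mod_cast hmm ▸ card_roughPrimeFactors_add_le hmm0 (hmm ▸ hsq)) hK
  have hp0 : p - 1 ≠ 0 := by lia
  rcases le_total (#(roughPrimeFactors (N ^ ε) m) : ℝ) (K / 2) with hk | hk
  · refine ⟨δ, by simp, hasRoughDivisor_of_dvd hp0 ⟨m', hmm⟩ hsq hk ?_ ?_⟩ <;> nlinarith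
  · refine ⟨1 - δ, by simp, hasRoughDivisor_of_dvd hp0 ⟨m, by rw [hmm, mul_comm]⟩ hsq
      (by linarith) ?_ ?_⟩ <;> nlinarith

end Divisors

/-! ### Sparse families of primes -/

section Sparse

/-- For small `ε > 0`, at most `η * N / log N` primes `p ≤ N` have the property `E ε N` once `N` is
large. The property may depend on `N`, so `E ε N` need not describe one fixed set of primes. -/
def IsSparse (η : ℝ) (E : ℝ → ℕ → ℕ → Prop) : Prop :=
  ∀ᶠ ε in 𝓝[>] (0 : ℝ), ∀ᶠ N : ℕ in atTop, primeCount N (E ε N) ≤ η * (N / Real.log N)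

variable {η η' : ℝ} {E E' : ℝ → ℕ → ℕ → Prop}

theorem IsSparse.or (h : IsSparse η E) (h' : IsSparse η' E') :
    IsSparse (η + η') fun ε N p ↦ E ε N p ∨ E' ε N p := by
  filter_upwards [h, h'] with ε hε hε'
  filter_upwards [hε, hε'] with N hN hN'
  calc (primeCount N (fun p ↦ E ε N p ∨ E' ε N p) : ℝ)
      ≤ primeCount N (E ε N) + primeCount N (E' ε N) := mod_cast primeCount_or_le N _ _
    _ ≤ (η + η') * (N / Real.log N) := by linarith

theorem IsSparse.mono (h : IsSparse η E)
    (hE : ∀ᶠ ε in 𝓝[>] (0 : ℝ), ∀ᶠ N : ℕ in atTop,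
      ∀ p, p.Prime → p ≤ N → E' ε N p → E ε N p) : IsSparse η E' := by
  filter_upwards [h, hE] with ε hε hEε
  filter_upwards [hε, hEε] with N hN hEN
  exact (Nat.cast_le.2 (primeCount_mono hEN)).trans hN

theorem isSparse_of_tendsto_zero {g : ℝ → ℝ} (hη : 0 < η) (hg : Tendsto g (𝓝[>] 0) (𝓝 0))
    (h : ∀ᶠ ε in 𝓝[>] (0 : ℝ), ∀ᶠ N : ℕ in atTop,
      primeCount N (E ε N) ≤ g ε * (N / Real.log N)) : IsSparse η E := by
  filter_upwards [h, hg.eventually_le_const hη] with ε hε hgε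
  filter_upwards [hε] with N hN
  have := Real.log_natCast_nonneg N
  exact hN.trans (by gcongr)

theorem eventually_le_mul_rpow {a ε : ℝ} (ha : 0 < a) (hε : 0 < ε) (b : ℝ) :
    ∀ᶠ N : ℕ in atTop, b ≤ a * (N : ℝ) ^ ε :=
  (((tendsto_rpow_atTop hε).comp tendsto_natCast_atTop_atTop).const_mul_atTop
    ha).eventually_ge_atTop b

theorem eventually_le_mul_log {a : ℝ} (ha : 0 < a) (b : ℝ) :
    ∀ᶠ N : ℕ in atTop, b ≤ a * Real.log N :=
  ((Real.tendsto_log_atTop.comp tendsto_natCast_atTop_atTop).const_mul_atTop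
    ha).eventually_ge_atTop b

theorem eventually_div_rpow_le {ε : ℝ} (hε : 0 < ε) (hη : 0 < η) :
    ∀ᶠ N : ℕ in atTop, (N : ℝ) / N ^ ε ≤ η * (N / Real.log N) := by
  filter_upwards [tendsto_natCast_atTop_atTop.eventually
    ((isLittleO_log_rpow_atTop hε).bound hη), eventually_gt_atTop 1] with N hlog hN
  rw [Real.norm_of_nonneg (Real.log_natCast_nonneg N), Real.norm_of_nonneg (by positivity)] at hlog
  have : 0 < Real.log N := Real.log_pos (mod_cast hN)
  rw [← mul_div_assoc, div_le_div_iff₀ (by positivity) this]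
  nlinarith [mul_le_mul_of_nonneg_left hlog (Nat.cast_nonneg (α := ℝ) N)]

theorem isSparse_le_rpow (hη : 0 < η) : IsSparse η fun ε N p ↦ (p : ℝ) ≤ N ^ (1 - ε) := by
  classical
  filter_upwards [self_mem_nhdsWithin] with ε hε
  filter_upwards [eventually_div_rpow_le hε hη, eventually_gt_atTop 0] with N hN hN0
  calc (primeCount N (fun p ↦ (p : ℝ) ≤ N ^ (1 - ε)) : ℝ)
      ≤ #(Ioc 0 ⌊(N : ℝ) ^ (1 - ε)⌋₊) := by
        refine Nat.cast_le.2 (card_le_card fun p hp ↦ ?_)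
        obtain ⟨hpN, hp⟩ := mem_filter.1 hp
        exact mem_Ioc.2 ⟨(Nat.prime_of_mem_primesLE hpN).pos, Nat.le_floor hp⟩
    _ ≤ (N : ℝ) ^ (1 - ε) := by
        rw [Nat.card_Ioc, Nat.sub_zero]
        exact Nat.floor_le (by positivity)
    _ = N / N ^ ε := by rw [Real.rpow_sub (mod_cast hN0), Real.rpow_one]
    _ ≤ η * (N / Real.log N) := hN

theorem isSparse_hasLargeSquareDivisor (hη : 0 < η) :
    IsSparse η fun ε N p ↦ HasLargeSquareDivisor (N ^ ε) (p - 1) := by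
  filter_upwards [self_mem_nhdsWithin] with ε (hε : 0 < ε)
  filter_upwards [eventually_div_rpow_le hε (half_pos hη), eventually_ge_atTop 1] with N hN hN1
  have hw : (1 : ℝ) ≤ N ^ ε := Real.one_le_rpow (mod_cast hN1) hε.le
  linarith [primeCount_hasLargeSquareDivisor_le hw N, mul_div_assoc 2 (N : ℝ) (N ^ ε)]

variable {C c : ℝ}

theorem primeCount_smoothLog_le {N : ℕ} {A ε : ℝ} (hC : 0 ≤ C) (h : ShiftedPrimeBound C c N)
    (hN : 2 ≤ N) (hε : 0 ≤ ε) (hεc : ε ≤ 1 - c) (hA : 0 < A) (hlog : 1 ≤ ε * Real.log N) :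
    primeCount N (fun p ↦ A * (ε * Real.log N) ≤ smoothLog (N ^ ε) (p - 1)) ≤
      3 * C / A * (N / Real.log N) := by
  have hmoment := mul_primeCount_smoothLog_le hC h hN hε hεc (A * (ε * Real.log N))
  have hlog4 : Real.log 4 ≤ 2 * (ε * Real.log N) := by
    rw [show (4 : ℝ) = 2 ^ 2 by norm_num, Real.log_pow]
    push_cast
    linarith [Real.log_two_lt_d9]
  have : 0 ≤ C * (N / Real.log N) :=
    mul_nonneg hC (div_nonneg N.cast_nonneg (Real.log_natCast_nonneg N))
  have hpos : 0 < A * (ε * Real.log N) := by positivity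
  refine le_of_mul_le_mul_left (hmoment.trans ?_) hpos
  calc C * (N / Real.log N) * (ε * Real.log N + Real.log 4)
      ≤ C * (N / Real.log N) * (3 * (ε * Real.log N)) := by gcongr; linarith
    _ = A * (ε * Real.log N) * (3 * C / A * (N / Real.log N)) := by field_simp

theorem exists_isSparse_smoothLog (hC : 0 < C) (h : ∀ᶠ N in atTop, ShiftedPrimeBound C c N)
    (hc : c < 1) (hη : 0 < η) :
    ∃ A : ℝ, 0 < A ∧ IsSparse η fun ε N p ↦ A * (ε * Real.log N) ≤ smoothLog (N ^ ε) (p - 1) := by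
  refine ⟨3 * C / η, by positivity, ?_⟩
  filter_upwards [Ioc_mem_nhdsGT (sub_pos.2 hc)] with ε hε
  filter_upwards [h, eventually_ge_atTop 2, eventually_le_mul_log hε.1 1] with N hN hN2 hlog
  refine (primeCount_smoothLog_le hC.le hN hN2 hε.1.le hε.2 (by positivity) hlog).trans_eq ?_
  field_simp

theorem exists_isSparse_smoothLog_half (hC : 0 < C) (h : ∀ᶠ N in atTop, ShiftedPrimeBound C c N)
    (hc : c < 1) (hη : 0 < η) :
    ∃ β : ℝ, 0 < β ∧ IsSparse η fun _ N p ↦ Real.log N / 2 ≤ smoothLog (N ^ β) (p - 1) := by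
  have := sub_pos.2 hc
  set β := min (1 - c) (η / (6 * C))
  have hβ : 0 < β := by positivity
  refine ⟨β, hβ, Eventually.of_forall fun _ ↦ ?_⟩
  filter_upwards [h, eventually_ge_atTop 2, eventually_le_mul_log hβ 1] with N hN hN2 hlog
  have hcount := primeCount_smoothLog_le hC.le hN hN2 hβ.le (min_le_left _ _)
    (A := 1 / (2 * β)) (by positivity) hlog
  have hhalf : 1 / (2 * β) * (β * Real.log N) = Real.log N / 2 := by field_simp
  rw [hhalf] at hcount
  have := Real.log_natCast_nonneg N
  refine hcount.trans (mul_le_mul_of_nonneg_right ?_ (by positivity))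
  calc 3 * C / (1 / (2 * β)) = 6 * C * β := by field_simp; norm_num
    _ ≤ 6 * C * (η / (6 * C)) := by gcongr; exact min_le_right _ _
    _ = η := by field_simp

theorem tendsto_exp_sub_mul_log_inv {κ : ℝ} (b : ℝ) (hκ : 0 < κ) :
    Tendsto (fun ε : ℝ ↦ Real.exp (b - κ * Real.log (1 / ε))) (𝓝[>] 0) (𝓝 0) := by
  refine Real.tendsto_exp_atBot.comp ((tendsto_atBot_add_const_left _ b
    (Real.tendsto_log_nhdsGT_zero.const_mul_atBot hκ)).congr fun ε ↦ ?_)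
  rw [one_div, Real.log_inv]
  ring

-- The exponent of `1 / ε` in the bound is `1 - (3 / 2) * log 2 < 0`.
theorem isSparse_card_roughPrimeFactors {β : ℝ} (hC : 0 ≤ C)
    (h : ∀ᶠ N in atTop, ShiftedPrimeBound C c N) (hc : 0 ≤ c) (hc2 : c ≤ 1 / 2) (hβ : 0 < β)
    (hη : 0 < η) :
    IsSparse η fun ε N p ↦ 3 / 2 * Real.log (1 / ε) ≤ #(roughPrimeFactors (N ^ ε) (p - 1)) ∧
      smoothLog (N ^ β) (p - 1) ≤ Real.log N / 2 := by
  have hlim := (tendsto_exp_sub_mul_log_inv (κ := 3 / 2 * Real.log 2 - 1)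
    (3 + Real.log 2 * (1 / β)) (by linarith [Real.log_two_gt_d9])).const_mul C
  rw [mul_zero] at hlim
  refine isSparse_of_tendsto_zero hη hlim ?_
  filter_upwards [Ioc_mem_nhdsGT one_pos] with ε hε
  filter_upwards [h, eventually_gt_atTop 1, eventually_le_mul_rpow hε.1 hε.1 2] with N hN hN1 hNε
  refine le_of_mul_le_mul_left ((rpow_mul_primeCount_many_le (K := 3 / 2 * Real.log (1 / ε)) hC hN
    hc hc2 hN1 hε.1 hε.2 hNε hβ).trans_eq ?_) (Real.rpow_pos_of_pos two_pos _)
  have hexp : Real.exp (Real.log (1 / ε) + 3) = 2 ^ (3 / 2 * Real.log (1 / ε) - 1 / β) *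
      Real.exp (3 + Real.log 2 * (1 / β) - (3 / 2 * Real.log 2 - 1) * Real.log (1 / ε)) := by
    rw [Real.rpow_def_of_pos two_pos, ← Real.exp_add]
    ring_nf
  rw [hexp]
  ring

theorem primeCount_hasRoughDivisor_near_le {N : ℕ} {A γ ε k : ℝ} (hC : 0 ≤ C)
    (h : ShiftedPrimeBound C c N) (hc : 0 < c) (hA : 0 ≤ A) (hcγ : 2 * c ≤ γ)
    (hγc : γ ≤ 1 - 2 * c) (hε : 0 < ε) (hε1 : ε ≤ 1) (hεc : ε * (A + 5) ≤ c) (hN1 : 1 < N)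
    (hN : 2 ≤ ε * (N : ℝ) ^ ε) (hlogN : 1 ≤ ε * Real.log N) :
    (3 / 4) ^ k * primeCount N (fun p ↦ HasRoughDivisor (N ^ ε) k
        ((γ - (A + 5) * ε) * Real.log N) ((γ + 2 * ε) * Real.log N) (p - 1)) ≤
      C * (N / Real.log N) *
        (3 * (A + 8) / c * (ε * Real.exp (3 / 4 * (Real.log (1 / ε) + 3)))) := by
  have hX : 0 < Real.log N := Real.log_pos (mod_cast hN1)
  have hAε : 0 ≤ A * ε := mul_nonneg hA hε.le
  set Y := (γ - (A + 5) * ε) * Real.log N with hYdef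
  set Z := (γ + 2 * ε) * Real.log N with hZdef
  have hY : c * Real.log N ≤ Y := mul_le_mul_of_nonneg_right (by linarith) hX.le
  have hYZ : Y ≤ Z := mul_le_mul_of_nonneg_right (by linarith) hX.le
  have hZ : Z ≤ (1 - c) * Real.log N := mul_le_mul_of_nonneg_right (by linarith) hX.le
  have hwidth : Z - Y + 1 ≤ (A + 8) * (ε * Real.log N) := by rw [hYdef, hZdef]; linarith
  refine (rpow_mul_primeCount_hasRoughDivisor_le hC h hc.le hN1 hε hε1 hN (by norm_num)
    (by norm_num) ((by positivity : 0 < c * Real.log N).trans_le hY) hYZ hZ).trans ?_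
  calc C * (N / Real.log N) * (4 * (3 / 4) * (Z - Y + 1) / Y *
        Real.exp (3 / 4 * (Real.log (1 / ε) + 3)))
      ≤ C * (N / Real.log N) * (4 * (3 / 4) * ((A + 8) * (ε * Real.log N)) / (c * Real.log N) *
        Real.exp (3 / 4 * (Real.log (1 / ε) + 3))) := by gcongr
    _ = C * (N / Real.log N) *
        (3 * (A + 8) / c * (ε * Real.exp (3 / 4 * (Real.log (1 / ε) + 3)))) := by field_simp

-- The exponent of `1 / ε` in the bound is `-1 + 3 / 4 + (3 / 4) * log (4 / 3) < 0`.
theorem isSparse_hasRoughDivisor {A γ : ℝ} (hC : 0 ≤ C)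
    (h : ∀ᶠ N in atTop, ShiftedPrimeBound C c N) (hc : 0 < c) (hA : 0 ≤ A) (hcγ : 2 * c ≤ γ)
    (hγc : γ ≤ 1 - 2 * c) (hη : 0 < η) :
    IsSparse η fun ε N p ↦ HasRoughDivisor (N ^ ε) (3 / 2 * Real.log (1 / ε) / 2)
      ((γ - (A + 5) * ε) * Real.log N) ((γ + 2 * ε) * Real.log N) (p - 1) := by
  have hlog := Real.log_lt_sub_one_of_pos (x := 4 / 3) (by norm_num) (by norm_num)
  have hlim := (tendsto_exp_sub_mul_log_inv (κ := 1 / 4 - 3 / 4 * Real.log (4 / 3))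
    (9 / 4) (by linarith)).const_mul (C * (3 * (A + 8) / c))
  rw [mul_zero] at hlim
  refine isSparse_of_tendsto_zero hη hlim ?_
  filter_upwards [Ioc_mem_nhdsGT (show 0 < min 1 (c / (A + 5)) by positivity)] with ε ⟨hε, hεmin⟩
  obtain ⟨hε1, hεc⟩ := le_min_iff.1 hεmin
  rw [le_div_iff₀ (by positivity)] at hεc
  filter_upwards [h, eventually_gt_atTop 1, eventually_le_mul_rpow hε hε 2,
    eventually_le_mul_log hε 1] with N hN hN1 hNε hlogN
  refine le_of_mul_le_mul_left ((primeCount_hasRoughDivisor_near_le hC hN hc hA hcγ hγc hε hε1 hεc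
    hN1 hNε hlogN).trans_eq ?_) (Real.rpow_pos_of_pos (by norm_num) _)
  have hexp : ε * Real.exp (3 / 4 * (Real.log (1 / ε) + 3)) =
      (3 / 4) ^ (3 / 2 * Real.log (1 / ε) / 2) *
        Real.exp (9 / 4 - (1 / 4 - 3 / 4 * Real.log (4 / 3)) * Real.log (1 / ε)) := by
    nth_rw 1 [← Real.exp_log hε]
    rw [Real.rpow_def_of_pos (by norm_num), ← Real.exp_add, ← Real.exp_add,
      ← inv_div (4 : ℝ) 3, Real.log_inv, one_div, Real.log_inv]
    ring_nf
  rw [hexp]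
  ring

theorem isSparse_hasDivisorNear {δ : ℝ} (hδ0 : 0 < δ) (hδ1 : δ < 1) (hη : 0 < η) :
    IsSparse η fun ε _ p ↦ HasDivisorNear δ ε p := by
  have hδ1' : 0 < 1 - δ := sub_pos.2 hδ1
  set c := min δ (1 - δ) / 2 with hc_def
  have hc : 0 < c := by positivity
  have hcδ : 2 * c ≤ δ := by linarith [min_le_left δ (1 - δ)]
  have hcδ' : 2 * c ≤ 1 - δ := by linarith [min_le_right δ (1 - δ)]
  obtain ⟨C, hC, h⟩ := exists_shiftedPrimeBound hc
  have hη7 : 0 < η / 7 := by positivity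
  obtain ⟨A, hA, hsmooth⟩ := exists_isSparse_smoothLog hC h (by linarith) hη7
  obtain ⟨β, hβ, hhalf⟩ := exists_isSparse_smoothLog_half hC h (by linarith) hη7
  have hcard := isSparse_card_roughPrimeFactors hC.le h hc.le (by linarith) hβ hη7
  have hδ := isSparse_hasRoughDivisor hC.le h hc hA.le hcδ (by linarith) hη7
  have hδ' := isSparse_hasRoughDivisor hC.le h hc hA.le hcδ' (by linarith) hη7
  have hunion := (isSparse_le_rpow hη7).or <| (isSparse_hasLargeSquareDivisor hη7).or <|
    hsmooth.or <| hhalf.or <| hcard.or <| hδ.or hδ'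
  rw [show η / 7 + (η / 7 + (η / 7 + (η / 7 + (η / 7 + (η / 7 + η / 7))))) = η by ring] at hunion
  refine hunion.mono ?_
  filter_upwards [Ioc_mem_nhdsGT hδ0] with ε ⟨hε, hεδ⟩
  filter_upwards [eventually_le_mul_rpow one_pos hε 2] with N hN p hp hpN hnear
  by_contra! hgood
  obtain ⟨hlarge, hsq, hsmooth, hhalf, hcard, hδ, hδ'⟩ := hgood
  have hK := le_of_not_ge fun hK ↦ (hcard hK).not_ge hhalf.le
  obtain ⟨γ, hγ, hγdiv⟩ := hnear.hasRoughDivisor hδ1.le hε.le hεδ (by simpa using hN) hp hpN hlarge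
    hsq hsmooth.le hK
  rcases mem_insert.1 hγ with rfl | hγ
  · exact hδ hγdiv
  · exact hδ' (mem_singleton.1 hγ ▸ hγdiv)

end Sparse

/-! ### Relative lower density -/

section Density

theorem eventually_div_log_le_primeCounting :
    ∀ᶠ N : ℕ in atTop, (N : ℝ) / Real.log N ≤ 2 * Nat.primeCounting N := by
  have hsmall : ∀ᶠ N : ℕ in atTop, ‖Real.log N‖ ≤ 1 / 100 * ‖(N : ℝ)‖ :=
    tendsto_natCast_atTop_atTop.eventually (Real.isLittleO_log_id_atTop.bound (by norm_num))
  filter_upwards [hsmall, eventually_ge_atTop 100] with N hN hN100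
  have hN' : (100 : ℝ) ≤ N := by exact_mod_cast hN100
  rw [Real.norm_of_nonneg (Real.log_natCast_nonneg N), Real.norm_of_nonneg N.cast_nonneg] at hN
  have hlogN : 0 < Real.log N := Real.log_pos (by linarith)
  have hsucc : Real.log (N + 1) ≤ Real.log 2 + Real.log N := by
    rw [← Real.log_mul two_ne_zero (by linarith)]
    exact Real.log_le_log (by linarith) (by linarith)
  have hchebyshev := Chebyshev.pi_ge (n := N)
  rw [div_le_iff₀ hlogN] at hchebyshev ⊢
  nlinarith [Real.log_two_gt_d9, Real.log_two_lt_d9]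

theorem natCard_not_eq_sub_primeCount (P : ℕ → Prop) (N : ℕ) :
    (Nat.card {p : ℕ | p.Prime ∧ p ≤ N ∧ ¬ P p} : ℝ) = Nat.primeCounting N - primeCount N P := by
  classical
  have hset : {p : ℕ | p.Prime ∧ p ≤ N ∧ ¬ P p} = ({p ∈ Nat.primesLE N | ¬ P p} : Finset ℕ) := by
    ext p
    simp only [Set.mem_ofPred_eq, mem_coe, mem_filter, Nat.mem_primesLE]
    tauto
  rw [hset, Nat.card_coe_set_eq, Set.ncard_coe_finset, eq_sub_iff_add_eq', primeCount,
    ← Nat.primesLE_card_eq_primeCounting]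
  exact_mod_cast card_filter_add_card_filter_not P

theorem tendsto_liminf_of_eventually_le {ι : Type*} {l : Filter ι} {u : ι → ℕ → ℝ} {a : ℝ}
    (hle : ∀ i n, u i n ≤ a) (hge : ∀ b < a, ∀ᶠ i in l, ∀ᶠ n in atTop, b ≤ u i n) :
    Tendsto (fun i ↦ liminf (u i) atTop) l (𝓝 a) := by
  have hbdd (i) : IsBoundedUnder (· ≤ ·) atTop (u i) := isBoundedUnder_of ⟨a, hle i⟩
  refine tendsto_order.2 ⟨fun b hb ↦ ?_, fun b hb ↦ ?_⟩
  · obtain ⟨b', hbb', hb'a⟩ := exists_between hb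
    filter_upwards [hge b' hb'a] with i hi
    exact hbb'.trans_le (le_liminf_of_le (hbdd i).isCoboundedUnder_ge hi)
  · obtain ⟨b', hb'⟩ := exists_lt a
    filter_upwards [hge b' hb'] with i hi
    refine (liminf_le_of_le ⟨b', hi⟩ fun b'' hb'' ↦ ?_).trans_lt hb
    obtain ⟨n, hn⟩ := Eventually.exists hb''
    exact hn.trans (hle i n)

theorem IsSparse.eventually_le_div_primeCounting {η : ℝ} {E : ℝ → ℕ → ℕ → Prop} (hη : 0 ≤ η)
    (h : IsSparse η E) : ∀ᶠ ε in 𝓝[>] (0 : ℝ), ∀ᶠ N : ℕ in atTop,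
      1 - 2 * η ≤ (Nat.primeCounting N - primeCount N (E ε N)) / (Nat.primeCounting N : ℝ) := by
  filter_upwards [h] with ε hε
  filter_upwards [hε, eventually_div_log_le_primeCounting, eventually_gt_atTop 1] with N hN hπ hN1
  have : 0 < Real.log N := Real.log_pos (mod_cast hN1)
  have hpos : 0 < (N : ℝ) / Real.log N := by positivity
  rw [le_div_iff₀ (by linarith)]
  nlinarith

end Density

end ShiftedPrime

/-- Fix `δ ∈ (0,1)`. For `ε > 0`, let `d(ε)` be the lower density, relative to the
primes, of the set of primes `p` such that `p - 1` has no divisor in the interval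
`[p^(δ-ε), p^(δ+ε)]`. Then `d(ε) → 1` as `ε → 0⁺`. -/
theorem stmt_14 (δ : ℝ) (hδ : δ ∈ Set.Ioo (0 : ℝ) 1) :
    Tendsto (fun ε : ℝ =>
        liminf (fun x : ℕ =>
          ((Nat.card {p : ℕ | Nat.Prime p ∧ p ≤ x ∧
              ¬ ∃ m : ℕ, m ∣ (p - 1) ∧
                (p : ℝ) ^ (δ - ε) ≤ (m : ℝ) ∧ (m : ℝ) ≤ (p : ℝ) ^ (δ + ε)} : ℝ)
            / (Nat.primeCounting x : ℝ))) atTop)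
      (nhdsWithin 0 (Set.Ioi 0)) (nhds 1) := by
  have hcard (ε : ℝ) :=
    ShiftedPrime.natCard_not_eq_sub_primeCount (ShiftedPrime.HasDivisorNear δ ε)
  simp only [ShiftedPrime.HasDivisorNear] at hcard
  simp only [hcard]
  refine ShiftedPrime.tendsto_liminf_of_eventually_le
    (fun ε x ↦ div_le_one_of_le₀ (sub_le_self _ (Nat.cast_nonneg _)) (Nat.cast_nonneg _))
    fun b hb ↦ ?_
  have hη : 0 < (1 - b) / 2 := half_pos (sub_pos.2 hb)
  filter_upwards [(ShiftedPrime.isSparse_hasDivisorNear hδ.1 hδ.2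
    hη).eventually_le_div_primeCounting hη.le] with ε hε
  filter_upwards [hε] with x hx
  exact (by ring : b = 1 - 2 * ((1 - b) / 2)).trans_le hx
end

section
/- Let a_1,…,a_k be nonzero, multiplicatively independent integers. Then there is a positive constant C (depending on a_1,…,a_k) such that, for every real y ≥ 1, the number of primes p not dividing a_1⋯a_k for which ℓ_{a_1,…,a_k}(p) ≤ y is at most C·y^{1+1/k}. -/
/-!
If the residues of `a₁, …, a_k` generate a group of order less than `(T + 1) ^ k` modulo `p`, then
two of the `(T + 1) ^ k` monomials `∏ aᵢ ^ eᵢ` with `0 ≤ eᵢ ≤ T` coincide modulo `p`, so the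
difference `d ≠ 0` of their exponents satisfies `∏ aᵢ ^ dᵢ ≡ 1`. Clearing denominators, `p` divides
one of the integers `∏ aᵢ ^ dᵢ⁺ - ∏ aᵢ ^ dᵢ⁻` with `d ≠ 0` and `|dᵢ| ≤ T`. By multiplicative
independence none of them vanishes, so `p` is a prime factor of their product, whose logarithm
is `O(T ^ (k + 1))` for `T ≥ 1`. A nonzero integer has at most logarithmically many prime
factors, and `T = ⌊y ^ (1 / k)⌋` gives the bound.
-/

namespace Matthews

variable {ι : Type*} [Fintype ι]

section LatticeBinomial

/-- The value at `a` of the binomial `x ^ d⁺ - x ^ d⁻`, the denominator-free form of the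
multiplicative relation `∏ i, x i ^ d i = 1` with exponent vector `d`. -/
def latticeBinomial {R : Type*} [CommRing R] (a : ι → R) (d : ι → ℤ) : R :=
  ∏ i, a i ^ (d i).toNat - ∏ i, a i ^ (-d i).toNat

lemma map_latticeBinomial {R S : Type*} [CommRing R] [CommRing S] (f : R →+* S) (a : ι → R)
    (d : ι → ℤ) : f (latticeBinomial a d) = latticeBinomial (fun i => f (a i)) d := by
  simp [latticeBinomial]

lemma latticeBinomial_eq_zero_iff {K : Type*} [Field K] {a : ι → K} (ha : ∀ i, a i ≠ 0)
    (d : ι → ℤ) : latticeBinomial a d = 0 ↔ ∏ i, a i ^ d i = 1 := by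
  have zpow_eq_div (i : ι) : a i ^ d i = a i ^ (d i).toNat / a i ^ (-d i).toNat := by
    rw [← zpow_natCast, ← zpow_natCast, ← zpow_sub₀ (ha i), Int.toNat_sub_toNat_neg]
  have denominator_ne_zero : ∏ i, a i ^ (-d i).toNat ≠ 0 :=
    Finset.prod_ne_zero_iff.mpr fun i _ => pow_ne_zero _ (ha i)
  rw [latticeBinomial, sub_eq_zero, Finset.prod_congr rfl fun i _ => zpow_eq_div i,
    Finset.prod_div_distrib, div_eq_one_iff_eq denominator_ne_zero]

section LinearOrderedRing

variable {R : Type*} [CommRing R] [LinearOrder R] [IsStrictOrderedRing R] {a : ι → R} {T : ℕ}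

lemma abs_prod_pow_le (ha : ∀ i, 1 ≤ |a i|) {n : ι → ℕ} (hn : ∀ i, n i ≤ T) :
    |∏ i, a i ^ n i| ≤ (∏ i, |a i|) ^ T := by
  simp only [Finset.abs_prod, abs_pow, ← Finset.prod_pow]
  exact Finset.prod_le_prod (fun i _ => by positivity) fun i _ => pow_le_pow_right₀ (ha i) (hn i)

lemma abs_latticeBinomial_le (ha : ∀ i, 1 ≤ |a i|) {d : ι → ℤ} (hd : ∀ i, |d i| ≤ T) :
    |latticeBinomial a d| ≤ 2 * (∏ i, |a i|) ^ T := by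
  have pos_le (i : ι) : (d i).toNat ≤ T := by grind
  have neg_le (i : ι) : (-d i).toNat ≤ T := by grind
  calc |latticeBinomial a d|
      ≤ |∏ i, a i ^ (d i).toNat| + |∏ i, a i ^ (-d i).toNat| := abs_sub _ _
    _ ≤ (∏ i, |a i|) ^ T + (∏ i, |a i|) ^ T :=
        add_le_add (abs_prod_pow_le ha pos_le) (abs_prod_pow_le ha neg_le)
    _ = 2 * (∏ i, |a i|) ^ T := (two_mul _).symm

end LinearOrderedRing

lemma natAbs_latticeBinomial_le {a : ι → ℤ} (ha : ∀ i, a i ≠ 0) {T : ℕ} {d : ι → ℤ}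
    (hd : ∀ i, |d i| ≤ T) :
    (latticeBinomial a d).natAbs ≤ 2 ^ ((∏ i, (a i).natAbs) * T + 1) := by
  have natAbs_le : (latticeBinomial a d).natAbs ≤ 2 * (∏ i, (a i).natAbs) ^ T := by
    zify
    exact abs_latticeBinomial_le (fun i => Int.one_le_abs (ha i)) hd
  calc (latticeBinomial a d).natAbs
      ≤ 2 * (∏ i, (a i).natAbs) ^ T := natAbs_le
    _ ≤ 2 * (2 ^ ∏ i, (a i).natAbs) ^ T := by gcongr; exact Nat.lt_two_pow_self.le
    _ = 2 ^ ((∏ i, (a i).natAbs) * T + 1) := by rw [← pow_mul, pow_succ']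

end LatticeBinomial

section ExponentBox

variable [DecidableEq ι]

variable (ι) in
/-- The nonzero exponent vectors with entries in `[-T, T]`: the differences of two distinct
vectors with entries in `[0, T]`. -/
noncomputable def exponentBox (T : ℕ) : Finset (ι → ℤ) :=
  (Fintype.piFinset fun _ => Finset.Icc (-(T : ℤ)) T).erase 0

lemma mem_exponentBox {T : ℕ} {d : ι → ℤ} : d ∈ exponentBox ι T ↔ d ≠ 0 ∧ ∀ i, |d i| ≤ T := by
  simp [exponentBox, abs_le]

lemma card_exponentBox_le (T : ℕ) : (exponentBox ι T).card ≤ (2 * T + 1) ^ Fintype.card ι := by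
  have card_Icc : (Finset.Icc (-(T : ℤ)) T).card = 2 * T + 1 := by
    rw [Int.card_Icc]
    lia
  refine Finset.card_erase_le.trans_eq ?_
  simp only [Fintype.card_piFinset, card_Icc, Finset.prod_const, Finset.card_univ]

lemma exists_mem_exponentBox_prod_zpow_eq_one {G₀ : Type*} [CommGroupWithZero G₀] {a : ι → G₀}
    (ha : ∀ i, a i ≠ 0) {S : Submonoid G₀} [Finite S] (haS : ∀ i, a i ∈ S) {T : ℕ}
    (hcard : Nat.card S < (T + 1) ^ Fintype.card ι) :
    ∃ d ∈ exponentBox ι T, ∏ i, a i ^ d i = 1 := by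
  let monomial (e : ι → Fin (T + 1)) : S :=
    ⟨∏ i, a i ^ (e i : ℕ), S.prod_mem fun i _ => S.pow_mem (haS i) _⟩
  have not_injective : ¬ Function.Injective monomial := fun h =>
    hcard.not_ge (by simpa using Nat.card_le_card_of_injective monomial h)
  obtain ⟨e, f, monomial_eq, e_ne_f⟩ := Function.not_injective_iff.mp not_injective
  refine ⟨fun i => (e i : ℤ) - f i, mem_exponentBox.mpr ⟨fun h => e_ne_f ?_, fun i => ?_⟩, ?_⟩
  · ext i
    simpa [sub_eq_zero] using congrFun h i
  · grind
  · have prod_ne_zero : ∏ i, a i ^ (f i : ℕ) ≠ 0 :=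
      Finset.prod_ne_zero_iff.mpr fun i _ => pow_ne_zero _ (ha i)
    have prod_eq : ∏ i, a i ^ (e i : ℕ) = ∏ i, a i ^ (f i : ℕ) := congrArg Subtype.val monomial_eq
    simp only [zpow_sub₀ (ha _), zpow_natCast, Finset.prod_div_distrib]
    rw [prod_eq, div_self prod_ne_zero]

end ExponentBox

section RelationProduct

lemma card_primeFactors_le_of_le_two_pow {n m : ℕ} (h : n ≤ 2 ^ m) :
    n.primeFactors.card ≤ m := by
  obtain rfl | hn := eq_or_ne n 0
  · simp
  refine (Nat.pow_le_pow_iff_right one_lt_two).mp ?_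
  calc 2 ^ n.primeFactors.card
      ≤ ∏ p ∈ n.primeFactors, p :=
        Finset.pow_card_le_prod _ _ _ fun p hp => (Nat.prime_of_mem_primeFactors hp).two_le
    _ ≤ n := Nat.le_of_dvd (Nat.pos_of_ne_zero hn) (Nat.prod_primeFactors_dvd n)
    _ ≤ 2 ^ m := h

variable [DecidableEq ι] {a : ι → ℤ} {T : ℕ}

/-- The integer that collects all multiplicative relations between the `a i` with exponents bounded
by `T`: the primes modulo which the `a i` generate a small group all divide it. -/
noncomputable def relationProduct (a : ι → ℤ) (T : ℕ) : ℤ :=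
  ∏ d ∈ exponentBox ι T, latticeBinomial a d

lemma relationProduct_ne_zero (ha : ∀ i, a i ≠ 0)
    (hind : ∀ d : ι → ℤ, ∏ i, (a i : ℚ) ^ d i = 1 → d = 0) : relationProduct a T ≠ 0 := by
  refine Finset.prod_ne_zero_iff.mpr fun d hd hzero => (mem_exponentBox.mp hd).1 (hind d ?_)
  rw [← latticeBinomial_eq_zero_iff fun i => Int.cast_ne_zero.mpr (ha i)]
  simpa [hzero] using (map_latticeBinomial (Int.castRingHom ℚ) a d).symm

lemma natAbs_relationProduct_le (ha : ∀ i, a i ≠ 0) :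
    (relationProduct a T).natAbs ≤
      2 ^ (((∏ i, (a i).natAbs) * T + 1) * (2 * T + 1) ^ Fintype.card ι) := by
  calc (relationProduct a T).natAbs
      = ∏ d ∈ exponentBox ι T, (latticeBinomial a d).natAbs := map_prod Int.natAbsHom _ _
    _ ≤ (2 ^ ((∏ i, (a i).natAbs) * T + 1)) ^ (exponentBox ι T).card :=
        Finset.prod_le_pow_card _ _ _ fun d hd =>
          natAbs_latticeBinomial_le ha (mem_exponentBox.mp hd).2
    _ ≤ (2 ^ ((∏ i, (a i).natAbs) * T + 1)) ^ ((2 * T + 1) ^ Fintype.card ι) :=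
        Nat.pow_le_pow_right (by positivity) (card_exponentBox_le T)
    _ = _ := (pow_mul _ _ _).symm

lemma prime_dvd_relationProduct {p : ℕ} (hp : p.Prime) (hpa : ¬ (p : ℤ) ∣ ∏ i, a i)
    (hcard : Nat.card (Submonoid.closure (Set.range fun i => (a i : ZMod p))) <
      (T + 1) ^ Fintype.card ι) :
    (p : ℤ) ∣ relationProduct a T := by
  have : Fact p.Prime := ⟨hp⟩
  have ha (i : ι) : (a i : ZMod p) ≠ 0 := fun h =>
    hpa (((ZMod.intCast_zmod_eq_zero_iff_dvd _ _).mp h).trans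
      (Finset.dvd_prod_of_mem a (Finset.mem_univ i)))
  obtain ⟨d, hd, relation⟩ := exists_mem_exponentBox_prod_zpow_eq_one ha
    (fun i => Submonoid.subset_closure (Set.mem_range_self i)) hcard
  refine dvd_trans ?_ (Finset.dvd_prod_of_mem _ hd)
  rw [← ZMod.intCast_zmod_eq_zero_iff_dvd]
  exact (map_latticeBinomial (Int.castRingHom (ZMod p)) a d).trans
    ((latticeBinomial_eq_zero_iff ha d).mpr relation)

lemma mem_primeFactors_relationProduct (ha : ∀ i, a i ≠ 0)
    (hind : ∀ d : ι → ℤ, ∏ i, (a i : ℚ) ^ d i = 1 → d = 0) {p : ℕ} (hp : p.Prime)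
    (hpa : ¬ (p : ℤ) ∣ ∏ i, a i)
    (hcard : Nat.card (Submonoid.closure (Set.range fun i => (a i : ZMod p))) <
      (T + 1) ^ Fintype.card ι) :
    p ∈ (relationProduct a T).natAbs.primeFactors :=
  Nat.mem_primeFactors.mpr ⟨hp, Int.natCast_dvd.mp (prime_dvd_relationProduct hp hpa hcard),
    Int.natAbs_ne_zero.mpr (relationProduct_ne_zero ha hind)⟩

lemma card_primeFactors_relationProduct_le (ha : ∀ i, a i ≠ 0) :
    (relationProduct a T).natAbs.primeFactors.card ≤
      ((∏ i, (a i).natAbs) * T + 1) * (2 * T + 1) ^ Fintype.card ι :=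
  card_primeFactors_le_of_le_two_pow (natAbs_relationProduct_le ha)

end RelationProduct

section Root

variable {k : ℕ} {y : ℝ}

lemma lt_floor_rpow_one_div_add_one_pow (hk : k ≠ 0) (hy : 0 ≤ y) :
    y < ((⌊y ^ (1 / (k : ℝ))⌋₊ + 1) ^ k : ℕ) := by
  calc y = (y ^ (1 / (k : ℝ))) ^ k := by rw [one_div, Real.rpow_inv_natCast_pow hy hk]
    _ < _ := by
        push_cast
        exact pow_lt_pow_left₀ (Nat.lt_floor_add_one _) (by positivity) hk

lemma mul_floor_add_one_mul_pow_le (A : ℕ) (hk : k ≠ 0) (hy : 1 ≤ y) :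
    (((A * ⌊y ^ (1 / (k : ℝ))⌋₊ + 1) * (2 * ⌊y ^ (1 / (k : ℝ))⌋₊ + 1) ^ k : ℕ) : ℝ) ≤
      (A + 1) * 3 ^ k * y ^ (1 + 1 / (k : ℝ)) := by
  have root_pow : (y ^ (1 / (k : ℝ))) ^ k = y := by
    rw [one_div, Real.rpow_inv_natCast_pow (by positivity) hk]
  have one_le_root : 1 ≤ y ^ (1 / (k : ℝ)) := Real.one_le_rpow hy (by positivity)
  rw [Real.rpow_add (by positivity), Real.rpow_one]
  set x := y ^ (1 / (k : ℝ))
  have floor_le : (⌊x⌋₊ : ℝ) ≤ x := Nat.floor_le (by positivity)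
  calc (((A * ⌊x⌋₊ + 1) * (2 * ⌊x⌋₊ + 1) ^ k : ℕ) : ℝ)
      = (A * ⌊x⌋₊ + 1) * (2 * ⌊x⌋₊ + 1) ^ k := by push_cast; rfl
    _ ≤ (A * x + x) * (2 * x + x) ^ k := by gcongr
    _ = (A + 1) * 3 ^ k * (x ^ k * x) := by
        rw [show 2 * x + x = 3 * x by ring, mul_pow]
        ring
    _ = (A + 1) * 3 ^ k * (y * x) := by rw [root_pow]

end Root

end Matthews

/-- **Matthews' lemma.** Let `a₁, …, a_k` be nonzero, multiplicatively independent
integers. There is a positive constant `C` such that, for every `y ≥ 1`, the number of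
primes `p` (not dividing `a₁⋯a_k`) with `ℓ_{a₁,…,a_k}(p) ≤ y` is at most `C y^(1+1/k)`,
where `ℓ_{a₁,…,a_k}(p)` is the order of the subgroup of `(ℤ/pℤ)ˣ` generated by
`a₁, …, a_k`. -/
theorem stmt_15 (k : ℕ) (hk : 0 < k) (a : Fin k → ℤ) (ha : ∀ i, a i ≠ 0)
    (hind : ∀ e : Fin k → ℤ, (∏ i, (a i : ℚ) ^ e i) = 1 → ∀ i, e i = 0) :
    ∃ C : ℝ, 0 < C ∧ ∀ y : ℝ, 1 ≤ y →
      {p : ℕ | Nat.Prime p ∧ ¬ (p : ℤ) ∣ (∏ i, a i) ∧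
          (Nat.card (Submonoid.closure (Set.range (fun i => ((a i : ZMod p))))) : ℝ)
            ≤ y}.Finite ∧
      (Nat.card {p : ℕ | Nat.Prime p ∧ ¬ (p : ℤ) ∣ (∏ i, a i) ∧
          (Nat.card (Submonoid.closure (Set.range (fun i => ((a i : ZMod p))))) : ℝ)
            ≤ y} : ℝ)
        ≤ C * y ^ (1 + 1 / (k : ℝ)) := by
  refine ⟨((∏ i, (a i).natAbs : ℕ) + 1) * 3 ^ k, by positivity, fun y hy => ?_⟩
  have independent (d : Fin k → ℤ) (hd : ∏ i, (a i : ℚ) ^ d i = 1) : d = 0 := funext (hind d hd)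
  let T := ⌊y ^ (1 / (k : ℝ))⌋₊
  let Q := (Matthews.relationProduct a T).natAbs.primeFactors
  set P := {p : ℕ | Nat.Prime p ∧ ¬ (p : ℤ) ∣ (∏ i, a i) ∧ (Nat.card _ : ℝ) ≤ y}
  have P_subset_Q : P ⊆ Q := by
    rintro p ⟨hp, hpa, hcard⟩
    have card_lt := hcard.trans_lt
      (Matthews.lt_floor_rpow_one_div_add_one_pow hk.ne' (zero_le_one.trans hy))
    exact Matthews.mem_primeFactors_relationProduct ha independent hp hpa
      (by rw [Fintype.card_fin]; exact_mod_cast card_lt)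
  refine ⟨Q.finite_toSet.subset P_subset_Q, ?_⟩
  calc (Nat.card P : ℝ)
      ≤ Q.card := Nat.cast_le.mpr
        ((Set.ncard_le_ncard P_subset_Q).trans_eq (Set.ncard_coe_finset Q))
    _ ≤ (((∏ i, (a i).natAbs) * T + 1) * (2 * T + 1) ^ k : ℕ) := Nat.cast_le.mpr
        (by simpa only [Fintype.card_fin] using Matthews.card_primeFactors_relationProduct_le ha)
    _ ≤ _ := Matthews.mul_floor_add_one_mul_pow_le _ hk.ne' hy
end

section
/- For each nonzero integer a and each positive integer n, ℓ_a(n) ≥ (λ(n)/n) · ∏_{p | n, p ∤ a} ℓ_a(p), where the product runs over the prime divisors p of n not dividing a. -/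
/-- `ellc a n` is the eventual period of `a, a², a³, …` modulo `n`: the multiplicative
order of `a` modulo `n'`, where `n'` is the largest positive divisor of `n` coprime
to `a`. -/
noncomputable def ellc (a : ℤ) (n : ℕ) : ℕ :=
  orderOf ((a : ZMod (((n.divisors.filter (fun d => Nat.Coprime d a.natAbs)).max).getD 1)))

/-- Carmichael's function: the exponent of the multiplicative group mod `n`. -/
noncomputable def carmichael (n : ℕ) : ℕ := Monoid.exponent (ZMod n)ˣ

/-!
Each prime power `q` exactly dividing `n` satisfies `λ(q) ∏ ℓ_a(r) ∣ ℓ_a(n) ∏ λ(r)`, the products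
running over the prime powers `r` exactly dividing `n`: the factor `ℓ_a(q)` divides `ℓ_a(n)`, and
`ℓ_a(r) ∣ λ(r)` takes care of the others. Since `λ(n)` is the least common multiple of the `λ(q)`,
it may replace `λ(q)` here; finally `ℓ_a(p)` divides `ℓ_a(q)` for `q` a power of `p`, and
`∏ λ(r) ∣ φ(n) ≤ n`.
-/

theorem finsetLcm_mul_dvd {ι M : Type*} [CommMonoidWithZero M] [NormalizedGCDMonoid M]
    {s : Finset ι} {f : ι → M} {c m : M} (hc : c ∣ m) (hf : ∀ i ∈ s, f i * c ∣ m) :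
    s.lcm f * c ∣ m := by
  obtain ⟨k, rfl⟩ := hc
  obtain rfl | hc := eq_or_ne c 0
  · simp
  rw [mul_comm c k, mul_dvd_mul_iff_right hc]
  exact Finset.lcm_dvd fun i hi => (mul_dvd_mul_iff_right hc).1 (mul_comm c k ▸ hf i hi)

theorem finsetLcm_mul_prod_dvd_mul_prod {ι M : Type*} [CommMonoidWithZero M]
    [NormalizedGCDMonoid M] {s : Finset ι} {f g : ι → M} {m : M}
    (hgf : ∀ i ∈ s, g i ∣ f i) (hgm : ∀ i ∈ s, g i ∣ m) :
    s.lcm f * ∏ i ∈ s, g i ∣ m * ∏ i ∈ s, f i := by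
  classical
  refine finsetLcm_mul_dvd (dvd_mul_of_dvd_right (Finset.prod_dvd_prod_of_dvd g f hgf) m) ?_
  intro i hi
  have hrest : ∏ j ∈ s.erase i, g j ∣ ∏ j ∈ s.erase i, f j :=
    Finset.prod_dvd_prod_of_dvd g f fun j hj => hgf j (Finset.mem_of_mem_erase hj)
  rw [← Finset.mul_prod_erase s g hi, ← Finset.mul_prod_erase s f hi, mul_left_comm]
  exact mul_dvd_mul (hgm i hi) (mul_dvd_mul_left (f i) hrest)

theorem lcm_primeFactors_pow_factorization {n : ℕ} (hn : n ≠ 0) :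
    n.primeFactors.lcm (fun p => p ^ n.factorization p) = n := by
  rw [Finset.lcm_eq_prod Nat.pairwise_coprime_pow_primeFactors_factorization.set_of_subtype]
  exact Nat.prod_factorization_pow_eq_self hn

theorem prod_carmichael_pow_factorization_dvd_totient {n : ℕ} (hn : n ≠ 0) :
    ∏ p ∈ n.primeFactors, ArithmeticFunction.carmichael (p ^ n.factorization p) ∣ n.totient := by
  rw [Nat.multiplicative_factorization Nat.totient (fun _ _ => Nat.totient_mul)
    Nat.totient_one hn]
  exact Finset.prod_dvd_prod_of_dvd _ _ fun p _ => ArithmeticFunction.carmichael_dvd_totient _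

theorem orderOf_intCast_zmod_dvd_of_dvd (a : ℤ) {m n : ℕ} (hmn : m ∣ n) :
    orderOf (a : ZMod m) ∣ orderOf (a : ZMod n) := by
  simpa using orderOf_map_dvd (ZMod.castHom hmn (ZMod m)).toMonoidHom (a : ZMod n)

theorem orderOf_intCast_zmod_dvd_carmichael {a : ℤ} {n : ℕ} (ha : n.Coprime a.natAbs) :
    orderOf (a : ZMod n) ∣ ArithmeticFunction.carmichael n := by
  have hunit : IsUnit (a : ZMod n) := by
    rwa [ZMod.coe_int_isUnit_iff_isCoprime, Int.isCoprime_iff_nat_coprime, Int.natAbs_natCast]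
  obtain ⟨u, hu⟩ := hunit
  rw [← hu, orderOf_units]
  exact orderOf_dvd_of_pow_eq_one (ArithmeticFunction.pow_carmichael u)

/-- The largest positive divisor of `n` coprime to `a`: the modulus `n'` in the definition of
`ℓ_a(n)`. It is `1` for `n = 0`, since `Nat.divisors 0 = ∅`. -/
def coprimePart (a : ℤ) (n : ℕ) : ℕ :=
  ((n.divisors.filter (fun d => Nat.Coprime d a.natAbs)).max).getD 1

theorem ellc_eq_orderOf_coprimePart (a : ℤ) (n : ℕ) :
    ellc a n = orderOf (a : ZMod (coprimePart a n)) :=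
  rfl

section

variable {a : ℤ} {m n p : ℕ}

theorem isGreatest_coprimePart (hn : n ≠ 0) :
    IsGreatest {d | d ∣ n ∧ d.Coprime a.natAbs} (coprimePart a n) := by
  have hset : {d | d ∣ n ∧ d.Coprime a.natAbs} =
      ↑(n.divisors.filter fun d => d.Coprime a.natAbs) := by
    ext d
    simp [hn]
  obtain ⟨m, hm⟩ := Finset.max_of_mem (s := n.divisors.filter fun d => d.Coprime a.natAbs)
    (a := 1) (by simp [hn])
  have hcop : coprimePart a n = m := by
    rw [coprimePart, hm]
    rfl
  rw [hset, hcop]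
  exact ⟨Finset.mem_of_max hm, fun d hd => Finset.le_max_of_eq hd hm⟩

theorem dvd_coprimePart_iff (hn : n ≠ 0) :
    m ∣ coprimePart a n ↔ m ∣ n ∧ m.Coprime a.natAbs := by
  obtain ⟨⟨hdvd, hcop⟩, hmax⟩ := isGreatest_coprimePart (a := a) hn
  refine ⟨fun h => ⟨h.trans hdvd, hcop.coprime_dvd_left h⟩, fun ⟨hmn, hma⟩ => ?_⟩
  -- The least common multiple with the largest such divisor is again such a divisor.
  have hlcm : m.lcm (coprimePart a n) ∣ n ∧ (m.lcm (coprimePart a n)).Coprime a.natAbs :=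
    ⟨Nat.lcm_dvd hmn hdvd, (hma.mul_left hcop).coprime_dvd_left (Nat.lcm_dvd_mul _ _)⟩
  have hpos : 0 < m.lcm (coprimePart a n) := Nat.pos_of_dvd_of_pos hlcm.1 hn.bot_lt
  have heq : m.lcm (coprimePart a n) = coprimePart a n :=
    (hmax hlcm).antisymm (Nat.le_of_dvd hpos (Nat.dvd_lcm_right _ _))
  exact heq ▸ Nat.dvd_lcm_left m (coprimePart a n)

theorem coprimePart_dvd (hn : n ≠ 0) : coprimePart a n ∣ n :=
  ((dvd_coprimePart_iff hn).1 dvd_rfl).1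

theorem coprime_coprimePart (hn : n ≠ 0) : (coprimePart a n).Coprime a.natAbs :=
  ((dvd_coprimePart_iff hn).1 dvd_rfl).2

theorem coprimePart_eq_self (hn : n ≠ 0) (ha : n.Coprime a.natAbs) : coprimePart a n = n :=
  (coprimePart_dvd hn).antisymm ((dvd_coprimePart_iff hn).2 ⟨dvd_rfl, ha⟩)

theorem coprimePart_eq_one_of_dvd (hn : n ≠ 0) (hna : (n : ℤ) ∣ a) : coprimePart a n = 1 :=
  (coprime_coprimePart hn).eq_one_of_dvd ((coprimePart_dvd hn).trans (Int.natCast_dvd.1 hna))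

theorem coprimePart_dvd_coprimePart (hn : n ≠ 0) (hmn : m ∣ n) :
    coprimePart a m ∣ coprimePart a n :=
  have hm : m ≠ 0 := ne_zero_of_dvd_ne_zero hn hmn
  (dvd_coprimePart_iff hn).2 ⟨(coprimePart_dvd hm).trans hmn, coprime_coprimePart hm⟩

theorem ellc_dvd_ellc (hn : n ≠ 0) (hmn : m ∣ n) : ellc a m ∣ ellc a n :=
  orderOf_intCast_zmod_dvd_of_dvd a (coprimePart_dvd_coprimePart hn hmn)

theorem ellc_dvd_carmichael (a : ℤ) (n : ℕ) : ellc a n ∣ ArithmeticFunction.carmichael n := by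
  obtain rfl | hn := eq_or_ne n 0
  · simp
  exact (orderOf_intCast_zmod_dvd_carmichael (coprime_coprimePart hn)).trans
    (ArithmeticFunction.carmichael_dvd (coprimePart_dvd hn))

theorem ellc_pos (hn : n ≠ 0) : 0 < ellc a n :=
  Nat.pos_of_dvd_of_pos ((ellc_dvd_carmichael a n).trans
    (ArithmeticFunction.carmichael_dvd_totient n)) (Nat.totient_pos.2 hn.bot_lt)

theorem ellc_prime (hp : p.Prime) :
    ellc a p = if (p : ℤ) ∣ a then 1 else orderOf (a : ZMod p) := by
  rw [ellc_eq_orderOf_coprimePart]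
  split_ifs with hpa
  · rw [coprimePart_eq_one_of_dvd hp.ne_zero hpa, Subsingleton.elim (a : ZMod 1) 1, orderOf_one]
  · have hcop : p.Coprime a.natAbs :=
      hp.coprime_iff_not_dvd.2 fun h => hpa (Int.natCast_dvd.2 h)
    rw [coprimePart_eq_self hp.ne_zero hcop]

theorem prod_ellc_primeFactors (a : ℤ) (n : ℕ) :
    ∏ p ∈ n.primeFactors, ellc a p =
      ∏ p ∈ n.primeFactors.filter (fun p : ℕ => ¬ (p : ℤ) ∣ a), orderOf (a : ZMod p) := by
  rw [Finset.prod_filter]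
  refine Finset.prod_congr rfl fun p hp => ?_
  rw [ellc_prime (Nat.prime_of_mem_primeFactors hp), ite_not]

theorem carmichael_lcm_mul_prod_ellc_dvd {ι : Type*} (s : Finset ι) (q : ι → ℕ) (a : ℤ) :
    ArithmeticFunction.carmichael (s.lcm q) * ∏ i ∈ s, ellc a (q i) ∣
      ellc a (s.lcm q) * ∏ i ∈ s, ArithmeticFunction.carmichael (q i) := by
  obtain hzero | hne := eq_or_ne (s.lcm q) 0
  · obtain ⟨i, hi, hqi⟩ := Finset.lcm_eq_zero_iff.1 hzero
    simp [Finset.prod_eq_zero hi, hqi]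
  rw [ArithmeticFunction.carmichael_finset_lcm]
  exact finsetLcm_mul_prod_dvd_mul_prod (fun i _ => ellc_dvd_carmichael a (q i))
    (fun i hi => ellc_dvd_ellc hne (Finset.dvd_lcm hi))

theorem carmichael_mul_prod_ellc_dvd_ellc_mul_totient (hn : n ≠ 0) :
    ArithmeticFunction.carmichael n * ∏ p ∈ n.primeFactors, ellc a p ∣
      ellc a n * n.totient := by
  have hprimes : ∏ p ∈ n.primeFactors, ellc a p ∣
      ∏ p ∈ n.primeFactors, ellc a (p ^ n.factorization p) := by
    refine Finset.prod_dvd_prod_of_dvd _ _ fun p hp => ?_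
    have hpp := Nat.prime_of_mem_primeFactors hp
    exact ellc_dvd_ellc (pow_ne_zero _ hpp.ne_zero)
      (dvd_pow_self p (Finsupp.mem_support_iff.1 hp))
  have hpowers := carmichael_lcm_mul_prod_ellc_dvd n.primeFactors (fun p => p ^ n.factorization p) a
  rw [lcm_primeFactors_pow_factorization hn] at hpowers
  exact (mul_dvd_mul_left _ hprimes).trans (hpowers.trans
    (mul_dvd_mul_left _ (prod_carmichael_pow_factorization_dvd_totient hn)))

end

theorem carmichael_eq_arithmeticFunction_carmichael {n : ℕ} (hn : n ≠ 0) :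
    carmichael n = ArithmeticFunction.carmichael n :=
  (ArithmeticFunction.carmichael_eq_exponent hn).symm

/-- **Kurlberg–Rudnick.** For each nonzero integer `a` and positive integer `n`,
`ℓ_a(n) ≥ (λ(n)/n) ∏_{p ∣ n, p ∤ a} ℓ_a(p)`, the product over prime divisors `p` of
`n` not dividing `a`. -/
theorem stmt_16 (a : ℤ) (ha : a ≠ 0) (n : ℕ) (hn : 0 < n) :
    ((carmichael n : ℝ) / (n : ℝ)) *
        ∏ p ∈ n.primeFactors.filter (fun p : ℕ => ¬ (p : ℤ) ∣ a),
          (orderOf ((a : ZMod p)) : ℝ)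
      ≤ (ellc a n : ℝ) := by
  have hdvd := carmichael_mul_prod_ellc_dvd_ellc_mul_totient (a := a) hn.ne'
  rw [← carmichael_eq_arithmeticFunction_carmichael hn.ne', prod_ellc_primeFactors] at hdvd
  have hle := calc
    carmichael n * ∏ p ∈ n.primeFactors.filter (fun p : ℕ => ¬ (p : ℤ) ∣ a), orderOf (a : ZMod p)
      ≤ ellc a n * n.totient :=
        Nat.le_of_dvd (Nat.mul_pos (ellc_pos hn.ne') (Nat.totient_pos.2 hn)) hdvd
    _ ≤ ellc a n * n := Nat.mul_le_mul_left _ n.totient_le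
  rw [div_mul_eq_mul_div, div_le_iff₀ (Nat.cast_pos.2 hn)]
  exact_mod_cast hle
end

section
/- There exist a constant C > 0 and x_0 such that for all x ≥ x_0, the number of positive integers n ≤ x with λ(n) ≤ n·exp(−(log log n)³) is at most C·x/(log x)^{10}. -/
/-!
Every `p - 1` with `p ∣ n` divides `λ(n)`. Write `p - 1 = u_p * v_p` with `u_p` the `y`-smooth and
`v_p` the `y`-rough part. If no two of the numbers `p - 1` share a divisor `≥ y`, the `v_p` are
pairwise coprime, so their product divides `λ(n)`; if moreover every `u_p` is at most `z` and `n`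
has no square divisor `b ^ 2` with `b ≥ β`, then `n ≤ λ(n) * β ^ 2 * (2 * z) ^ ω(n)`.

With `t = log x`, take `β = t ^ k`, `y = ⌈t ^ (k + 2)⌉` and `z = exp (δ * (log t) ^ 2)`; for
`2 ^ ω(n) ≤ t ^ (k + 1)` the loss is then at most `exp (O(log t) + O(δ) * (log t) ^ 3)`, which is
enough for `n > √x`. Each assumption fails for `O(x / t ^ k)` integers up to `x`. Indeed `2 ^ ω(n)`
is at most the number of divisors of `n`, whose mean is `O(t)`, and the other failures force `n` to
have a divisor of the form `b ^ 2`, `(g * l + 1) * (g * m + 1)` or `d * l + 1`, so that a union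
bound suffices. In the last case `d > z` runs over `y`-smooth numbers, whose reciprocals are summed
by Rankin's trick and the estimate `∑ p < y, 1 / p = o(log y)`.
-/

namespace KurlbergPomerance

open Asymptotics Filter Finset Real

section SmoothPart

variable {y m p : ℕ}

/-- The `y`-smooth part of `m`: the product, with multiplicity, of its prime factors below `y`. -/
def smoothPart (y m : ℕ) : ℕ := (m.primeFactorsList.filter (· < y)).prod

/-- The `y`-rough part of `m`: the product, with multiplicity, of its prime factors `≥ y`. -/
def roughPart (y m : ℕ) : ℕ := (m.primeFactorsList.filter (¬ · < y)).prod

lemma smoothPart_mul_roughPart (hm : m ≠ 0) : smoothPart y m * roughPart y m = m := by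
  have h := Multiset.prod_filter_mul_prod_filter_not (s := (m.primeFactorsList : Multiset ℕ))
    (p := (· < y))
  simpa [smoothPart, roughPart, Nat.prod_primeFactorsList hm] using h

lemma le_of_prime_dvd_roughPart (hp : p.Prime) (h : p ∣ roughPart y m) : y ≤ p := by
  obtain ⟨q, hq, hpq⟩ := (Prime.dvd_prod_iff hp.prime).mp h
  obtain ⟨hqm, hyq⟩ := List.mem_filter.mp hq
  rw [(Nat.prime_dvd_prime_iff_eq hp (Nat.prime_of_mem_primeFactorsList hqm)).mp hpq]
  simpa using hyq

end SmoothPart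

section Carmichael

variable {n p y : ℕ} {β z : ℝ}

lemma carmichael_pos (hn : n ≠ 0) : 0 < carmichael n := by
  have : NeZero n := ⟨hn⟩
  exact Nat.pos_of_ne_zero Monoid.exponent_ne_zero_of_finite

lemma sub_one_dvd_carmichael (hp : p ∈ n.primeFactors) : p - 1 ∣ carmichael n := by
  obtain ⟨hprime, hpn, hn⟩ := Nat.mem_primeFactors.mp hp
  have : NeZero n := ⟨hn⟩
  have : Fact p.Prime := ⟨hprime⟩
  rw [← ZMod.card_units p, ← Nat.card_eq_fintype_card, ← IsCyclic.exponent_eq_card]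
  exact MonoidHom.exponent_dvd (ZMod.unitsMap_surjective hpn)

/-- The exceptional property that `n` is divisible by the square of some `b ≥ β`. -/
def HasLargeSquareDivisor (β : ℝ) (n : ℕ) : Prop :=
  ∃ b : ℕ, β ≤ b ∧ b ^ 2 ∣ n

/-- The exceptional property that `p - 1` has a `y`-smooth divisor `d > z` for some prime
`p ∣ n`. -/
def HasLargeSmoothShift (y : ℕ) (z : ℝ) (n : ℕ) : Prop :=
  ∃ p ∈ n.primeFactors, ∃ d ∈ Nat.smoothNumbers y, d ∣ p - 1 ∧ z < d

/-- The exceptional property that `p₁ - 1` and `p₂ - 1` have a common divisor `≥ y` for two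
distinct primes `p₁, p₂ ∣ n`. -/
def HasLargeShiftGcd (y n : ℕ) : Prop :=
  ∃ p₁ ∈ n.primeFactors, ∃ p₂ ∈ n.primeFactors, p₁ ≠ p₂ ∧ y ≤ (p₁ - 1).gcd (p₂ - 1)

lemma roughPart_dvd_sub_one (hp : p.Prime) : roughPart y (p - 1) ∣ p - 1 :=
  Dvd.intro_left _ (smoothPart_mul_roughPart (Nat.sub_pos_of_lt hp.one_lt).ne')

lemma prod_roughPart_sub_one_dvd_carmichael (hgcd : ¬ HasLargeShiftGcd y n) :
    ∏ p ∈ n.primeFactors, roughPart y (p - 1) ∣ carmichael n := by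
  refine prod_dvd_of_isRelPrime (fun p hp r hr hpr => ?_) fun p hp =>
    (roughPart_dvd_sub_one (Nat.prime_of_mem_primeFactors hp)).trans (sub_one_dvd_carmichael hp)
  have hp' := Nat.prime_of_mem_primeFactors hp
  have hr' := Nat.prime_of_mem_primeFactors hr
  refine Nat.coprime_iff_isRelPrime.mp (Nat.coprime_of_dvd fun q hq hqp hqr => ?_)
  have hq_dvd : q ∣ (p - 1).gcd (r - 1) :=
    Nat.dvd_gcd (hqp.trans (roughPart_dvd_sub_one hp')) (hqr.trans (roughPart_dvd_sub_one hr'))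
  have hgcd_pos : 0 < (p - 1).gcd (r - 1) :=
    Nat.gcd_pos_of_pos_left _ (Nat.sub_pos_of_lt hp'.one_lt)
  exact hgcd ⟨p, hp, r, hr, hpr,
    (le_of_prime_dvd_roughPart hq hqp).trans (Nat.le_of_dvd hgcd_pos hq_dvd)⟩

lemma le_two_mul_mul_roughPart (hsmooth : ¬ HasLargeSmoothShift y z n) (hp : p ∈ n.primeFactors) :
    (p : ℝ) ≤ 2 * z * roughPart y (p - 1) := by
  have hp2 := (Nat.prime_of_mem_primeFactors hp).two_le
  have hfactor : smoothPart y (p - 1) * roughPart y (p - 1) = p - 1 :=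
    smoothPart_mul_roughPart (by omega)
  have hsz : (smoothPart y (p - 1) : ℝ) ≤ z := by
    by_contra! hlt
    exact hsmooth ⟨p, hp, _, Nat.prod_mem_smoothNumbers _ _, Dvd.intro _ hfactor, hlt⟩
  calc (p : ℝ) ≤ 2 * (smoothPart y (p - 1) * roughPart y (p - 1) : ℕ) := by
        rw [hfactor]
        exact_mod_cast (by omega : p ≤ 2 * (p - 1))
    _ = 2 * smoothPart y (p - 1) * roughPart y (p - 1) := by push_cast; ring
    _ ≤ 2 * z * roughPart y (p - 1) := by gcongr

lemma prod_primeFactors_le (hn : n ≠ 0) (hz : 0 ≤ z) (hsmooth : ¬ HasLargeSmoothShift y z n)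
    (hgcd : ¬ HasLargeShiftGcd y n) :
    ∏ p ∈ n.primeFactors, (p : ℝ) ≤ (2 * z) ^ #n.primeFactors * carmichael n := by
  calc ∏ p ∈ n.primeFactors, (p : ℝ)
      ≤ ∏ p ∈ n.primeFactors, (2 * z * roughPart y (p - 1) : ℝ) :=
        prod_le_prod (fun _ _ => Nat.cast_nonneg _) fun p hp => le_two_mul_mul_roughPart hsmooth hp
    _ = (2 * z) ^ #n.primeFactors * (∏ p ∈ n.primeFactors, roughPart y (p - 1) : ℕ) := by
        rw [prod_mul_distrib, prod_const, Nat.cast_prod]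
    _ ≤ (2 * z) ^ #n.primeFactors * carmichael n := by
        gcongr
        exact Nat.le_of_dvd (carmichael_pos hn) (prod_roughPart_sub_one_dvd_carmichael hgcd)

lemma le_sq_mul_prod_primeFactors (hn : n ≠ 0) (hsq : ¬ HasLargeSquareDivisor β n) :
    (n : ℝ) ≤ β ^ 2 * ∏ p ∈ n.primeFactors, (p : ℝ) := by
  obtain ⟨a, b, rfl, ha⟩ := Nat.sq_mul_squarefree n
  have hb : (b : ℝ) ≤ β := by
    by_contra! h
    exact hsq ⟨b, h.le, dvd_mul_right _ _⟩
  have ha_le : a ≤ ∏ p ∈ (b ^ 2 * a).primeFactors, p := by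
    conv_lhs => rw [← Nat.prod_primeFactors_of_squarefree ha]
    exact prod_le_prod_of_subset_of_one_le' (Nat.primeFactors_mono (dvd_mul_left _ _) hn)
      fun p hp _ => (Nat.prime_of_mem_primeFactors hp).one_le
  have ha_le' : (a : ℝ) ≤ ∏ p ∈ (b ^ 2 * a).primeFactors, (p : ℝ) := by
    rw [← Nat.cast_prod]
    exact Nat.cast_le.mpr ha_le
  push_cast
  gcongr

theorem le_carmichael_mul (hn : n ≠ 0) (hz : 0 ≤ z) (hsq : ¬ HasLargeSquareDivisor β n)
    (hsmooth : ¬ HasLargeSmoothShift y z n) (hgcd : ¬ HasLargeShiftGcd y n) :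
    (n : ℝ) ≤ carmichael n * β ^ 2 * (2 * z) ^ #n.primeFactors :=
  calc (n : ℝ) ≤ β ^ 2 * ∏ p ∈ n.primeFactors, (p : ℝ) := le_sq_mul_prod_primeFactors hn hsq
    _ ≤ β ^ 2 * ((2 * z) ^ #n.primeFactors * carmichael n) := by
        gcongr
        exact prod_primeFactors_le hn hz hsmooth hgcd
    _ = carmichael n * β ^ 2 * (2 * z) ^ #n.primeFactors := by ring

end Carmichael

section PrimeReciprocals

lemma sum_inv_primes_Ioc_two_mul_le {n : ℕ} (hn : 1 < n) :
    ∑ p ∈ Nat.primesLE (2 * n) \ Nat.primesLE n, (p : ℝ)⁻¹ ≤ 2 * log 4 / log n := by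
  have hn' : (1 : ℝ) < n := by exact_mod_cast hn
  have hlog : 0 < log n := log_pos hn'
  calc ∑ p ∈ Nat.primesLE (2 * n) \ Nat.primesLE n, (p : ℝ)⁻¹
      ≤ ∑ p ∈ Nat.primesLE (2 * n) \ Nat.primesLE n, log p / (n * log n) := by
        refine sum_le_sum fun p hp => ?_
        simp only [Finset.mem_sdiff, Nat.mem_primesLE, not_and'] at hp
        have hnp : (n : ℝ) ≤ p := by exact_mod_cast (not_le.mp (hp.2 hp.1.2)).le
        have hp0 : (0 : ℝ) < p := by linarith
        rw [inv_eq_one_div, div_le_div_iff₀ (by positivity) (by positivity), one_mul,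
          mul_comm (log _)]
        gcongr
    _ ≤ ∑ p ∈ Nat.primesLE (2 * n), log p / (n * log n) :=
        sum_le_sum_of_subset_of_nonneg sdiff_subset fun p _ _ => by positivity
    _ = Chebyshev.theta (2 * n : ℕ) / (n * log n) := by
        rw [Chebyshev.theta_eq_sum_primesLE_log, sum_div]
    _ ≤ log 4 * (2 * n : ℕ) / (n * log n) := by
        gcongr
        exact Chebyshev.theta_le_log4_mul_x (Nat.cast_nonneg _)
    _ = 2 * log 4 / log n := by
        push_cast
        field_simp

lemma sum_inv_primesLE_two_pow_le (N : ℕ) :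
    ∑ p ∈ Nat.primesLE (2 ^ (N + 1)), (p : ℝ)⁻¹ ≤ 1 + 4 * harmonic N := by
  induction N with
  | zero =>
    rw [show Nat.primesLE (2 ^ (0 + 1)) = {2} by decide]
    norm_num
  | succ N ih =>
    have hblock := sum_inv_primes_Ioc_two_mul_le (Nat.one_lt_two_pow N.succ_ne_zero)
    have hconst : 2 * log 4 / log (2 ^ (N + 1) : ℕ) = 4 * ((N + 1 : ℕ) : ℝ)⁻¹ := by
      have : log 2 ≠ 0 := (log_pos one_lt_two).ne'
      rw [show (4 : ℝ) = 2 ^ 2 by norm_num]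
      push_cast
      simp only [log_pow]
      field_simp
      norm_num
    have hsub : Nat.primesLE (2 ^ (N + 1)) ⊆ Nat.primesLE (2 * 2 ^ (N + 1)) := fun p hp => by
      simp only [Nat.mem_primesLE] at hp ⊢
      exact ⟨by omega, hp.2⟩
    rw [pow_succ' 2 (N + 1), ← sum_sdiff hsub, harmonic_succ]
    push_cast at hblock hconst ⊢
    linarith

lemma sum_inv_primesBelow_le {y : ℕ} (hy : 2 ≤ y) :
    ∑ p ∈ Nat.primesBelow y, (p : ℝ)⁻¹ ≤ 5 + 4 * log (logb 2 y) := by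
  have hy' : (2 : ℝ) ≤ y := by exact_mod_cast hy
  have hlogb : 1 ≤ logb 2 y := by
    rwa [le_logb_iff_rpow_le one_lt_two (by positivity), rpow_one]
  have hy_lt : y < 2 ^ (⌊logb 2 y⌋₊ + 1) := by
    have h := Nat.lt_floor_add_one (logb 2 y)
    rw [logb_lt_iff_lt_rpow one_lt_two (by positivity)] at h
    exact_mod_cast h
  have hsub : Nat.primesBelow y ⊆ Nat.primesLE (2 ^ (⌊logb 2 y⌋₊ + 1)) := fun p hp => by
    rw [Nat.mem_primesBelow] at hp
    exact Nat.mem_primesLE.mpr ⟨(hp.1.trans hy_lt).le, hp.2⟩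
  calc ∑ p ∈ Nat.primesBelow y, (p : ℝ)⁻¹
      ≤ ∑ p ∈ Nat.primesLE (2 ^ (⌊logb 2 y⌋₊ + 1)), (p : ℝ)⁻¹ :=
        sum_le_sum_of_subset_of_nonneg hsub fun _ _ _ => by positivity
    _ ≤ 1 + 4 * harmonic ⌊logb 2 y⌋₊ := sum_inv_primesLE_two_pow_le _
    _ ≤ 5 + 4 * log (logb 2 y) := by linarith [harmonic_floor_le_one_add_log _ hlogb]

lemma isLittleO_sum_inv_primesBelow :
    (fun y : ℕ => ∑ p ∈ Nat.primesBelow y, (p : ℝ)⁻¹) =o[atTop] fun y : ℕ => log y := by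
  have hlogb : (fun t : ℝ => logb 2 t) =O[atTop] log :=
    (isBigO_const_mul_self (log 2)⁻¹ log atTop).congr_left fun t => by
      rw [logb, div_eq_inv_mul]
  have hloglog : (fun t : ℝ => log (logb 2 t)) =o[atTop] log :=
    (isLittleO_log_id_atTop.comp_tendsto (tendsto_logb_atTop one_lt_two)).trans_isBigO hlogb
  have hmajorant : (fun t : ℝ => 5 + 4 * log (logb 2 t)) =o[atTop] log :=
    (isLittleO_const_log_atTop).add (hloglog.const_mul_left 4)
  refine IsBigO.trans_isLittleO (.of_bound' ?_)
    (hmajorant.comp_tendsto tendsto_natCast_atTop_atTop)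
  filter_upwards [eventually_ge_atTop 2] with y hy
  rw [norm_of_nonneg (by positivity)]
  exact (sum_inv_primesBelow_le hy).trans (le_abs_self _)

end PrimeReciprocals

section Rankin

lemma sum_smoothNumbers_le_exp {f : ℕ →* ℝ} (hf : ∀ n, 0 ≤ f n)
    (hf_prime : ∀ p, p.Prime → f p ≤ 3 / 4) {y : ℕ} {s : Finset ℕ}
    (hs : ↑s ⊆ Nat.smoothNumbers y) :
    ∑ d ∈ s, f d ≤ exp (4 * ∑ p ∈ Nat.primesBelow y, f p) := by
  have heuler := (EulerProduct.summable_and_hasSum_smoothNumbers_prod_primesBelow_geometric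
    (fun {p} hp => by rw [norm_of_nonneg (hf p)]; linarith [hf_prime p hp]) y).2
  have hfactor (p : ℕ) (hp : p ∈ Nat.primesBelow y) : (1 - f p)⁻¹ ≤ exp (4 * f p) := by
    have hp34 := hf_prime p (Nat.prime_of_mem_primesBelow hp)
    calc (1 - f p)⁻¹ ≤ 4 * f p + 1 := by
          rw [inv_le_iff_one_le_mul₀ (by linarith)]
          nlinarith [hf p]
      _ ≤ exp (4 * f p) := add_one_le_exp _
  calc ∑ d ∈ s, f d = ∑ d ∈ s, (Nat.smoothNumbers y).indicator f d :=
        sum_congr rfl fun d hd => (Set.indicator_of_mem (hs hd) _).symm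
    _ ≤ ∏ p ∈ Nat.primesBelow y, (1 - f p)⁻¹ :=
        sum_le_hasSum s (fun d _ => Set.indicator_nonneg (fun n _ => hf n) d)
          (hasSum_subtype_iff_indicator.mp heuler)
    _ ≤ ∏ p ∈ Nat.primesBelow y, exp (4 * f p) := by
        refine prod_le_prod (fun p hp => ?_) hfactor
        rw [inv_nonneg]
        linarith [hf_prime p (Nat.prime_of_mem_primesBelow hp)]
    _ = exp (4 * ∑ p ∈ Nat.primesBelow y, f p) := by rw [mul_sum, exp_sum]

/-- The completely multiplicative function `n ↦ n ^ s`; only real exponents `s` are needed, so that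
it takes values in `ℝ` rather than `ℂ`. -/
noncomputable def natRpowHom (s : ℝ) : ℕ →* ℝ where
  toFun n := (n : ℝ) ^ s
  map_one' := by simp
  map_mul' a b := by
    rw [Nat.cast_mul, mul_rpow a.cast_nonneg b.cast_nonneg]

lemma natCast_rpow_sub_one_le {σ : ℝ} (hσ : σ ≤ 1 / 2) {p : ℕ} (hp : 2 ≤ p) :
    (p : ℝ) ^ (σ - 1) ≤ 3 / 4 := by
  have hp' : (2 : ℝ) ≤ p := by exact_mod_cast hp
  calc (p : ℝ) ^ (σ - 1) ≤ (p : ℝ) ^ (-(1 / 2) : ℝ) := by gcongr <;> linarith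
    _ ≤ 2 ^ (-(1 / 2) : ℝ) := rpow_le_rpow_of_nonpos two_pos hp' (by norm_num)
    _ = (√2)⁻¹ := by rw [rpow_neg zero_le_two, sqrt_eq_rpow]
    _ ≤ 3 / 4 := by
        rw [inv_le_comm₀ (by positivity) (by norm_num)]
        exact le_sqrt_of_sq_le (by norm_num)

/-- Rankin's trick: `1 ≤ (d / z) ^ σ` for `d > z`. -/
lemma sum_inv_smoothNumbers_le {y : ℕ} {z σ M : ℝ} (hz : 0 < z) (hσ : 0 ≤ σ) (hσ' : σ ≤ 1 / 2)
    (hM : ∀ p < y, (p : ℝ) ^ σ ≤ M) {s : Finset ℕ}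
    (hs : ∀ d ∈ s, d ∈ Nat.smoothNumbers y ∧ z < d) :
    ∑ d ∈ s, (d : ℝ)⁻¹ ≤ z ^ (-σ) * exp (4 * (M * ∑ p ∈ Nat.primesBelow y, (p : ℝ)⁻¹)) := by
  have hterm (d : ℕ) (hd : d ∈ s) : (d : ℝ)⁻¹ ≤ z ^ (-σ) * (d : ℝ) ^ (σ - 1) := by
    have hzd := (hs d hd).2
    have hd0 : (0 : ℝ) < d := hz.trans hzd
    rw [rpow_neg hz.le, rpow_sub_one hd0.ne', inv_eq_one_div (d : ℝ), ← mul_div_assoc]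
    gcongr
    rw [← div_eq_inv_mul, one_le_div (by positivity)]
    gcongr
  have hprime (p : ℕ) (hp : p ∈ Nat.primesBelow y) : (p : ℝ) ^ (σ - 1) ≤ M * (p : ℝ)⁻¹ := by
    obtain ⟨hpy, hp⟩ := Nat.mem_primesBelow.mp hp
    rw [rpow_sub_one (by exact_mod_cast hp.ne_zero), div_eq_mul_inv]
    gcongr
    exact hM p hpy
  calc ∑ d ∈ s, (d : ℝ)⁻¹ ≤ ∑ d ∈ s, z ^ (-σ) * (d : ℝ) ^ (σ - 1) := sum_le_sum hterm
    _ = z ^ (-σ) * ∑ d ∈ s, natRpowHom (σ - 1) d := by rw [mul_sum]; rfl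
    _ ≤ z ^ (-σ) * exp (4 * ∑ p ∈ Nat.primesBelow y, (p : ℝ) ^ (σ - 1)) := by
        gcongr
        exact sum_smoothNumbers_le_exp (fun n => rpow_nonneg n.cast_nonneg _)
          (fun p hp => natCast_rpow_sub_one_le hσ' hp.two_le) fun d hd => (hs d hd).1
    _ ≤ z ^ (-σ) * exp (4 * (M * ∑ p ∈ Nat.primesBelow y, (p : ℝ)⁻¹)) := by
        rw [mul_sum _ _ M]
        gcongr with p hp
        exact hprime p hp

lemma eventually_mul_sum_inv_primesBelow_le (C : ℝ) {a : ℕ} (ha : a ≠ 0) :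
    ∀ᶠ t : ℝ in atTop, C * ∑ p ∈ Nat.primesBelow ⌈t ^ a⌉₊, (p : ℝ)⁻¹ ≤ log t := by
  have hceil : Tendsto (fun t : ℝ => ⌈t ^ a⌉₊) atTop atTop :=
    tendsto_nat_ceil_atTop.comp (tendsto_pow_atTop ha)
  have hlog : (fun t : ℝ => log ⌈t ^ a⌉₊) =O[atTop] log := by
    refine .of_bound (a + 1) ?_
    filter_upwards [eventually_ge_atTop 2] with t ht
    have hpow : (1 : ℝ) ≤ t ^ a := one_le_pow₀ (by linarith)
    have hle : (⌈t ^ a⌉₊ : ℝ) ≤ t ^ (a + 1) := by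
      calc (⌈t ^ a⌉₊ : ℝ) ≤ t ^ a + 1 := (Nat.ceil_lt_add_one (by positivity)).le
        _ ≤ t ^ a * t := by nlinarith
    have hone : (1 : ℝ) ≤ ⌈t ^ a⌉₊ := hpow.trans (Nat.le_ceil _)
    rw [norm_of_nonneg (log_nonneg hone), norm_of_nonneg (log_nonneg (by linarith))]
    calc log ⌈t ^ a⌉₊ ≤ log (t ^ (a + 1)) := by gcongr
      _ = (a + 1) * log t := by rw [log_pow]; push_cast; ring
  have hlittle :=
    ((isLittleO_sum_inv_primesBelow.comp_tendsto hceil).trans_isBigO hlog).const_mul_left C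
  filter_upwards [hlittle.bound one_pos, eventually_ge_atTop 1] with t ht ht1
  rw [one_mul, norm_of_nonneg (log_nonneg ht1)] at ht
  exact (le_abs_self _).trans ht

lemma eventually_sum_inv_smoothNumbers_le {a : ℕ} (ha : a ≠ 0) (k : ℕ) {δ : ℝ} (hδ : 0 < δ) :
    ∀ᶠ t : ℝ in atTop, ∀ s : Finset ℕ,
      (∀ d ∈ s, d ∈ Nat.smoothNumbers ⌈t ^ a⌉₊ ∧ exp (δ * log t ^ 2) < d) →
        ∑ d ∈ s, (d : ℝ)⁻¹ ≤ (t ^ k)⁻¹ := by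
  set M := exp (a * (k + 1) / δ)
  filter_upwards [eventually_mul_sum_inv_primesBelow_le (4 * M) ha, eventually_gt_atTop 1,
    tendsto_log_atTop.eventually_ge_atTop (2 * (k + 1) / δ)] with t hprimes ht hlog s hs
  have ht0 : 0 < t := by linarith
  have hlog0 : 0 < log t := log_pos ht
  -- With this exponent `z ^ (-σ) = t ^ (-(k + 1))`, while `p ^ σ` stays bounded for `p < t ^ a`.
  set σ := (k + 1) / (δ * log t) with hσ
  have hσ' : σ ≤ 1 / 2 := by
    rw [div_le_iff₀ hδ] at hlog
    rw [hσ, div_le_div_iff₀ (by positivity) two_pos]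
    linarith
  have hM : ∀ p < ⌈t ^ a⌉₊, (p : ℝ) ^ σ ≤ M := fun p hp => by
    calc (p : ℝ) ^ σ ≤ (t ^ a) ^ σ := by gcongr; exact (Nat.lt_ceil.mp hp).le
      _ = M := by
        rw [← rpow_natCast, ← rpow_mul ht0.le, rpow_def_of_pos ht0]
        congr 1
        rw [hσ]
        field_simp
  have hzσ : exp (δ * log t ^ 2) ^ (-σ) = (t ^ (k + 1))⁻¹ := by
    rw [← exp_mul, ← exp_log (pow_pos ht0 (k + 1)), ← exp_neg, log_pow]
    congr 1
    rw [hσ]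
    push_cast
    field_simp
  calc ∑ d ∈ s, (d : ℝ)⁻¹ ≤ _ := sum_inv_smoothNumbers_le (exp_pos _) (by positivity) hσ' hM hs
    _ ≤ (t ^ (k + 1))⁻¹ * t := by
        rw [hzσ, ← mul_assoc]
        gcongr
        exact (exp_le_exp.mpr hprimes).trans_eq (exp_log ht0)
    _ = (t ^ k)⁻¹ := by rw [pow_succ]; field_simp

end Rankin

section CountLE

variable {x : ℝ} {P Q : ℕ → Prop}

/-- The number of positive integers `n ≤ x` with property `P`, as a real number. -/
noncomputable def countLE (x : ℝ) (P : ℕ → Prop) : ℝ :=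
  Nat.card {n : ℕ | 1 ≤ n ∧ (n : ℝ) ≤ x ∧ P n}

lemma countLE_eq_card (hx : 0 ≤ x) [DecidablePred P] :
    countLE x P = #{n ∈ Ioc 0 ⌊x⌋₊ | P n} := by
  rw [countLE, ← Nat.card_eq_finsetCard]
  congr! 3
  ext n
  simp only [Set.mem_ofPred_eq, mem_filter, mem_Ioc, Nat.le_floor_iff hx,
    Nat.one_le_iff_ne_zero, Nat.pos_iff_ne_zero, and_assoc]

lemma countLE_mono (hx : 0 ≤ x) (h : ∀ n : ℕ, 1 ≤ n → n ≤ x → P n → Q n) :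
    countLE x P ≤ countLE x Q := by
  classical
  rw [countLE_eq_card hx, countLE_eq_card hx]
  refine Nat.cast_le.mpr (card_le_card fun n hn => ?_)
  simp only [mem_filter, mem_Ioc, Nat.le_floor_iff hx] at hn ⊢
  exact ⟨hn.1, h n hn.1.1 hn.1.2 hn.2⟩

lemma countLE_or_le (hx : 0 ≤ x) : countLE x (fun n => P n ∨ Q n) ≤ countLE x P + countLE x Q := by
  classical
  rw [countLE_eq_card hx, countLE_eq_card hx, countLE_eq_card hx, filter_or]
  exact_mod_cast card_union_le _ _

lemma countLE_natCast_le_le (hx : 0 ≤ x) {u : ℝ} (hu : 0 ≤ u) :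
    countLE x (fun n => n ≤ u) ≤ u := by
  classical
  calc countLE x (fun n => n ≤ u) ≤ #(Ioc 0 ⌊u⌋₊) := by
        rw [countLE_eq_card hx]
        refine Nat.cast_le.mpr (card_le_card fun n hn => ?_)
        obtain ⟨hnx, hnu⟩ := mem_filter.mp hn
        exact mem_Ioc.mpr ⟨(mem_Ioc.mp hnx).1, Nat.le_floor hnu⟩
    _ ≤ u := by simpa using Nat.floor_le hu

lemma countLE_le_mul_sum_inv {ι : Type*} (hx : 0 ≤ x) (s : Finset ι) (f : ι → ℕ)
    (h : ∀ n : ℕ, 1 ≤ n → n ≤ x → P n → ∃ i ∈ s, f i ∣ n) :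
    countLE x P ≤ x * ∑ i ∈ s, (f i : ℝ)⁻¹ := by
  classical
  have hsub : {n ∈ Ioc 0 ⌊x⌋₊ | P n} ⊆ s.biUnion fun i => {n ∈ Ioc 0 ⌊x⌋₊ | f i ∣ n} := by
    intro n hn
    obtain ⟨hnx, hP⟩ := mem_filter.mp hn
    obtain ⟨hn0, hnx'⟩ := mem_Ioc.mp hnx
    obtain ⟨i, hi, hdvd⟩ := h n hn0 ((Nat.le_floor_iff hx).mp hnx') hP
    exact mem_biUnion.mpr ⟨i, hi, mem_filter.mpr ⟨hnx, hdvd⟩⟩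
  calc countLE x P = #{n ∈ Ioc 0 ⌊x⌋₊ | P n} := countLE_eq_card hx
    _ ≤ ∑ i ∈ s, (#{n ∈ Ioc 0 ⌊x⌋₊ | f i ∣ n} : ℝ) := by
        exact_mod_cast (card_le_card hsub).trans card_biUnion_le
    _ ≤ ∑ i ∈ s, x * (f i : ℝ)⁻¹ := by
        gcongr with i
        rw [Nat.Ioc_filter_dvd_card_eq_div, ← div_eq_mul_inv]
        exact Nat.cast_div_le.trans (by gcongr; exact Nat.floor_le hx)
    _ = x * ∑ i ∈ s, (f i : ℝ)⁻¹ := (mul_sum _ _ _).symm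

end CountLE

section ExceptionalSets

variable {x z : ℝ}

lemma two_pow_card_primeFactors_le_card_divisors {n : ℕ} (hn : n ≠ 0) :
    2 ^ #n.primeFactors ≤ #n.divisors := by
  rw [Nat.card_divisors hn, ← prod_const]
  refine prod_le_prod' fun p hp => ?_
  have := (Nat.prime_of_mem_primeFactors hp).factorization_pos_of_dvd hn
    (Nat.dvd_of_mem_primeFactors hp)
  omega

lemma sum_Ioc_inv_eq_harmonic (N : ℕ) : ∑ k ∈ Ioc 0 N, (k : ℝ)⁻¹ = harmonic N := by
  simp [harmonic_eq_sum_Icc, ← Icc_add_one_left_eq_Ioc]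

lemma sum_card_divisors_le (N : ℕ) : ∑ n ∈ Ioc 0 N, (#n.divisors : ℝ) ≤ N * harmonic N := by
  have h := ArithmeticFunction.sum_Ioc_sigma0_eq_sum_div N
  simp only [ArithmeticFunction.sigma_zero_apply] at h
  rw [← Nat.cast_sum, h, Nat.cast_sum, ← sum_Ioc_inv_eq_harmonic, mul_sum]
  exact sum_le_sum fun _ _ => Nat.cast_div_le.trans_eq (div_eq_mul_inv _ _)

lemma mul_countLE_lt_two_pow_card_primeFactors_le (hx : 0 ≤ x) {W : ℝ} :
    W * countLE x (fun n => W < 2 ^ #n.primeFactors) ≤ x * harmonic ⌊x⌋₊ := by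
  classical
  set s := {n ∈ Ioc 0 ⌊x⌋₊ | W < 2 ^ #n.primeFactors}
  calc W * countLE x (fun n => W < 2 ^ #n.primeFactors)
      = ∑ _ ∈ s, W := by rw [countLE_eq_card hx, sum_const, nsmul_eq_mul, mul_comm]
    _ ≤ ∑ n ∈ s, (#n.divisors : ℝ) := by
        refine sum_le_sum fun n hn => ?_
        obtain ⟨hn, hW⟩ := mem_filter.mp hn
        have h := two_pow_card_primeFactors_le_card_divisors (mem_Ioc.mp hn).1.ne'
        exact hW.le.trans (by exact_mod_cast h)
    _ ≤ ∑ n ∈ Ioc 0 ⌊x⌋₊, (#n.divisors : ℝ) :=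
        sum_le_sum_of_subset_of_nonneg (filter_subset _ _) fun _ _ _ => Nat.cast_nonneg _
    _ ≤ ⌊x⌋₊ * harmonic ⌊x⌋₊ := sum_card_divisors_le _
    _ ≤ x * harmonic ⌊x⌋₊ := by
        rw [← sum_Ioc_inv_eq_harmonic]
        gcongr
        exact Nat.floor_le hx

lemma sum_Icc_inv_sq_le {m : ℕ} (hm : m ≠ 0) (N : ℕ) :
    ∑ b ∈ Icc m N, ((b : ℝ) ^ 2)⁻¹ ≤ 2 / m := by
  obtain ⟨m, rfl⟩ := Nat.exists_eq_succ_of_ne_zero hm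
  have : Icc (m + 1) N = Ioo m (N + 1) := by ext; simp only [mem_Icc, mem_Ioo]; omega
  simpa [this] using sum_Ioo_inv_sq_le (α := ℝ) m (N + 1)

lemma countLE_hasLargeSquareDivisor_le (hx : 0 ≤ x) {β : ℝ} (hβ : 0 < β) :
    countLE x (HasLargeSquareDivisor β) ≤ x * (2 / β) := by
  calc countLE x (HasLargeSquareDivisor β)
      ≤ x * ∑ b ∈ Icc ⌈β⌉₊ ⌊x⌋₊, ((b ^ 2 : ℕ) : ℝ)⁻¹ := by
        refine countLE_le_mul_sum_inv hx _ _ fun n hn hnx ⟨b, hβb, hbn⟩ => ?_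
        have hbx : b ≤ ⌊x⌋₊ := calc
          b ≤ b ^ 2 := Nat.le_self_pow two_ne_zero b
          _ ≤ n := Nat.le_of_dvd hn hbn
          _ ≤ ⌊x⌋₊ := Nat.le_floor hnx
        exact ⟨b, mem_Icc.mpr ⟨Nat.ceil_le.mpr hβb, hbx⟩, hbn⟩
    _ ≤ x * (2 / ⌈β⌉₊) := by
        push_cast
        gcongr
        exact sum_Icc_inv_sq_le (Nat.ceil_pos.mpr hβ).ne' _
    _ ≤ x * (2 / β) := by
        gcongr
        exact Nat.le_ceil β

lemma exists_eq_mul_add_one_of_dvd_sub_one {n p d : ℕ} (hn : n ≤ x) (hp : p ∈ n.primeFactors)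
    (hd : d ∣ p - 1) : d ∈ Ioc 0 ⌊x⌋₊ ∧ ∃ k ∈ Ioc 0 ⌊x⌋₊, p = d * k + 1 := by
  obtain ⟨k, hk⟩ := hd
  have hp2 := (Nat.prime_of_mem_primeFactors hp).two_le
  have hpx : p ≤ ⌊x⌋₊ := (Nat.le_of_mem_primeFactors hp).trans (Nat.le_floor hn)
  have hdk : 0 < d * k := by omega
  have hd0 := Nat.pos_of_mul_pos_right hdk
  have hk0 := Nat.pos_of_mul_pos_left hdk
  have hdx := Nat.le_mul_of_pos_right d hk0
  have hkx := Nat.le_mul_of_pos_left k hd0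
  exact ⟨mem_Ioc.mpr ⟨hd0, by omega⟩, k, mem_Ioc.mpr ⟨hk0, by omega⟩, by omega⟩

lemma inv_mul_add_one_le {d k : ℕ} (hd : d ≠ 0) (hk : k ≠ 0) :
    ((d * k + 1 : ℕ) : ℝ)⁻¹ ≤ (d : ℝ)⁻¹ * (k : ℝ)⁻¹ := by
  rw [← mul_inv]
  gcongr
  push_cast
  linarith

lemma countLE_hasLargeSmoothShift_le (hx : 0 ≤ x) {y : ℕ} {r : ℝ}
    (hr : ∀ s : Finset ℕ, (∀ d ∈ s, d ∈ Nat.smoothNumbers y ∧ z < d) → ∑ d ∈ s, (d : ℝ)⁻¹ ≤ r) :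
    countLE x (HasLargeSmoothShift y z) ≤ x * (r * harmonic ⌊x⌋₊) := by
  classical
  set s := {d ∈ Ioc 0 ⌊x⌋₊ | d ∈ Nat.smoothNumbers y ∧ z < d}
  calc countLE x (HasLargeSmoothShift y z)
      ≤ x * ∑ i ∈ s ×ˢ Ioc 0 ⌊x⌋₊, ((i.1 * i.2 + 1 : ℕ) : ℝ)⁻¹ := by
        refine countLE_le_mul_sum_inv hx _ _ fun n _ hnx ⟨p, hp, d, hdy, hdp, hzd⟩ => ?_
        obtain ⟨hd, k, hk, rfl⟩ := exists_eq_mul_add_one_of_dvd_sub_one hnx hp hdp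
        exact ⟨(d, k), mem_product.mpr ⟨mem_filter.mpr ⟨hd, hdy, hzd⟩, hk⟩,
          Nat.dvd_of_mem_primeFactors hp⟩
    _ ≤ x * ∑ i ∈ s ×ˢ Ioc 0 ⌊x⌋₊, (i.1 : ℝ)⁻¹ * (i.2 : ℝ)⁻¹ := by
        gcongr with i hi
        obtain ⟨hd, hk⟩ := mem_product.mp hi
        exact inv_mul_add_one_le (mem_Ioc.mp (mem_filter.mp hd).1).1.ne' (mem_Ioc.mp hk).1.ne'
    _ = x * ((∑ d ∈ s, (d : ℝ)⁻¹) * ∑ k ∈ Ioc 0 ⌊x⌋₊, (k : ℝ)⁻¹) := by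
        rw [sum_product, sum_mul_sum]
    _ ≤ x * (r * harmonic ⌊x⌋₊) := by
        rw [← sum_Ioc_inv_eq_harmonic]
        gcongr
        exact hr s fun d hd => (mem_filter.mp hd).2

lemma inv_mul_add_one_mul_mul_add_one_le {g k l : ℕ} (hg : g ≠ 0) (hk : k ≠ 0) (hl : l ≠ 0) :
    (((g * k + 1) * (g * l + 1) : ℕ) : ℝ)⁻¹ ≤ ((g : ℝ) ^ 2)⁻¹ * ((k : ℝ)⁻¹ * (l : ℝ)⁻¹) :=
  calc (((g * k + 1) * (g * l + 1) : ℕ) : ℝ)⁻¹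
      = ((g * k + 1 : ℕ) : ℝ)⁻¹ * ((g * l + 1 : ℕ) : ℝ)⁻¹ := by rw [Nat.cast_mul, mul_inv]
    _ ≤ ((g : ℝ)⁻¹ * (k : ℝ)⁻¹) * ((g : ℝ)⁻¹ * (l : ℝ)⁻¹) := by
        gcongr
        · exact inv_mul_add_one_le hg hk
        · exact inv_mul_add_one_le hg hl
    _ = ((g : ℝ) ^ 2)⁻¹ * ((k : ℝ)⁻¹ * (l : ℝ)⁻¹) := by rw [sq, mul_inv]; ring

lemma countLE_hasLargeShiftGcd_le (hx : 0 ≤ x) {y : ℕ} (hy : y ≠ 0) :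
    countLE x (HasLargeShiftGcd y) ≤ x * (2 / y * harmonic ⌊x⌋₊ ^ 2) := by
  set N := ⌊x⌋₊
  calc countLE x (HasLargeShiftGcd y)
      ≤ x * ∑ i ∈ Icc y N ×ˢ Ioc 0 N ×ˢ Ioc 0 N,
          (((i.1 * i.2.1 + 1) * (i.1 * i.2.2 + 1) : ℕ) : ℝ)⁻¹ := by
        refine countLE_le_mul_sum_inv hx _ _ fun n _ hnx ⟨p₁, hp₁, p₂, hp₂, hne, hgcd⟩ => ?_
        set g := (p₁ - 1).gcd (p₂ - 1)
        obtain ⟨hg, k₁, hk₁, hpk₁⟩ :=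
          exists_eq_mul_add_one_of_dvd_sub_one hnx hp₁ (Nat.gcd_dvd_left _ _ : g ∣ _)
        obtain ⟨-, k₂, hk₂, hpk₂⟩ :=
          exists_eq_mul_add_one_of_dvd_sub_one hnx hp₂ (Nat.gcd_dvd_right _ _ : g ∣ _)
        refine ⟨(g, k₁, k₂), mem_product.mpr ⟨mem_Icc.mpr ⟨hgcd, (mem_Ioc.mp hg).2⟩,
          mem_product.mpr ⟨hk₁, hk₂⟩⟩, ?_⟩
        rw [← hpk₁, ← hpk₂]
        exact ((Nat.coprime_primes (Nat.prime_of_mem_primeFactors hp₁)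
          (Nat.prime_of_mem_primeFactors hp₂)).mpr hne).mul_dvd_of_dvd_of_dvd
          (Nat.dvd_of_mem_primeFactors hp₁) (Nat.dvd_of_mem_primeFactors hp₂)
    _ ≤ x * ∑ i ∈ Icc y N ×ˢ Ioc 0 N ×ˢ Ioc 0 N,
          ((i.1 : ℝ) ^ 2)⁻¹ * ((i.2.1 : ℝ)⁻¹ * (i.2.2 : ℝ)⁻¹) := by
        gcongr with i hi
        simp only [mem_product, mem_Icc, mem_Ioc] at hi
        exact inv_mul_add_one_mul_mul_add_one_le (by omega) (by omega) (by omega)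
    _ = x * ((∑ g ∈ Icc y N, ((g : ℝ) ^ 2)⁻¹) * (∑ k ∈ Ioc 0 N, (k : ℝ)⁻¹) ^ 2) := by
        simp only [sum_product, ← mul_sum, ← sum_mul, sq (∑ _ ∈ Ioc 0 N, _)]
    _ ≤ x * (2 / y * harmonic N ^ 2) := by
        rw [sum_Ioc_inv_eq_harmonic]
        gcongr
        exact sum_Icc_inv_sq_le hy N

end ExceptionalSets

section LargeArgument

variable {c : ℝ}

lemma eventually_harmonic_floor_le : ∀ᶠ x : ℝ in atTop, (harmonic ⌊x⌋₊ : ℝ) ≤ 2 * log x := by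
  filter_upwards [eventually_ge_atTop 1, tendsto_log_atTop.eventually_ge_atTop 1] with x hx hlog
  linarith [harmonic_floor_le_one_add_log x hx]

lemma eventually_countLE_le_sqrt_le (k : ℕ) :
    ∀ᶠ x : ℝ in atTop, countLE x (fun n => n ≤ √x) ≤ x / log x ^ k := by
  have hlog : (fun x : ℝ => log x ^ k) =o[atTop] fun x => √x := by
    simpa [sqrt_eq_rpow] using isLittleO_log_rpow_rpow_atTop k (one_half_pos (α := ℝ))
  filter_upwards [hlog.bound one_pos, eventually_gt_atTop 1] with x hx hx1
  have hpos : 0 < log x ^ k := pow_pos (log_pos hx1) k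
  rw [one_mul, norm_of_nonneg hpos.le, norm_of_nonneg (sqrt_nonneg x)] at hx
  calc countLE x (fun n => n ≤ √x) ≤ √x :=
        countLE_natCast_le_le (zero_le_one.trans hx1.le) (sqrt_nonneg x)
    _ ≤ x / log x ^ k := by
        rw [le_div_iff₀ hpos]
        nlinarith [mul_self_sqrt (zero_le_one.trans hx1.le), sqrt_nonneg x]

lemma eventually_countLE_lt_two_pow_card_primeFactors_le (k : ℕ) :
    ∀ᶠ x : ℝ in atTop,
      countLE x (fun n => log x ^ (k + 1) < 2 ^ #n.primeFactors) ≤ 2 * (x / log x ^ k) := by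
  filter_upwards [eventually_harmonic_floor_le, eventually_gt_atTop 1] with x hharm hx
  have hx0 : 0 ≤ x := by linarith
  have hlog : 0 < log x := log_pos hx
  calc countLE x (fun n => log x ^ (k + 1) < 2 ^ #n.primeFactors)
      ≤ x * harmonic ⌊x⌋₊ / log x ^ (k + 1) := by
        rw [le_div_iff₀' (by positivity)]
        exact mul_countLE_lt_two_pow_card_primeFactors_le hx0
    _ ≤ x * (2 * log x) / log x ^ (k + 1) := by gcongr
    _ = 2 * (x / log x ^ k) := by rw [pow_succ]; field_simp

lemma eventually_countLE_hasLargeSquareDivisor_le (k : ℕ) :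
    ∀ᶠ x : ℝ in atTop, countLE x (HasLargeSquareDivisor (log x ^ k)) ≤ 2 * (x / log x ^ k) := by
  filter_upwards [eventually_gt_atTop 1] with x hx
  have hlog : 0 < log x := log_pos hx
  exact (countLE_hasLargeSquareDivisor_le (by linarith) (by positivity)).trans_eq (by ring)

lemma eventually_countLE_hasLargeShiftGcd_le (k : ℕ) :
    ∀ᶠ x : ℝ in atTop,
      countLE x (HasLargeShiftGcd ⌈log x ^ (k + 2)⌉₊) ≤ 8 * (x / log x ^ k) := by
  filter_upwards [eventually_harmonic_floor_le, eventually_gt_atTop 1] with x hharm hx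
  have hx0 : 0 ≤ x := by linarith
  have hlog : 0 < log x := log_pos hx
  have hharm0 : (0 : ℝ) ≤ harmonic ⌊x⌋₊ := by rw [← sum_Ioc_inv_eq_harmonic]; positivity
  calc countLE x (HasLargeShiftGcd ⌈log x ^ (k + 2)⌉₊)
      ≤ x * (2 / ⌈log x ^ (k + 2)⌉₊ * harmonic ⌊x⌋₊ ^ 2) :=
        countLE_hasLargeShiftGcd_le hx0 (Nat.ceil_pos.mpr (by positivity)).ne'
    _ ≤ x * (2 / log x ^ (k + 2) * (2 * log x) ^ 2) := by
        gcongr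
        exact Nat.le_ceil _
    _ = 8 * (x / log x ^ k) := by rw [pow_add]; field_simp; norm_num

lemma eventually_countLE_hasLargeSmoothShift_le {a : ℕ} (ha : a ≠ 0) (k : ℕ) {δ : ℝ} (hδ : 0 < δ) :
    ∀ᶠ x : ℝ in atTop,
      countLE x (HasLargeSmoothShift ⌈log x ^ a⌉₊ (exp (δ * log (log x) ^ 2)))
        ≤ 2 * (x / log x ^ k) := by
  filter_upwards [eventually_harmonic_floor_le, eventually_gt_atTop 1,
    tendsto_log_atTop.eventually (eventually_sum_inv_smoothNumbers_le ha (k + 1) hδ)]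
    with x hharm hx hsmooth
  have hx0 : 0 ≤ x := by linarith
  have hlog : 0 < log x := log_pos hx
  calc countLE x (HasLargeSmoothShift ⌈log x ^ a⌉₊ (exp (δ * log (log x) ^ 2)))
      ≤ x * ((log x ^ (k + 1))⁻¹ * harmonic ⌊x⌋₊) := countLE_hasLargeSmoothShift_le hx0 hsmooth
    _ ≤ x * ((log x ^ (k + 1))⁻¹ * (2 * log x)) := by gcongr
    _ = 2 * (x / log x ^ k) := by rw [pow_succ]; field_simp

lemma sq_mul_two_mul_exp_pow_le {t δ : ℝ} (ht : 1 < t) (hδ : 0 ≤ δ) {k w : ℕ}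
    (hw : 2 ^ w ≤ t ^ (k + 1)) :
    (t ^ k) ^ 2 * (2 * exp (δ * log t ^ 2)) ^ w
      ≤ exp ((3 * k + 1) * log t + 2 * (k + 1) * δ * log t ^ 3) := by
  have hlog : 0 < log t := log_pos ht
  have hw_le : (w : ℝ) ≤ 2 * (k + 1) * log t := by
    have h := log_le_log (by positivity) hw
    rw [log_pow, log_pow] at h
    push_cast at h
    nlinarith [log_two_gt_d9, (w.cast_nonneg : (0 : ℝ) ≤ w)]
  have hpow : t ^ (3 * k + 1) = exp ((3 * k + 1) * log t) := by
    rw [← exp_log (pow_pos (zero_lt_one.trans ht) _), log_pow]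
    push_cast
    rfl
  calc (t ^ k) ^ 2 * (2 * exp (δ * log t ^ 2)) ^ w
      = (t ^ k) ^ 2 * (2 ^ w * exp (w * (δ * log t ^ 2))) := by rw [mul_pow, ← exp_nat_mul]
    _ ≤ (t ^ k) ^ 2 * (t ^ (k + 1) * exp (2 * (k + 1) * log t * (δ * log t ^ 2))) := by gcongr
    _ = exp ((3 * k + 1) * log t + 2 * (k + 1) * δ * log t ^ 3) := by
        rw [exp_add, ← hpow]
        ring_nf

lemma eventually_mul_add_mul_pow_three_lt (b : ℝ) (hc : 0 < c) :
    ∀ᶠ L : ℝ in atTop, ∀ v, L - 1 ≤ v → b * L + c / 4 * L ^ 3 < c * v ^ 3 := by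
  filter_upwards [eventually_ge_atTop 8, eventually_gt_atTop (4 * b / c)] with L hL hb v hv
  rw [div_lt_iff₀ hc] at hb
  have hv3 : L ^ 3 / 2 ≤ v ^ 3 := calc
    L ^ 3 / 2 ≤ (L - 1) ^ 3 := by nlinarith [mul_nonneg (sub_nonneg.mpr hL) (sq_nonneg L)]
    _ ≤ v ^ 3 := by gcongr; linarith
  have hbL : b * L < c / 4 * L ^ 3 := calc
    b * L < L * c / 4 * L := by gcongr; linarith
    _ = c / 4 * L ^ 2 := by ring
    _ ≤ c / 4 * L ^ 3 := by gcongr <;> linarith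
  calc b * L + c / 4 * L ^ 3 < c / 4 * L ^ 3 + c / 4 * L ^ 3 := by gcongr
    _ = c * (L ^ 3 / 2) := by ring
    _ ≤ c * v ^ 3 := by gcongr

lemma log_log_sub_one_le_of_sqrt_lt {x y : ℝ} (hx : 1 < x) (h : √x < y) :
    log (log x) - 1 ≤ log (log y) := by
  have hlog : 0 < log x := log_pos hx
  calc log (log x) - 1 ≤ log (log x) - log 2 := by linarith [log_two_lt_d9]
    _ = log (log √x) := by rw [log_sqrt (by linarith), log_div hlog.ne' two_ne_zero]
    _ ≤ log (log y) := by
        gcongr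
        rw [log_sqrt (by linarith)]
        positivity

lemma eventually_mul_exp_lt_carmichael (k : ℕ) (hc : 0 < c) :
    ∀ᶠ x : ℝ in atTop, ∀ n : ℕ, √x < n → 2 ^ #n.primeFactors ≤ log x ^ (k + 1) →
      ¬ HasLargeSquareDivisor (log x ^ k) n →
      ¬ HasLargeShiftGcd ⌈log x ^ (k + 2)⌉₊ n →
      ¬ HasLargeSmoothShift ⌈log x ^ (k + 2)⌉₊ (exp (c / (8 * (k + 1)) * log (log x) ^ 2)) n →
      n * exp (-(c * log (log n) ^ 3)) < carmichael n := by
  filter_upwards [eventually_gt_atTop 1, tendsto_log_atTop.eventually_gt_atTop 1,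
    (tendsto_log_atTop.comp tendsto_log_atTop).eventually
      (eventually_mul_add_mul_pow_three_lt (3 * k + 1) hc)]
    with x hx hlog hcubic n hn hω hsq hgcd hsmooth
  have hn0 : n ≠ 0 := Nat.cast_ne_zero.mp ((sqrt_nonneg x).trans_lt hn).ne'
  -- The constant `c / (8 * (k + 1))` makes the at most `2 * (k + 1) * log (log x)` prime factors
  -- cost a factor `exp (c / 4 * log (log x) ^ 3)` in total.
  have hexp : (3 * k + 1) * log (log x) + 2 * (k + 1) * (c / (8 * (k + 1))) * log (log x) ^ 3
      < c * log (log n) ^ 3 := by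
    convert! hcubic _ (log_log_sub_one_le_of_sqrt_lt hx hn) using 3
    field_simp
    norm_num
  have hcarm : (0 : ℝ) < carmichael n := Nat.cast_pos.mpr (carmichael_pos hn0)
  rw [exp_neg, ← div_eq_mul_inv, div_lt_iff₀ (exp_pos _)]
  calc (n : ℝ) ≤ carmichael n * (log x ^ k) ^ 2 *
          (2 * exp (c / (8 * (k + 1)) * log (log x) ^ 2)) ^ #n.primeFactors :=
        le_carmichael_mul hn0 (exp_pos _).le hsq hsmooth hgcd
    _ ≤ carmichael n * exp ((3 * k + 1) * log (log x)
          + 2 * (k + 1) * (c / (8 * (k + 1))) * log (log x) ^ 3) := by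
        rw [mul_assoc]
        gcongr
        exact sq_mul_two_mul_exp_pow_le hlog (by positivity) hω
    _ < carmichael n * exp (c * log (log n) ^ 3) := by gcongr

theorem eventually_countLE_carmichael_le (k : ℕ) (hc : 0 < c) :
    ∀ᶠ x : ℝ in atTop,
      countLE x (fun n => carmichael n ≤ n * exp (-(c * log (log n) ^ 3)))
        ≤ 15 * (x / log x ^ k) := by
  have hδ : 0 < c / (8 * (k + 1)) := by positivity
  filter_upwards [eventually_ge_atTop 0, eventually_countLE_le_sqrt_le k,
    eventually_countLE_lt_two_pow_card_primeFactors_le k,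
    eventually_countLE_hasLargeSquareDivisor_le k, eventually_countLE_hasLargeShiftGcd_le k,
    eventually_countLE_hasLargeSmoothShift_le (Nat.succ_ne_zero (k + 1)) k hδ,
    eventually_mul_exp_lt_carmichael k hc] with x hx hsqrt hω hsq hgcd hsmooth hbound
  calc countLE x (fun n => carmichael n ≤ n * exp (-(c * log (log n) ^ 3)))
      ≤ countLE x fun n => n ≤ √x ∨ log x ^ (k + 1) < 2 ^ #n.primeFactors ∨
          HasLargeSquareDivisor (log x ^ k) n ∨ HasLargeShiftGcd ⌈log x ^ (k + 2)⌉₊ n ∨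
          HasLargeSmoothShift ⌈log x ^ (k + 2)⌉₊ (exp (c / (8 * (k + 1)) * log (log x) ^ 2)) n := by
        refine countLE_mono hx fun n _ _ hn => ?_
        contrapose! hn
        obtain ⟨hn, hnω, hnsq, hngcd, hnsmooth⟩ := hn
        exact hbound n hn hnω hnsq hngcd hnsmooth
    _ ≤ x / log x ^ k + (2 * (x / log x ^ k) + (2 * (x / log x ^ k) + (8 * (x / log x ^ k) +
          2 * (x / log x ^ k)))) := by
        grw [countLE_or_le hx, countLE_or_le hx, countLE_or_le hx, countLE_or_le hx]
        gcongr
    _ = 15 * (x / log x ^ k) := by ring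

end LargeArgument

end KurlbergPomerance

theorem stmt_17_general (k : ℕ) {c : ℝ} (hc : 0 < c) :
    ∃ C : ℝ, 0 < C ∧ ∃ x₀ : ℝ, ∀ x : ℝ, x₀ ≤ x →
      (Nat.card {n : ℕ | 1 ≤ n ∧ (n : ℝ) ≤ x ∧
          (carmichael n : ℝ) ≤ (n : ℝ) * Real.exp (-(c * Real.log (Real.log n) ^ 3))} : ℝ)
        ≤ C * x / Real.log x ^ k := by
  obtain ⟨x₀, h⟩ :=
    Filter.eventually_atTop.mp (KurlbergPomerance.eventually_countLE_carmichael_le k hc)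
  exact ⟨15, by norm_num, x₀, fun x hx => (h x hx).trans_eq (mul_div_assoc _ _ _).symm⟩

/-- **Kurlberg–Pomerance.** For all large `x`, all but `O(x/(log x)^10)` of the
positive integers `n ≤ x` satisfy `λ(n) > n exp(-(log log n)³)`. -/
theorem stmt_17 :
    ∃ C : ℝ, 0 < C ∧ ∃ x₀ : ℝ, ∀ x : ℝ, x₀ ≤ x →
      (Nat.card {n : ℕ | 1 ≤ n ∧ (n : ℝ) ≤ x ∧
          (carmichael n : ℝ) ≤ (n : ℝ) * Real.exp (-(Real.log (Real.log n)) ^ 3)} : ℝ)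
        ≤ C * x / (Real.log x) ^ 10 := by
  simpa only [one_mul] using stmt_17_general 10 one_pos
end
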